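/- arXiv:2507.21316 — 3 statements merged into one kernel-verified Lean document; each statement's English description precedes it below -/
import Mathlib

section
/- Let G be a finite group and p a prime. If ℤ_(p)G is semiperfect, then for every finitely generated projective 𝔽_pG-module P there exists a finitely generated ℤ_(p)G-module M that is projective (equivalently free) as a ℤ_(p)-module such that the 𝔽_pG-modules 𝔽_p ⊗_{ℤ_(p)} M and P have the same composition factors counted with multiplicity (i.e., they define the same class in the Grothendieck group of finitely generated 𝔽_pG-modules). Equivalently, in the Grothendieck groups, the image of the Cartan homomorphism β: K⁺(𝔽_pG) → G(𝔽_pG) applied to the positive cone is contained in the image of the decomposition map α applied to the positive cone G⁺(ℚG). -/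
/-- The Jacobson radical of a (possibly noncommutative) ring, as a two-sided ideal:
the intersection of all maximal left ideals. -/
def ringJacobson (R : Type*) [Ring R] : TwoSidedIdeal R :=
  TwoSidedIdeal.jacobson ⊥

/-- A ring `R` is *semiperfect* if `R / J(R)` is a semisimple (artinian) ring and every
idempotent of `R / J(R)` can be lifted to an idempotent of `R`. -/
def IsSemiperfectRing (R : Type*) [Ring R] : Prop :=
  IsSemisimpleRing (ringJacobson R).ringCon.Quotient ∧
  ∀ x : (ringJacobson R).ringCon.Quotient, IsIdempotentElem x →
    ∃ e : R, IsIdempotentElem e ∧ (ringJacobson R).ringCon.mk' e = x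

instance int_span_prime_isPrime (p : ℕ) [hp : Fact p.Prime] :
    (Ideal.span {(p : ℤ)}).IsPrime :=
  (Ideal.span_singleton_prime (by exact_mod_cast hp.out.ne_zero)).mpr
    (Int.prime_iff_natAbs_prime.mpr (by simpa using hp.out))

/-- The localisation `ℤ_(p)` of the integers at the prime `p`. -/
abbrev ZLoc (p : ℕ) [Fact p.Prime] : Type :=
  Localization.AtPrime (Ideal.span {(p : ℤ)})

/-- The reduction map `ℤ_(p) → 𝔽_p`. -/
noncomputable def locToZMod (p : ℕ) [hp : Fact p.Prime] : ZLoc p →+* ZMod p :=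
  IsLocalization.lift (M := (Ideal.span {(p : ℤ)}).primeCompl)
    (g := Int.castRingHom (ZMod p)) (by
      rintro ⟨y, hy⟩
      have h : ¬ ((p : ℤ) ∣ y) := by
        simpa [Ideal.primeCompl, Ideal.mem_span_singleton] using hy
      have : ((y : ℤ) : ZMod p) ≠ 0 := fun h0 =>
        h ((ZMod.intCast_zmod_eq_zero_iff_dvd y p).mp h0)
      simpa [isUnit_iff_ne_zero] using this)

/-- The inclusion `ℤ_(p) → ℚ`. -/
noncomputable def locToRat (p : ℕ) [hp : Fact p.Prime] : ZLoc p →+* ℚ :=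
  IsLocalization.lift (M := (Ideal.span {(p : ℤ)}).primeCompl)
    (g := Int.castRingHom ℚ) (by
      rintro ⟨y, hy⟩
      have h : ¬ ((p : ℤ) ∣ y) := by
        simpa [Ideal.primeCompl, Ideal.mem_span_singleton] using hy
      have hy0 : (y : ℤ) ≠ 0 := by rintro rfl; exact h (dvd_zero _)
      have : ((y : ℤ) : ℚ) ≠ 0 := by exact_mod_cast hy0
      simpa [isUnit_iff_ne_zero] using this)

/-- The ring homomorphism between monoid algebras induced by a homomorphism of
(commutative) coefficient rings. -/
noncomputable def MonoidAlgebra.coeffRingHom {k R : Type*} [CommSemiring k] [CommSemiring R]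
    (G : Type*) [Monoid G] (f : k →+* R) : MonoidAlgebra k G →+* MonoidAlgebra R G :=
  MonoidAlgebra.liftNCRingHom (MonoidAlgebra.singleOneRingHom.comp f) (MonoidAlgebra.of R G)
    (fun x y => by
      simpa [MonoidAlgebra.of_apply, MonoidAlgebra.singleOneRingHom] using
        MonoidAlgebra.single_commute_single (Commute.one_left y) (Commute.one_right (f x)))

/-- The reduction map `ℤ_(p)G → 𝔽_pG`. -/
noncomputable def groupRingToFp (p : ℕ) [Fact p.Prime] (G : Type*) [Group G] :
    MonoidAlgebra (ZLoc p) G →+* MonoidAlgebra (ZMod p) G :=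
  MonoidAlgebra.coeffRingHom G (locToZMod p)

/-- The inclusion `ℤ_(p)G → ℚG`. -/
noncomputable def groupRingToRat (p : ℕ) [Fact p.Prime] (G : Type*) [Group G] :
    MonoidAlgebra (ZLoc p) G →+* MonoidAlgebra ℚ G :=
  MonoidAlgebra.coeffRingHom G (locToRat p)

/-- Two modules `X` and `Y` over a ring `R` have the *same composition factors counted with
multiplicity* (equivalently, they define the same class in the Grothendieck group of finitely
generated `R`-modules) if they admit composition series of the same length whose simple
subquotients match up to isomorphism under some permutation. -/
def SameCompositionFactors (R : Type*) [Ring R] (X Y : Type*)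
    [AddCommGroup X] [Module R X] [AddCommGroup Y] [Module R Y] : Prop :=
  ∃ (n : ℕ) (c : Fin (n + 1) → Submodule R X) (d : Fin (n + 1) → Submodule R Y)
    (σ : Equiv.Perm (Fin n)),
    Monotone c ∧ Monotone d ∧
    c 0 = ⊥ ∧ c (Fin.last n) = ⊤ ∧ d 0 = ⊥ ∧ d (Fin.last n) = ⊤ ∧
    ∀ i : Fin n,
      IsSimpleModule R (↥(c i.succ) ⧸ (c i.castSucc).comap (c i.succ).subtype) ∧
      Nonempty ((↥(c i.succ) ⧸ (c i.castSucc).comap (c i.succ).subtype) ≃ₗ[R]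
        (↥(d (σ i).succ) ⧸ (d (σ i).castSucc).comap (d (σ i).succ).subtype))

/-- A witness that the finitely generated projective `𝔽_pG`-module `P` lies in the image of
the positive cone of the decomposition map: a finitely generated `ℤ_(p)G`-module `M`,
projective over `ℤ_(p)`, whose reduction modulo `p` (realised as `M/pM` via a semilinear
surjection) has the same composition factors as `P`, counted with multiplicity. -/
structure ReductionWitness (p : ℕ) [Fact p.Prime] (G : Type) [Group G]
    (P : Type) [AddCommGroup P] [Module (MonoidAlgebra (ZMod p) G) P] where
  M : Type
  [addCommGroupM : AddCommGroup M]
  [moduleLocM : Module (ZLoc p) M]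
  [moduleM : Module (MonoidAlgebra (ZLoc p) G) M]
  [towerM : IsScalarTower (ZLoc p) (MonoidAlgebra (ZLoc p) G) M]
  finite : Module.Finite (MonoidAlgebra (ZLoc p) G) M
  projectiveLoc : Module.Projective (ZLoc p) M
  X : Type
  [addCommGroupX : AddCommGroup X]
  [moduleX : Module (MonoidAlgebra (ZMod p) G) X]
  f : M →ₛₗ[groupRingToFp p G] X
  surjective : Function.Surjective f
  ker_eq : ∀ m : M,
    f m = 0 ↔ m ∈ ((Ideal.span {(p : ZLoc p)}) • (⊤ : Submodule (ZLoc p) M))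
  same : SameCompositionFactors (MonoidAlgebra (ZMod p) G) X P


theorem aux_top {R S Q : Type} [Ring R] [Ring S] [IsSemisimpleRing S] [AddCommGroup Q] [Module R Q]
    [Module.Finite R Q] (π : R →+* S) (hπ : Function.Surjective π)
    (hid : ∀ x : S, IsIdempotentElem x → ∃ e : R, IsIdempotentElem e ∧ π e = x)
    (hQ : ∀ r, π r = 0 → ∀ x : Q, r • x = 0) :
    ∃ (n : ℕ) (f : Fin n → R) (x : Fin n → Q), (∀ i, f i * f i = f i) ∧ (∀ i, f i • x i = x i) ∧
      (∀ q, ∃ v : Fin n → R, ∑ i, v i • x i = q) ∧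
      ∀ v : Fin n → R, ∑ i, v i • x i = 0 → ∀ i, π (v i * f i) = 0 := by
  let : SMul S Q := ⟨fun s q => Function.surjInv hπ s • q⟩
  have hsm : ∀ (c : R) (x : Q), π c • x = c • x := by
    intro c x
    change Function.surjInv hπ (π c) • x = c • x
    rw [← sub_eq_zero, ← sub_smul]
    apply hQ
    rw [map_sub, Function.surjInv_eq hπ, sub_self]
  let : Module S Q := Function.Surjective.moduleLeft π hπ hsm
  have : RingHomSurjective π := ⟨hπ⟩
  have : Module.Finite S Q :=
    Module.Finite.of_surjective (σ := π) (⟨⟨id, fun _ _ => rfl⟩, fun c x => (hsm c x).symm⟩ : Q →ₛₗ[π] Q)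
      Function.surjective_id
  obtain ⟨n, T, e, hT⟩ := IsSemisimpleModule.exists_linearEquiv_fin_dfinsupp S Q
  have h1 : ∀ i, ∃ y : T i, y ≠ 0 := fun i =>
    have := IsSimpleModule.nontrivial S (T i)
    exists_ne 0
  choose y hy using h1
  have h2 : ∀ i, ∃ a : R, IsIdempotentElem a ∧ ∀ s : R, π s • y i = 0 ↔ π (s * (1 - a)) = 0 := by
    intro i
    obtain ⟨ε, hε, hI⟩ := IsSemisimpleRing.ideal_eq_span_idempotent
      (LinearMap.ker (LinearMap.toSpanSingleton S (T i) (y i)))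
    obtain ⟨a, ha, rfl⟩ := hid ε hε
    refine ⟨a, ha, fun s => ?_⟩
    have : π s • y i = 0 ↔ π s ∈ Ideal.span {π a} := by
      rw [← hI]; simp
    rw [this, Ideal.mem_span_singleton']
    simp only [map_mul, map_sub, mul_sub, mul_one]
    constructor
    · rintro ⟨b, hb⟩
      rw [← hb, mul_assoc, hε.eq, sub_self]
    · intro h
      exact ⟨π s, (sub_eq_zero.1 h).symm⟩
  choose a ha hay using h2
  have hesum : ∀ v : Fin n → R, e (∑ i, v i • e.symm (DFinsupp.single i (y i))) =
      ∑ i, DFinsupp.single i (π (v i) • y i) := by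
    intro v
    rw [map_sum]
    refine Finset.sum_congr rfl fun i _ => ?_
    rw [← hsm, map_smul, e.apply_symm_apply, DFinsupp.single_smul]
  refine ⟨n, fun i => 1 - a i, fun i => e.symm (DFinsupp.single i (y i)),
    fun i => (ha i).one_sub.eq, fun i => ?_, fun q => ?_, fun v hv i => ?_⟩
  · rw [← hsm, ← map_smul, ← DFinsupp.single_smul]
    congr 2
    rw [← sub_eq_zero]
    nth_rewrite 2 [← one_smul S (y i)]
    rw [← sub_smul, ← map_one π, ← map_sub, hay]
    have := (ha i).eq
    rw [map_mul, ← map_mul]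
    have : (1 - a i - 1) * (1 - a i) = 0 := by rw [sub_mul, (ha i).one_sub.eq]; simp
    rw [this, map_zero]
  · have : ∀ i, ∃ r : R, π r • y i = e q i := by
      intro i
      have := hT i
      obtain ⟨s, hs⟩ := IsSimpleModule.toSpanSingleton_surjective S (hy i) (e q i)
      obtain ⟨r, rfl⟩ := hπ s
      exact ⟨r, hs⟩
    choose r hr using this
    refine ⟨r, e.injective ?_⟩
    rw [hesum]
    simp_rw [hr]
    ext i
    simp [DFinsupp.single_apply]
  · have h3 := hesum v
    rw [hv, map_zero] at h3
    have h4 := DFunLike.congr_fun h3 i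
    rw [DFinsupp.finsetSum_apply, Finset.sum_eq_single i (by
      intro j _ hj
      exact DFinsupp.single_eq_of_ne hj.symm) (by simp)] at h4
    rw [DFinsupp.single_eq_same] at h4
    exact (hay i _).1 h4.symm

theorem aux_lift {R A S P : Type} [Ring R] [Ring A] [Ring S] [IsSemisimpleRing S] [AddCommGroup P]
    [Module R P] [Module A P] [Module.Finite A P] [Module.Projective A P]
    (φ : R →+* A) (hφ : Function.Surjective φ) (hP : ∀ r (x : P), φ r • x = r • x)
    (π : R →+* S) (hπ : Function.Surjective π) (hJ : RingHom.ker π ≤ Ring.jacobson R)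
    (hid : ∀ x : S, IsIdempotentElem x → ∃ e : R, IsIdempotentElem e ∧ π e = x) :
    ∃ (n : ℕ) (M : Submodule R (Fin n → R)) (f : M →ₗ[R] P), Module.Finite R M ∧
      (∃ t : (Fin n → R) →ₗ[R] M, t.comp M.subtype = LinearMap.id) ∧ Function.Surjective f ∧
      ∀ m, f m = 0 ↔ m ∈ RingHom.ker φ • (⊤ : Submodule R M) := by
  have hPfin : Module.Finite R P := by
    obtain ⟨s, hs⟩ := Module.Finite.fg_top (R := A) (M := P)
    refine ⟨⟨s, ?_⟩⟩
    rw [eq_top_iff]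
    intro x _
    have hx : x ∈ Submodule.span A (s : Set P) := hs ▸ Submodule.mem_top
    induction hx using Submodule.span_induction with
    | mem x h => exact Submodule.subset_span h
    | zero => exact zero_mem _
    | add x y _ _ h1 h2 => exact add_mem (h1 trivial) (h2 trivial)
    | smul a x _ h1 =>
      obtain ⟨r, rfl⟩ := hφ a
      rw [hP]
      exact Submodule.smul_mem _ _ (h1 trivial)
  set J := RingHom.ker π with hJdef
  obtain ⟨n, f, x, hf, hfx, hsurj, hker⟩ := aux_top (Q := P ⧸ (J • (⊤ : Submodule R P))) π hπ hid (by
    intro r hr q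
    obtain ⟨q, rfl⟩ := Submodule.mkQ_surjective _ q
    rw [← map_smul]
    rw [Submodule.mkQ_apply, Submodule.Quotient.mk_eq_zero]
    exact Submodule.smul_mem_smul (show r ∈ J from hr) Submodule.mem_top)
  let E : (Fin n → R) →ₗ[R] (Fin n → R) :=
    LinearMap.pi fun i => (LinearMap.toSpanSingleton R R (f i)).comp
      (LinearMap.proj (R := R) (φ := fun _ : Fin n => R) i)
  have hE : ∀ (v : Fin n → R) i, E v i = v i * f i := fun v i => rfl
  have hEE : ∀ v, E (E v) = E v := by
    intro v; ext i; rw [hE, hE, mul_assoc, hf]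
  let M : Submodule R (Fin n → R) := LinearMap.range E
  have hM : ∀ m : M, E m = m := by
    rintro ⟨_, v, rfl⟩; exact hEE v
  have hMs : ∀ (m : M) i, m.1 i * f i = m.1 i := fun m i => by
    rw [← hE, hM]
  have hMfin : Module.Finite R M := inferInstance
  have hret : E.rangeRestrict.comp M.subtype = LinearMap.id := LinearMap.ext fun m => Subtype.ext (hM m)
  have hMproj : Module.Projective R M :=
    Module.Projective.of_split M.subtype E.rangeRestrict hret
  let g0 : (Fin n → R) →ₗ[R] P ⧸ (J • (⊤ : Submodule R P)) := Fintype.linearCombination R x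
  have hg0 : ∀ v, g0 v = ∑ i, v i • x i := fun v => Fintype.linearCombination_apply ..
  let g : M →ₗ[R] P ⧸ (J • (⊤ : Submodule R P)) := g0.comp M.subtype
  have hg : Function.Surjective g := by
    intro q
    obtain ⟨v, rfl⟩ := hsurj q
    refine ⟨⟨E v, v, rfl⟩, ?_⟩
    change g0 (E v) = _
    rw [hg0]
    refine Finset.sum_congr rfl fun i _ => ?_
    rw [hE, mul_smul, hfx]
  have hgk : ∀ m, g m = 0 → m ∈ J • (⊤ : Submodule R M) := by
    intro m hm
    have h1 := hker m.1 (by rw [← hg0]; exact hm)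
    have h2 : m = ∑ i, m.1 i • E.rangeRestrict (Pi.single i 1) := by
      apply Subtype.ext
      have : m.1 = E (∑ i, m.1 i • Pi.single i 1) := by
        nth_rewrite 1 [← hM m]
        congr 1
        ext j
        simp [Finset.sum_apply, Pi.single_apply]
      refine this.trans ?_
      rw [map_sum]
      simp
    rw [h2]
    refine sum_mem fun i _ => Submodule.smul_mem_smul ?_ Submodule.mem_top
    have := h1 i
    rw [hMs] at this
    exact this
  obtain ⟨F, hF⟩ := Module.projective_lifting_property (J • (⊤ : Submodule R P)).mkQ g
    (Submodule.mkQ_surjective _)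
  have hFs : Function.Surjective F := by
    have hb : (⊤ : Submodule R (P ⧸ LinearMap.range F)) = ⊥ := by
      apply Submodule.FG.eq_bot_of_le_jacobson_smul (Module.Finite.fg_top)
      rintro q -
      obtain ⟨y, rfl⟩ := Submodule.mkQ_surjective _ q
      obtain ⟨m, hm⟩ := hg ((J • (⊤ : Submodule R P)).mkQ y)
      have h1 : y - F m ∈ J • (⊤ : Submodule R P) := by
        rw [← Submodule.Quotient.mk_eq_zero, Submodule.Quotient.mk_sub, sub_eq_zero]
        rw [← hF] at hm
        exact hm.symm
      have h2 : (LinearMap.range F).mkQ y = (LinearMap.range F).mkQ (y - F m) := by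
        have h0 : (LinearMap.range F).mkQ (F m) = 0 := by
          rw [Submodule.mkQ_apply, Submodule.Quotient.mk_eq_zero]
          exact ⟨m, rfl⟩
        rw [map_sub, h0, sub_zero]
      rw [h2]
      have h3 := Submodule.mem_map_of_mem (f := (LinearMap.range F).mkQ) h1
      rw [Submodule.map_smul''] at h3
      exact Submodule.smul_mono hJ le_top h3
    rw [← LinearMap.range_eq_top, eq_top_iff]
    intro y _
    have : (LinearMap.range F).mkQ y ∈ (⊤ : Submodule R (P ⧸ LinearMap.range F)) := trivial
    rw [hb, Submodule.mem_bot] at this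
    simpa using this
  have hFk1 : ∀ m, F m = 0 → m ∈ J • (⊤ : Submodule R M) := by
    intro m hm
    apply hgk
    rw [← hF]
    simp [hm]
  refine ⟨n, M, F, hMfin, ⟨E.rangeRestrict, hret⟩, hFs, ?_⟩
  have hle : RingHom.ker φ • (⊤ : Submodule R M) ≤ LinearMap.ker F := by
    rw [Submodule.smul_le]
    intro r hr m _
    rw [LinearMap.mem_ker, map_smul, ← hP, (RingHom.mem_ker).1 hr, zero_smul]
  intro m
  refine ⟨fun hm => ?_, fun hm => hle hm⟩
  let N := RingHom.ker φ • (⊤ : Submodule R M)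
  let X := M ⧸ N
  let : SMul A X := ⟨fun s q => Function.surjInv hφ s • q⟩
  have hsm : ∀ (c : R) (x : X), φ c • x = c • x := by
    intro c x
    change Function.surjInv hφ (φ c) • x = c • x
    rw [← sub_eq_zero, ← sub_smul]
    obtain ⟨x, rfl⟩ := Submodule.mkQ_surjective _ x
    rw [← map_smul]
    rw [Submodule.mkQ_apply, Submodule.Quotient.mk_eq_zero]
    refine Submodule.smul_mem_smul ?_ Submodule.mem_top
    rw [RingHom.mem_ker, map_sub, Function.surjInv_eq hφ, sub_self]
  let : Module A X := Function.Surjective.moduleLeft φ hφ hsm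
  let Fb : X →ₗ[R] P := N.liftQ F hle
  let FbA : X →ₗ[A] P := ⟨⟨Fb, map_add Fb⟩, by
    intro a x
    obtain ⟨r, rfl⟩ := hφ a
    change Fb (φ r • x) = φ r • Fb x
    rw [hsm, hP, map_smul]⟩
  have hFbs : Function.Surjective FbA := by
    intro y
    obtain ⟨m, rfl⟩ := hFs y
    exact ⟨N.mkQ m, rfl⟩
  obtain ⟨s, hs⟩ := Module.projective_lifting_property FbA LinearMap.id hFbs
  have hs' : ∀ y, Fb (s y) = y := fun y => DFunLike.congr_fun hs y
  let sR : P →ₗ[R] X := ⟨⟨s, map_add s⟩, by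
    intro r y
    change s (r • y) = r • s y
    rw [← hsm, ← hP, map_smul]⟩
  let θ : X →ₗ[R] X := LinearMap.id - sR.comp Fb
  have hθ : ∀ x, θ x = x - s (Fb x) := fun _ => rfl
  have hθk : ∀ x, Fb x = 0 → θ x = x := by
    intro x hx; rw [hθ, hx, map_zero, sub_zero]
  have hK : LinearMap.range θ = ⊥ := by
    apply Submodule.FG.eq_bot_of_le_jacobson_smul
    · rw [LinearMap.range_eq_map]
      exact Module.Finite.fg_top.map θ
    · rintro _ ⟨x, rfl⟩
      have h0 : Fb (θ x) = 0 := by rw [hθ, map_sub, hs', sub_self]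
      rw [← hθk _ h0]
      obtain ⟨m, hm⟩ := N.mkQ_surjective (θ x)
      rw [← hm] at h0 ⊢
      have h1 := hFk1 m h0
      have h3 := Submodule.mem_map_of_mem (f := θ.comp N.mkQ) h1
      rw [Submodule.map_smul''] at h3
      refine Submodule.smul_mono hJ ?_ h3
      rintro _ ⟨z, _, rfl⟩
      exact ⟨_, rfl⟩
  have h5 : N.mkQ m ∈ LinearMap.range θ := ⟨N.mkQ m, hθk _ hm⟩
  rw [hK, Submodule.mem_bot] at h5
  simpa using h5

theorem aux_same (A P : Type) [Ring A] [AddCommGroup P] [Module A P] [IsArtinian A P] [IsNoetherian A P] :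
    SameCompositionFactors A P P := by
  obtain ⟨s, h0, h1⟩ := (isFiniteLength_iff_exists_compositionSeries (R := A) (M := P)).1
    ((isFiniteLength_iff_isNoetherian_isArtinian).2 ⟨inferInstance, inferInstance⟩)
  refine ⟨s.length, s, s, Equiv.refl _, s.strictMono.monotone, s.strictMono.monotone, h0, h1, h0, h1, ?_⟩
  intro i
  refine ⟨?_, ⟨LinearEquiv.refl _ _⟩⟩
  have := s.step i
  exact (covBy_iff_quot_is_simple this.1.le).1 this

theorem aux_loc_ker (p : ℕ) [Fact p.Prime] (x : ZLoc p) :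
    locToZMod p x = 0 ↔ ∃ y, x = p * y := by
  constructor
  · intro h
    obtain ⟨⟨a, s⟩, hx⟩ := IsLocalization.surj (Ideal.span {(p : ℤ)}).primeCompl x
    have h1 := congrArg (locToZMod p) hx
    rw [map_mul, h, zero_mul] at h1
    simp only [locToZMod, IsLocalization.lift_eq] at h1
    obtain ⟨b, hb⟩ := (ZMod.intCast_zmod_eq_zero_iff_dvd a p).1 (by simpa using h1.symm)
    subst hb
    refine ⟨IsLocalization.mk' _ b s, ?_⟩
    have hs := IsLocalization.map_units (ZLoc p) s
    apply hs.mul_right_cancel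
    rw [mul_assoc, IsLocalization.mk'_spec, hx]
    simp
  · rintro ⟨y, rfl⟩
    simp

theorem aux_loc_surj (p : ℕ) [Fact p.Prime] : Function.Surjective (locToZMod p) := fun x =>
  ⟨(x.val : ZLoc p), by have : NeZero p := ⟨(Fact.out : p.Prime).ne_zero⟩; simp⟩

theorem aux_phi (p : ℕ) [Fact p.Prime] (G : Type) [Group G] :
    groupRingToFp p G = MonoidAlgebra.mapRingHom G (locToZMod p) := by
  apply MonoidAlgebra.ringHom_ext <;> intro r <;>
  simp [groupRingToFp, MonoidAlgebra.coeffRingHom, MonoidAlgebra.singleOneRingHom]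

theorem aux_phi_surj (p : ℕ) [Fact p.Prime] (G : Type) [Group G] :
    Function.Surjective (groupRingToFp p G) := by
  intro x
  induction x using MonoidAlgebra.induction_linear with
  | zero => exact ⟨0, map_zero _⟩
  | add x y h1 h2 =>
    obtain ⟨a, rfl⟩ := h1
    obtain ⟨b, rfl⟩ := h2
    exact ⟨a + b, map_add _ _ _⟩
  | single g r =>
    obtain ⟨a, rfl⟩ := aux_loc_surj p r
    exact ⟨MonoidAlgebra.single g a, by rw [aux_phi]; simp⟩

theorem aux_phi_ker (p : ℕ) [Fact p.Prime] (G : Type) [Group G] (r : MonoidAlgebra (ZLoc p) G)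
    (h : groupRingToFp p G r = 0) : ∃ r', r = (p : ZLoc p) • r' := by
  have h1 : ∀ g, ∃ y, r.coeff g = (p : ZLoc p) * y := by
    intro g
    rw [← aux_loc_ker]
    rw [aux_phi] at h
    have := congrArg (fun z => z.coeff g) h
    simpa using this
  choose y hy using h1
  refine ⟨∑ g ∈ r.coeff.support, MonoidAlgebra.single g (y g), ?_⟩
  rw [Finset.smul_sum]
  simp only [MonoidAlgebra.smul_single, smul_eq_mul, ← hy]
  ext g
  simp only [MonoidAlgebra.coeff_sum, MonoidAlgebra.coeff_single, Finsupp.finsetSum_apply]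
  rw [Finset.sum_eq_single g]
  · simp
  · intro b _ hb
    simp [hb.symm]
  · intro hg
    simpa using hg

/-- If `ℤ_(p)G` is semiperfect then, in the Grothendieck group of `𝔽_pG`, the image of the
positive cone under the Cartan homomorphism is contained in the image of the positive cone of
`G(ℚG)` under the decomposition map: every finitely generated projective `𝔽_pG`-module `P`
is, up to composition factors, the reduction modulo `p` of a `ℤ_(p)`-projective
`ℤ_(p)G`-lattice. -/
theorem reduction_of_projective_of_isSemiperfectRing
    (G : Type) [Group G] [Finite G] (p : ℕ) [Fact p.Prime]
    (h : IsSemiperfectRing (MonoidAlgebra (ZLoc p) G)) :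
    ∀ (P : Type) [AddCommGroup P] [Module (MonoidAlgebra (ZMod p) G) P],
      Module.Finite (MonoidAlgebra (ZMod p) G) P →
      Module.Projective (MonoidAlgebra (ZMod p) G) P →
      Nonempty (ReductionWitness p G P) := by
  intro P _ _ hfin hproj
  obtain ⟨hss, hid⟩ := h
  let : Module (MonoidAlgebra (ZLoc p) G) P := Module.compHom P (groupRingToFp p G)
  obtain ⟨n, M, f, hMfin, ⟨t, ht⟩, hs, hk⟩ := aux_lift (P := P) (groupRingToFp p G)
    (aux_phi_surj p G) (fun r x => rfl)
    (ringJacobson (MonoidAlgebra (ZLoc p) G)).ringCon.mk' (RingCon.mk'_surjective _) (by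
      intro r hr
      have : r ∈ ringJacobson (MonoidAlgebra (ZLoc p) G) := by
        rw [RingHom.mem_ker, ← map_zero (RingCon.mk' _)] at hr
        rw [TwoSidedIdeal.mem_iff]
        exact (RingCon.eq _).1 hr
      rw [← Ideal.jacobson_bot]
      simpa [ringJacobson, TwoSidedIdeal.jacobson] using this) hid
  have hA : IsArtinianRing (MonoidAlgebra (ZMod p) G) := by
    have : Module.Finite (ZMod p) (MonoidAlgebra (ZMod p) G) := inferInstance
    exact IsArtinianRing.of_finite (ZMod p) _
  refine ⟨{ M := M, finite := hMfin, projectiveLoc := ?_, X := P,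
            f := ⟨⟨f, map_add f⟩, fun r m => map_smul f r m⟩, surjective := hs,
            ker_eq := ?_, same := aux_same _ P }⟩
  · exact Module.Projective.of_split (M.subtype.restrictScalars (ZLoc p))
      (t.restrictScalars (ZLoc p)) (LinearMap.ext fun m => DFunLike.congr_fun ht m)
  · intro m
    refine (hk m).trans ⟨fun hm => ?_, fun hm => ?_⟩
    · induction hm using Submodule.smul_induction_on' with
      | smul r hr m _ =>
        obtain ⟨r', rfl⟩ := aux_phi_ker p G r hr
        rw [smul_assoc]
        exact Submodule.smul_mem_smul (Ideal.mem_span_singleton_self _) Submodule.mem_top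
      | add x _ y _ h1 h2 => exact add_mem h1 h2
    · rw [Submodule.ideal_span_singleton_smul] at hm
      obtain ⟨m, -, rfl⟩ := hm
      have : (p : ZLoc p) • m = (p : MonoidAlgebra (ZLoc p) G) • m := by
        rw [Nat.cast_smul_eq_nsmul, Nat.cast_smul_eq_nsmul]
      change (p : ZLoc p) • m ∈ _
      rw [this]
      refine Submodule.smul_mem_smul ?_ Submodule.mem_top
      rw [RingHom.mem_ker, map_natCast]
      have : ((p : ZMod p) : ZMod p) = 0 := by simp
      rw [← map_natCast (algebraMap (ZMod p) (MonoidAlgebra (ZMod p) G)), this, map_zero]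
end

section
/- Let p be a prime and suppose the finite group G is a semidirect product G = P ⋊ H of a normal Sylow p-subgroup P and a subgroup H of order prime to p. Then the following are equivalent: (1) for every finitely generated projective 𝔽_pG-module Q there exists a finitely generated ℤ_(p)G-module M, projective as a ℤ_(p)-module, such that 𝔽_p ⊗_{ℤ_(p)} M and Q have the same composition factors counted with multiplicity as 𝔽_pG-modules (i.e., α(G⁺(ℚG)) ⊇ β(K⁺(𝔽_pG)) in the Grothendieck group of 𝔽_pG); (2) ℤ_(p)G is semiperfect; (3) ℤ_(p)H is semiperfect. -/
namespace SPR

section lifts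
variable {A B : Type} [Ring A] [Ring B] (φ : A →+* B)

def JM (M : Type) [AddCommGroup M] [Module A M] : Submodule A M :=
  Submodule.span A {x | ∃ (c : A) (m : M), φ c = 0 ∧ x = c • m}

def RadKer : Prop := ∀ (S : Type) [AddCommGroup S] [Module A S] [IsSimpleModule A S]
  (c : A) (s : S), φ c = 0 → c • s = 0

variable {φ}
variable {M N : Type} [AddCommGroup M] [Module A M] [AddCommGroup N] [Module A N]
variable {V W : Type} [AddCommGroup V] [Module B V] [AddCommGroup W] [Module B W]

theorem smul_mem_JM {c : A} (hc : φ c = 0) (m : M) : c • m ∈ JM φ M :=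
  Submodule.subset_span ⟨c, m, hc, rfl⟩

theorem map_mem_JM (g : M →ₗ[A] N) {x : M} (hx : x ∈ JM φ M) : g x ∈ JM φ N := by
  have : JM φ M ≤ (JM φ N).comap g := by
    refine Submodule.span_le.2 ?_
    rintro _ ⟨c, m, hc, rfl⟩
    simpa using smul_mem_JM hc (g m)
  exact this hx

theorem exists_JM_of_surj (g : M →ₗ[A] N) (hg : Function.Surjective g) {y : N}
    (hy : y ∈ JM φ N) : ∃ x ∈ JM φ M, g x = y := by
  have : JM φ N ≤ (JM φ M).map g := by
    refine Submodule.span_le.2 ?_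
    rintro _ ⟨c, m, hc, rfl⟩
    obtain ⟨m, rfl⟩ := hg m
    exact ⟨c • m, smul_mem_JM hc m, by simp⟩
  exact this hy

theorem map_JM_eq_zero (f : M →ₛₗ[φ] V) {x : M} (hx : x ∈ JM φ M) : f x = 0 := by
  have : JM φ M ≤ LinearMap.ker f := by
    refine Submodule.span_le.2 ?_
    rintro _ ⟨c, m, hc, rfl⟩
    simp [hc]
  exact this hx

theorem nak (hφ : RadKer φ) [Module.Finite A M] (N : Submodule A M)
    (h : ∀ m, ∃ n ∈ N, m - n ∈ JM φ M) : N = ⊤ := by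
  by_contra hN
  obtain ⟨K, hK, hNK⟩ := (eq_top_or_exists_le_coatom N).resolve_left hN
  have : IsSimpleModule A (M ⧸ K) := isSimpleModule_iff_isCoatom.2 hK
  have hJ : JM φ M ≤ K := by
    refine Submodule.span_le.2 ?_
    rintro _ ⟨c, m, hc, rfl⟩
    have := hφ (M ⧸ K) c (K.mkQ m) hc
    rw [← map_smul] at this
    exact (Submodule.Quotient.mk_eq_zero K).1 this
  apply hK.1
  rw [eq_top_iff]
  intro m _
  obtain ⟨n, hn, hmn⟩ := h m
  have := K.add_mem (hJ hmn) (hNK hn)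
  simpa using this

theorem exists_lift (f' : M →ₛₗ[φ] V) (f : N →ₛₗ[φ] V) (hf : Function.Surjective f)
    [Module.Projective A M] : ∃ g : M →ₗ[A] N, ∀ x, f (g x) = f' x := by
  let _ : Module A V := Module.compHom V φ
  let F : N →ₗ[A] V := { toFun := f, map_add' := map_add f, map_smul' := fun c x => f.map_smulₛₗ c x }
  let F' : M →ₗ[A] V :=
    { toFun := f', map_add' := map_add f', map_smul' := fun c x => f'.map_smulₛₗ c x }
  obtain ⟨g, hg⟩ := Module.projective_lifting_property F F' hf
  exact ⟨g, fun x => LinearMap.congr_fun hg x⟩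

def IsLift (f : M →ₛₗ[φ] V) : Prop := Function.Surjective f ∧ ∀ m, f m = 0 → m ∈ JM φ M

theorem surj_of_lift (hφ : RadKer φ) [Module.Finite A N] (f' : M →ₛₗ[φ] V) (f : N →ₛₗ[φ] V)
    (hf : IsLift f) (hf' : Function.Surjective f')
    (g : M →ₗ[A] N) (hg : ∀ x, f (g x) = f' x) : Function.Surjective g := by
  rw [← LinearMap.range_eq_top]
  refine nak hφ _ fun m => ?_
  obtain ⟨x, hx⟩ := hf' (f m)
  refine ⟨g x, ⟨x, rfl⟩, hf.2 _ ?_⟩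
  rw [map_sub, hg, hx, sub_self]

theorem exists_iso (hφ : RadKer φ) [Module.Finite A M] [Module.Finite A N]
    [Module.Projective A M] [Module.Projective A N]
    (f' : M →ₛₗ[φ] V) (f : N →ₛₗ[φ] V) (hf' : IsLift f') (hf : IsLift f) :
    ∃ g : M ≃ₗ[A] N, ∀ x, f (g x) = f' x := by
  obtain ⟨g, hg⟩ := exists_lift f' f hf.1
  have hgs := surj_of_lift hφ f' f hf hf'.1 g hg
  obtain ⟨s, hs⟩ := Module.projective_lifting_property g LinearMap.id hgs
  have hs' : ∀ x, g (s x) = x := fun x => LinearMap.congr_fun hs x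
  have hss : Function.Surjective s := surj_of_lift hφ f f' hf' hf.1 s fun x => by
    rw [← hg, hs']
  have hinj : Function.Injective g := by
    intro a b hab
    obtain ⟨a, rfl⟩ := hss a
    obtain ⟨b, rfl⟩ := hss b
    rw [hs', hs'] at hab
    rw [hab]
  exact ⟨LinearEquiv.ofBijective g ⟨hinj, hgs⟩, hg⟩

variable (φ) in
def Liftable (V : Type) [AddCommGroup V] [Module B V] : Prop :=
  ∃ (M : Type) (_ : AddCommGroup M) (_ : Module A M) (_ : Module.Finite A M)
    (_ : Module.Projective A M) (f : M →ₛₗ[φ] V), IsLift f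

theorem Liftable.congr (h : Liftable φ V) (e : V ≃ₗ[B] W) : Liftable φ W := by
  obtain ⟨M, _, _, _, _, f, hf⟩ := h
  refine ⟨M, _, _, ‹_›, ‹_›, e.toLinearMap.comp f, e.surjective.comp hf.1, fun m hm => hf.2 m ?_⟩
  simpa using hm

theorem Liftable.cancel (hφ : RadKer φ) (h : Liftable φ (V × W)) (h' : Liftable φ V) :
    Liftable φ W := by
  obtain ⟨M', _, _, _, _, f', hf'⟩ := h
  obtain ⟨M, _, _, _, _, f, hf⟩ := h'
  obtain ⟨g, hg⟩ := exists_lift ((LinearMap.fst B V W).comp f') f hf.1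
  have hgs := surj_of_lift hφ _ f hf (Prod.fst_surjective.comp hf'.1) g hg
  obtain ⟨s, hs⟩ := Module.projective_lifting_property g LinearMap.id hgs
  have hs' : ∀ x, g (s x) = x := fun x => LinearMap.congr_fun hs x
  let q : M' →ₗ[A] LinearMap.ker g :=
    (LinearMap.id - s.comp g).codRestrict _ (by intro x; simp [hs'])
  have hq : ∀ x : LinearMap.ker g, q x = x := by
    intro x; ext; simp [q]
  have hqs : Function.Surjective q := fun x => ⟨x, hq x⟩
  refine ⟨LinearMap.ker g, _, _, Module.Finite.of_surjective q hqs,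
    Module.Projective.of_split (LinearMap.ker g).subtype q (LinearMap.ext hq),
    ((LinearMap.snd B V W).comp f').comp (LinearMap.ker g).subtype, ?_, ?_⟩
  · intro w
    obtain ⟨m, hm⟩ := hf'.1 (0, w)
    have h0 : g m ∈ JM φ M := hf.2 _ (by rw [hg]; simp [hm])
    obtain ⟨x, hx, hxm⟩ := exists_JM_of_surj g hgs h0
    refine ⟨⟨m - x, by simp [hxm]⟩, ?_⟩
    simp [hm, map_JM_eq_zero f' hx]
  · rintro ⟨x, hx⟩ h0
    have h1 := hg x
    rw [LinearMap.mem_ker.1 hx] at h1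
    have h2 : f' x = 0 := by
      ext
      · simpa using h1.symm
      · simpa using h0
    have := map_mem_JM q (hf'.2 _ h2)
    rwa [hq ⟨x, hx⟩] at this

theorem Liftable.of_subsingleton [Subsingleton V] : Liftable φ V :=
  ⟨PUnit, inferInstance, inferInstance, inferInstance, inferInstance, 0,
    fun v => ⟨0, Subsingleton.elim _ _⟩, fun m _ => by
      rw [Subsingleton.elim m 0]; exact Submodule.zero_mem _⟩

def prodLift (f : M →ₛₗ[φ] V) (g : N →ₛₗ[φ] W) : M × N →ₛₗ[φ] V × W where
  toFun x := (f x.1, g x.2)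
  map_add' x y := by simp
  map_smul' c x := by simp

theorem IsLift.prodLift {f : M →ₛₗ[φ] V} {g : N →ₛₗ[φ] W} (hf : IsLift f) (hg : IsLift g) :
    IsLift (prodLift f g) := by
  constructor
  · rintro ⟨v, w⟩
    obtain ⟨m, rfl⟩ := hf.1 v
    obtain ⟨n, rfl⟩ := hg.1 w
    exact ⟨(m, n), rfl⟩
  · rintro ⟨m, n⟩ h
    have h1 : f m = 0 := congrArg Prod.fst h
    have h2 : g n = 0 := congrArg Prod.snd h
    have := (JM φ (M × N)).add_mem (map_mem_JM (LinearMap.inl A M N) (hf.2 _ h1))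
      (map_mem_JM (LinearMap.inr A M N) (hg.2 _ h2))
    simpa using this

theorem IsLift.equiv {f : M →ₛₗ[φ] V} (hf : IsLift f) (e : V ≃ₗ[B] W) :
    IsLift (e.toLinearMap.comp f) :=
  ⟨e.surjective.comp hf.1, fun m hm => hf.2 m (by simpa using hm)⟩

theorem Liftable.prod (h : Liftable φ V) (h' : Liftable φ W) : Liftable φ (V × W) := by
  obtain ⟨M, _, _, _, _, f, hf⟩ := h
  obtain ⟨N, _, _, _, _, g, hg⟩ := h'
  exact ⟨M × N, _, _, inferInstance, inferInstance, prodLift f g, hf.prodLift hg⟩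

def finSuccEquiv' {n : ℕ} (S : Fin (n + 1) → Type) [∀ i, AddCommGroup (S i)]
    [∀ i, Module B (S i)] : (S 0 × ∀ i : Fin n, S i.succ) ≃ₗ[B] (∀ i, S i) :=
  { Fin.consEquiv S with
    map_add' := by
      rintro ⟨a, b⟩ ⟨c, d⟩
      funext i
      refine Fin.cases ?_ (fun i => ?_) i <;> simp [Fin.consEquiv]
    map_smul' := by
      rintro r ⟨a, b⟩
      funext i
      refine Fin.cases ?_ (fun i => ?_) i <;> simp [Fin.consEquiv] }

theorem Liftable.pi {n : ℕ} (S : Fin n → Type) [∀ i, AddCommGroup (S i)]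
    [∀ i, Module B (S i)] (h : ∀ i, Liftable φ (S i)) : Liftable φ (∀ i, S i) := by
  induction n with
  | zero => exact .of_subsingleton
  | succ n ih => exact ((h 0).prod (ih _ fun i => h i.succ)).congr (finSuccEquiv' S)

theorem Liftable.span (hs : Function.Surjective φ) {e : A} (he : IsIdempotentElem e) :
    Liftable φ (Submodule.span B {φ e}) := by
  let I := Submodule.span A {e}
  have hI : ∀ x : I, (x : A) * e = x := by
    rintro ⟨x, hx⟩
    obtain ⟨a, rfl⟩ := Submodule.mem_span_singleton.1 hx
    simp [mul_assoc, he.eq]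
  let q : A →ₗ[A] I := (LinearMap.toSpanSingleton A A e).codRestrict I fun x => by
    simpa using I.smul_mem x (Submodule.mem_span_singleton_self e)
  have hq : ∀ x : I, q x = x := by
    intro x; ext; simpa [q] using hI x
  have hqs : Function.Surjective q := fun x => ⟨x, hq x⟩
  let f0 : I →ₛₗ[φ] B := { toFun := fun x => φ x, map_add' := by simp, map_smul' := by simp }
  let f : I →ₛₗ[φ] Submodule.span B {φ e} := f0.codRestrict _ (by
    rintro ⟨x, hx⟩
    obtain ⟨a, rfl⟩ := Submodule.mem_span_singleton.1 hx
    exact Submodule.mem_span_singleton.2 ⟨φ a, by simp [f0]⟩)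
  refine ⟨I, _, _, Module.Finite.of_surjective q hqs,
    Module.Projective.of_split I.subtype q (LinearMap.ext hq), f, ?_, ?_⟩
  · rintro ⟨x, hx⟩
    obtain ⟨b, rfl⟩ := Submodule.mem_span_singleton.1 hx
    obtain ⟨a, rfl⟩ := hs b
    exact ⟨⟨a • e, Submodule.mem_span_singleton.2 ⟨a, rfl⟩⟩, by ext; simp [f, f0]⟩
  · intro x hx
    have h0 : φ (x : A) = 0 := congrArg Subtype.val hx
    have h1 : x = (x : A) • (⟨e, Submodule.mem_span_singleton_self e⟩ : I) := by
      ext; simpa using (hI x).symm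
    rw [h1]
    exact smul_mem_JM h0 _

def IdemLift (φ : A →+* B) : Prop :=
  ∀ x : B, IsIdempotentElem x → ∃ e : A, IsIdempotentElem e ∧ φ e = x

theorem exists_idem_of_simple [IsSemisimpleRing B] [IsSimpleModule B V] :
    ∃ x : B, IsIdempotentElem x ∧ Nonempty (Submodule.span B {x} ≃ₗ[B] V) := by
  obtain ⟨I, ⟨e⟩⟩ := IsSemisimpleRing.exists_linearEquiv_ideal_of_isSimpleModule B V
  obtain ⟨x, hx, rfl⟩ := IsSemisimpleRing.ideal_eq_span_idempotent I
  exact ⟨x, hx, ⟨e.symm⟩⟩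

theorem liftable_of_simple [IsSemisimpleRing B] [Module.Finite B V]
    (h : ∀ (S : Type) [AddCommGroup S] [Module B S] [IsSimpleModule B S], Liftable φ S) :
    Liftable φ V := by
  classical
  obtain ⟨n, S, e, hS⟩ := IsSemisimpleModule.exists_linearEquiv_fin_dfinsupp B V
  have := Liftable.pi (φ := φ) (fun i => S i) (fun i => h (S i))
  exact this.congr ((e.trans DFinsupp.linearEquivFunOnFintype).symm)

theorem liftable_of_idemLift [IsSemisimpleRing B] (hs : Function.Surjective φ) (h : IdemLift φ)
    [Module.Finite B V] : Liftable φ V := by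
  refine liftable_of_simple fun S _ _ _ => ?_
  obtain ⟨x, hx, ⟨e⟩⟩ := exists_idem_of_simple (B := B) (V := S)
  obtain ⟨y, hy, rfl⟩ := h x hx
  exact (Liftable.span hs hy).congr e

/-- the two complementary left ideals -/
def idemEquiv {x : B} (hx : IsIdempotentElem x) :
    B ≃ₗ[B] Submodule.span B {x} × Submodule.span B {1 - x} where
  toFun b := (⟨b * x, Submodule.mem_span_singleton.2 ⟨b, rfl⟩⟩,
    ⟨b * (1 - x), Submodule.mem_span_singleton.2 ⟨b, rfl⟩⟩)
  map_add' a b := by ext <;> simp [add_mul]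
  map_smul' a b := by ext <;> simp [mul_assoc]
  invFun y := y.1 + y.2
  left_inv b := by simp [mul_sub]
  right_inv := by
    rintro ⟨⟨y, hy⟩, ⟨z, hz⟩⟩
    obtain ⟨a, rfl⟩ := Submodule.mem_span_singleton.1 hy
    obtain ⟨b, rfl⟩ := Submodule.mem_span_singleton.1 hz
    have h1 : (1 - x) * x = 0 := by rw [sub_mul, hx.eq, one_mul, sub_self]
    have h2 : x * (1 - x) = 0 := by rw [mul_sub, hx.eq, mul_one, sub_self]
    ext
    · simp [add_mul, mul_assoc, hx.eq, h1]
    · simp [add_mul, mul_assoc, hx.one_sub.eq, h2]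

def selfLift (φ : A →+* B) : A →ₛₗ[φ] B where
  toFun := φ
  map_add' := map_add φ
  map_smul' a b := by simp

theorem isLift_selfLift (hs : Function.Surjective φ) : IsLift (selfLift φ) :=
  ⟨hs, fun m hm => by simpa using smul_mem_JM (φ := φ) (M := A) hm (1 : A)⟩

theorem idemLift_of_liftable (hφ : RadKer φ) (hs : Function.Surjective φ)
    (h : ∀ x : B, IsIdempotentElem x → Liftable φ (Submodule.span B {x})) : IdemLift φ := by
  intro x hx
  obtain ⟨M, _, _, _, _, f, hf⟩ := h x hx
  obtain ⟨N, _, _, _, _, g, hg⟩ := h (1 - x) hx.one_sub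
  let F : M × N →ₛₗ[φ] B := (idemEquiv hx).symm.toLinearMap.comp (prodLift f g)
  have hFa : ∀ m n, F (m, n) = f m + g n := fun m n => rfl
  have hF : IsLift F := (hf.prodLift hg).equiv _
  obtain ⟨ψ, hψ⟩ := exists_iso hφ (selfLift φ) F (isLift_selfLift hs) hF
  let π : A →ₗ[A] A := ψ.symm.toLinearMap ∘ₗ (LinearMap.inl A M N ∘ₗ LinearMap.fst A M N) ∘ₗ
    ψ.toLinearMap
  have hπ : ∀ a, π a = ψ.symm ((ψ a).1, 0) := fun a => rfl
  have hππ : ∀ a, π (π a) = π a := fun a => by simp [hπ]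
  have hmul : ∀ a, π a = a * π 1 := fun a => by
    conv_lhs => rw [← mul_one a, ← smul_eq_mul, map_smul, smul_eq_mul]
  refine ⟨π 1, ?_, ?_⟩
  · rw [IsIdempotentElem, ← hmul, hππ]
  · have h1 : φ (π 1) = F ((ψ 1).1, 0) := by
      rw [hπ, ← LinearEquiv.apply_symm_apply ψ ((ψ 1).1, 0), hψ]; simp [selfLift]
    have h2 : F (ψ 1) = 1 := by rw [hψ]; simp [selfLift]
    have h3 : (f (ψ 1).1, g (ψ 1).2) = idemEquiv hx 1 := by
      exact ((idemEquiv hx).symm_apply_eq).1 h2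
    rw [h1, hFa, map_zero]
    have := congrArg (fun z => (z.1 : B)) h3
    simpa [idemEquiv] using this

end lifts
end SPR

namespace SPR

section pw
variable {A B : Type} [Ring A] [Ring B] {φ : A →+* B}
variable {V W : Type} [AddCommGroup V] [Module B V] [AddCommGroup W] [Module B W]

theorem Liftable.reindex {ι κ : Type} [Finite ι] [Finite κ] (h : Liftable φ (ι → V))
    (hc : Nat.card ι = Nat.card κ) : Liftable φ (κ → V) :=
  h.congr (LinearEquiv.funCongrLeft B V (Finite.card_eq.1 hc).some.symm)

theorem Liftable.pow (h : Liftable φ V) (n : ℕ) : Liftable φ (Fin n → V) :=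
  Liftable.pi _ fun _ => h

theorem Liftable.mul {n : ℕ} (h : Liftable φ (Fin n → V)) (m : ℕ) : Liftable φ (Fin (m * n) → V) :=
  ((h.pow m).congr (LinearEquiv.curry B V (Fin m) (Fin n)).symm).reindex (by simp)

theorem Liftable.unmul {n m : ℕ} (h : Liftable φ (Fin m → Fin n → V)) :
    Liftable φ (Fin (m * n) → V) :=
  (h.congr (LinearEquiv.curry B V (Fin m) (Fin n)).symm).reindex (by simp)

def prodPiEquiv (B V W : Type) [Ring B] [AddCommGroup V] [Module B V] [AddCommGroup W]
    [Module B W] (ι : Type) : ((ι → V) × (ι → W)) ≃ₗ[B] (ι → V × W) where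
  toFun x i := (x.1 i, x.2 i)
  map_add' _ _ := rfl
  map_smul' _ _ := rfl
  invFun y := (fun i => (y i).1, fun i => (y i).2)
  left_inv _ := rfl
  right_inv _ := rfl

theorem Liftable.add {n m : ℕ} (h : Liftable φ (Fin n → V)) (h' : Liftable φ (Fin m → V)) :
    Liftable φ (Fin (n + m) → V) :=
  ((h.prod h').congr (LinearEquiv.sumArrowLequivProdArrow (Fin n) (Fin m) B V).symm).reindex
    (by simp)

theorem Liftable.sub (hφ : RadKer φ) {n m : ℕ} (h : Liftable φ (Fin (n + m) → V))
    (h' : Liftable φ (Fin n → V)) : Liftable φ (Fin m → V) :=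
  Liftable.cancel hφ ((h.reindex (κ := Fin n ⊕ Fin m) (by simp)).congr
    (LinearEquiv.sumArrowLequivProdArrow (Fin n) (Fin m) B V)) h'

theorem Liftable.coprime (hφ : RadKer φ) {n m : ℕ} (h : Liftable φ (Fin n → V))
    (h' : Liftable φ (Fin m → V)) (hc : Nat.Coprime n m) : Liftable φ V := by
  have key : ∀ k, Liftable φ (Fin k → V) → k = 1 → Liftable φ V := by
    rintro _ h rfl
    exact h.congr (LinearEquiv.funUnique (Fin 1) B V)
  have hg : Liftable φ (Fin (Nat.gcd n m) → V) := by
    clear hc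
    induction n, m using Nat.gcd.induction with
    | H0 n => rwa [Nat.gcd_zero_left]
    | H1 n m hn ih =>
      rw [Nat.gcd_rec]
      refine ih ?_ h
      have h2 := h.mul (m / n)
      refine Liftable.sub hφ (n := m / n * n) ?_ h2
      rwa [Nat.div_add_mod']
  exact key _ hg hc

variable (φ) in
def PG (p : ℕ) (V : Type) [AddCommGroup V] [Module B V] : Prop :=
  ∃ N : ℕ, Liftable φ (Fin (p ^ N) → V)

variable {p : ℕ}

theorem Liftable.pg (h : Liftable φ V) : PG φ p V := ⟨0, h.pow _⟩

theorem PG.congr (h : PG φ p V) (e : V ≃ₗ[B] W) : PG φ p W := by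
  obtain ⟨N, h⟩ := h
  exact ⟨N, h.congr (LinearEquiv.piCongrRight fun _ => e)⟩

theorem liftable_mono {N : ℕ} (h : Liftable φ (Fin (p ^ N) → V)) (K : ℕ) :
    Liftable φ (Fin (p ^ (K + N)) → V) := by
  rw [pow_add]; exact h.mul _

theorem PG.prod (h : PG φ p V) (h' : PG φ p W) : PG φ p (V × W) := by
  obtain ⟨N, h⟩ := h
  obtain ⟨K, h'⟩ := h'
  refine ⟨K + N, ((liftable_mono h K).prod ?_).congr (prodPiEquiv B V W _)⟩
  rw [add_comm]; exact liftable_mono h' N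

theorem PG.cancel (hφ : RadKer φ) (h : PG φ p (V × W)) (h' : PG φ p V) : PG φ p W := by
  obtain ⟨N, h⟩ := h
  obtain ⟨K, h'⟩ := h'
  refine ⟨K + N, Liftable.cancel hφ (V := Fin (p ^ (K + N)) → V) ?_ ?_⟩
  · exact (liftable_mono h K).congr (prodPiEquiv B V W _).symm
  · rw [add_comm]; exact liftable_mono h' N

theorem PG.of_pow {ι : Type} [Finite ι] {a : ℕ} (hι : Nat.card ι = p ^ a)
    (h : PG φ p (ι → V)) : PG φ p V := by
  obtain ⟨N, h⟩ := h
  refine ⟨N + a, ?_⟩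
  rw [pow_add]
  refine Liftable.unmul (h.congr (LinearEquiv.piCongrRight fun _ => ?_))
  exact LinearEquiv.funCongrLeft B V (Finite.card_eq.1 (by simp [hι])).some

theorem exists_common (h : PG φ p V) (h' : PG φ p W) :
    ∃ N, Liftable φ (Fin (p ^ N) → V) ∧ Liftable φ (Fin (p ^ N) → W) := by
  obtain ⟨N, h⟩ := h
  obtain ⟨K, h'⟩ := h'
  refine ⟨K + N, liftable_mono h K, ?_⟩
  rw [add_comm]; exact liftable_mono h' N

/-- separation property -/
def Sep (φ : A →+* B) : Prop :=
  ∀ (M N : Type) [AddCommGroup M] [Module A M] [AddCommGroup N] [Module A N]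
    [Module.Finite A M] [Module.Projective A M] [Module.Finite A N] [Module.Projective A N],
    (∀ θ : M →ₗ[A] N, ∀ m, θ m ∈ JM φ N) → ∀ θ : M →ₗ[A] N, θ = 0

theorem hom_zero (hs : Function.Surjective φ) (hsep : Sep φ)
    {M N : Type} [AddCommGroup M] [Module A M] [AddCommGroup N] [Module A N]
    [Module.Finite A M] [Module.Projective A M] [Module.Finite A N] [Module.Projective A N]
    {f : M →ₛₗ[φ] V} {g : N →ₛₗ[φ] W} (hf : IsLift f) (hg : IsLift g)
    (x : B) (hV : ∀ v : V, x • v = v) (hW : ∀ w : W, x • w = 0) (θ : M →ₗ[A] N) (m : M) :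
    θ m = 0 := by
  rw [hsep M N (fun θ m => ?_) θ, LinearMap.zero_apply]
  obtain ⟨a, rfl⟩ := hs x
  have h1 : m - a • m ∈ JM φ M := hf.2 _ (by simp [hV])
  have h2 := map_mem_JM θ h1
  have h3 : a • θ m ∈ JM φ N := hg.2 _ (by simp [hW])
  have := (JM φ N).add_mem h2 h3
  simpa using this

def piSelfLift (φ : A →+* B) (ι : Type) : (ι → A) →ₛₗ[φ] (ι → B) where
  toFun y i := φ (y i)
  map_add' x y := by ext; simp
  map_smul' a b := by ext; simp

theorem isLift_piSelfLift (hs : Function.Surjective φ) (n : ℕ) :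
    IsLift (piSelfLift φ (Fin n)) := by
  constructor
  · intro y
    choose z hz using fun i => hs (y i)
    exact ⟨z, funext hz⟩
  · intro y hy
    have : y = ∑ i, y i • (Pi.single i 1 : Fin n → A) := by
      ext j; simp [Finset.sum_apply, Pi.single_apply]
    rw [this]
    exact Submodule.sum_mem _ fun i _ => smul_mem_JM (congrFun hy i) _

theorem central_lift (hφ : RadKer φ) (hs : Function.Surjective φ) (hsep : Sep φ)
    {x : B} (hx : IsIdempotentElem x) (hc : ∀ b, x * b = b * x) {n : ℕ} (hn : 0 < n)
    (h1 : Liftable φ (Fin n → Submodule.span B {x}))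
    (h2 : Liftable φ (Fin n → Submodule.span B {1 - x})) :
    Liftable φ (Submodule.span B {x}) := by
  obtain ⟨M, _, _, _, _, f, hf⟩ := h1
  obtain ⟨N, _, _, _, _, g, hg⟩ := h2
  have e1 : ∀ v : Submodule.span B {x}, (v : B) * x = v := by
    rintro ⟨v, hv⟩
    obtain ⟨b, rfl⟩ := Submodule.mem_span_singleton.1 hv
    simp [mul_assoc, hx.eq]
  have e2 : ∀ v : Submodule.span B {1 - x}, (v : B) * x = 0 := by
    rintro ⟨v, hv⟩
    obtain ⟨b, rfl⟩ := Submodule.mem_span_singleton.1 hv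
    simp [mul_assoc, sub_mul, hx.eq]
  let E := (prodPiEquiv B _ _ (Fin n)).trans
    (LinearEquiv.piCongrRight fun _ : Fin n => (idemEquiv hx).symm)
  let F : M × N →ₛₗ[φ] (Fin n → B) := E.toLinearMap.comp (prodLift f g)
  have hF : IsLift F := (hf.prodLift hg).equiv E
  have hFa : ∀ m n i, F (m, n) i = f m i + g n i := fun m n i => rfl
  obtain ⟨ψ, hψ⟩ := exists_iso hφ (piSelfLift φ (Fin n)) F (isLift_piSelfLift hs n) hF
  have hMN : ∀ (θ : M →ₗ[A] N) m, θ m = 0 := by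
    refine hom_zero hs hsep hf hg x ?_ ?_
    · intro v; ext i; simp [hc, e1]
    · intro v; ext i; simp [hc, e2]
  have hNM : ∀ (θ : N →ₗ[A] M) m, θ m = 0 := by
    refine hom_zero hs hsep hg hf (1 - x) ?_ ?_
    · intro v; ext i; simp [sub_mul, hc, e2]
    · intro v; ext i; simp [sub_mul, hc, e1]
  let P : M × N →ₗ[A] M × N := LinearMap.inl A M N ∘ₗ LinearMap.fst A M N
  have hP : ∀ z, P z = (z.1, 0) := fun z => rfl
  have hcomm : ∀ (Θ : M × N →ₗ[A] M × N) z, P (Θ z) = Θ (P z) := by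
    rintro Θ ⟨m, n⟩
    have a1 := hMN (LinearMap.snd A M N ∘ₗ Θ ∘ₗ LinearMap.inl A M N) m
    have a2 := hNM (LinearMap.fst A M N ∘ₗ Θ ∘ₗ LinearMap.inr A M N) n
    simp only [LinearMap.comp_apply, LinearMap.inl_apply, LinearMap.inr_apply,
      LinearMap.fst_apply, LinearMap.snd_apply] at a1 a2
    have a3 : Θ (m, n) = Θ (m, 0) + Θ (0, n) := by rw [← map_add]; simp
    rw [hP, hP, a3]
    ext
    · simp [a2]
    · simp [a1]
  let i0 : Fin n := ⟨0, hn⟩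
  let u : A →ₗ[A] (Fin n → A) := LinearMap.single A (fun _ => A) i0
  let q : (Fin n → A) →ₗ[A] A := LinearMap.proj i0
  have hqu : ∀ a, q (u a) = a := fun a => by simp [q, u]
  let π : (Fin n → A) →ₗ[A] (Fin n → A) := ψ.symm.toLinearMap ∘ₗ P ∘ₗ ψ.toLinearMap
  have hπ : ∀ y, π y = ψ.symm (P (ψ y)) := fun y => rfl
  have hππ : ∀ y, π (π y) = π y := fun y => by simp [hπ, hP]
  have hπc : ∀ y, π (u (q y)) = u (q (π y)) := by
    intro y
    have := hcomm (ψ.toLinearMap ∘ₗ u ∘ₗ q ∘ₗ ψ.symm.toLinearMap) (ψ y)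
    simp only [LinearMap.comp_apply, LinearEquiv.coe_coe, LinearEquiv.symm_apply_apply] at this
    rw [hπ, this, LinearEquiv.symm_apply_apply, hπ]
  let π1 : A →ₗ[A] A := q ∘ₗ π ∘ₗ u
  have hπ1 : ∀ a, π1 a = q (π (u a)) := fun _ => rfl
  have hmul : ∀ a, π1 a = a * π1 1 := fun a => by
    conv_lhs => rw [← mul_one a, ← smul_eq_mul, map_smul, smul_eq_mul]
  have hid : IsIdempotentElem (π1 1) := by
    rw [IsIdempotentElem, ← hmul]
    rw [hπ1, hπ1, hπc, hππ, hqu]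
  have hval : φ (π1 1) = x := by
    have b1 : ∀ z i, F (P z) i = F z i * x := by
      rintro ⟨m, n⟩ i
      rw [hP, hFa, hFa, add_mul, e1, e2]; simp
    have b2 : ∀ y i, φ (π y i) = φ (y i) * x := by
      intro y i
      have c1 := congrFun (hψ (π y)) i
      have c2 := congrFun (hψ y) i
      rw [hπ, LinearEquiv.apply_symm_apply, b1, c2] at c1
      exact c1.symm
    have := b2 (u 1) i0
    have b3 : (u 1) i0 = 1 := hqu 1
    rw [b3, map_one φ, one_mul] at this
    exact this
  rw [← hval]
  exact Liftable.span hs hid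

end pw
end SPR

namespace SPR

section rings
variable (p : ℕ) [hp : Fact p.Prime]

theorem locToZMod_surjective : Function.Surjective (locToZMod p) := by
  intro x
  obtain ⟨n, rfl⟩ := ZMod.intCast_surjective x
  exact ⟨algebraMap ℤ (ZLoc p) n, by simp⟩

theorem locToZMod_ker {x : ZLoc p} (h : locToZMod p x = 0) : ∃ y, x = (p : ZLoc p) * y := by
  obtain ⟨a, s, rfl⟩ := IsLocalization.exists_mk'_eq (Ideal.span {(p : ℤ)}).primeCompl x
  have h1 : locToZMod p (algebraMap ℤ (ZLoc p) a) = 0 := by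
    rw [← IsLocalization.mk'_spec (ZLoc p) a s, map_mul, h, zero_mul]
  have h2 : ((a : ℤ) : ZMod p) = 0 := by simpa using h1
  obtain ⟨b, rfl⟩ := (ZMod.intCast_zmod_eq_zero_iff_dvd a p).1 h2
  refine ⟨IsLocalization.mk' (ZLoc p) b s, ?_⟩
  rw [← IsLocalization.mul_mk'_eq_mk'_of_mul]
  simp

theorem gr_eq (G : Type) [Group G] :
    groupRingToFp p G = MonoidAlgebra.mapRingHom G (locToZMod p) := by
  ext <;> simp [groupRingToFp, MonoidAlgebra.coeffRingHom, MonoidAlgebra.singleOneRingHom]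

@[simp] theorem gr_coeff {G : Type} [Group G] (x : MonoidAlgebra (ZLoc p) G) (g : G) :
    (groupRingToFp p G x).coeff g = locToZMod p (x.coeff g) := by
  rw [gr_eq]; simp

@[simp] theorem gr_single {G : Type} [Group G] (g : G) (r : ZLoc p) :
    groupRingToFp p G (MonoidAlgebra.single g r) = MonoidAlgebra.single g (locToZMod p r) := by
  rw [gr_eq]; simp

theorem gr_surjective (G : Type) [Group G] : Function.Surjective (groupRingToFp p G) := by
  rw [gr_eq]
  exact MonoidAlgebra.map_surjective _ (locToZMod_surjective p)

theorem locToZMod_p : locToZMod p (p : ZLoc p) = 0 := by simp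

theorem gr_ker {G : Type} [Group G] {x : MonoidAlgebra (ZLoc p) G}
    (h : groupRingToFp p G x = 0) : ∃ y, x = (p : ZLoc p) • y := by
  have h1 : ∀ g, ∃ y, x.coeff g = (p : ZLoc p) * y := fun g => locToZMod_ker p (by
    rw [← gr_coeff, h]; simp)
  choose y hy using h1
  refine ⟨∑ g ∈ x.coeff.support, MonoidAlgebra.single g (y g), ?_⟩
  conv_lhs => rw [← MonoidAlgebra.sum_coeff_single x]
  rw [Finset.smul_sum, Finsupp.sum]
  refine Finset.sum_congr rfl fun g _ => ?_
  rw [hy, MonoidAlgebra.smul_single, smul_eq_mul]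

theorem gr_natural {G H : Type} [Group G] [Group H] (π : G →* H) (x : MonoidAlgebra (ZLoc p) G) :
    groupRingToFp p H (MonoidAlgebra.mapDomainRingHom _ π x) =
      MonoidAlgebra.mapDomainRingHom _ π (groupRingToFp p G x) := by
  rw [gr_eq, gr_eq]
  have := MonoidAlgebra.mapRingHom_comp_mapDomainRingHom (locToZMod p) π
  exact congrArg (fun f => f x) this

instance instFiniteMA {G : Type} [Finite G] : Finite (MonoidAlgebra (ZMod p) G) :=
  have : NeZero p := ⟨hp.out.ne_zero⟩
  have : Finite (G →₀ ZMod p) := Finite.of_equiv _ Finsupp.equivFunOnFinite.symm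
  Finite.of_equiv (G →₀ ZMod p) MonoidAlgebra.coeffEquiv.symm

instance instModFiniteMA {R G : Type} [CommRing R] [Finite G] :
    Module.Finite R (MonoidAlgebra R G) :=
  Module.Finite.equiv (MonoidAlgebra.coeffLinearEquiv R).symm

instance instModFreeMA {R G : Type} [CommRing R] : Module.Free R (MonoidAlgebra R G) :=
  Module.Free.of_equiv (MonoidAlgebra.coeffLinearEquiv R).symm

theorem p_mem_jac : (p : ZLoc p) ∈ Ideal.jacobson (⊥ : Ideal (ZLoc p)) := by
  rw [IsLocalRing.jacobson_eq_maximalIdeal _ bot_ne_top, IsLocalRing.mem_maximalIdeal,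
    mem_nonunits_iff]
  intro h
  have := h.map (locToZMod p)
  simp at this

theorem p_smul_simple {G : Type} [Group G] [Finite G] (S : Type) [AddCommGroup S]
    [Module (MonoidAlgebra (ZLoc p) G) S] [IsSimpleModule (MonoidAlgebra (ZLoc p) G) S] (s : S) :
    p • s = 0 := by
  let f : S →ₗ[MonoidAlgebra (ZLoc p) G] S :=
    { toFun := fun s => p • s
      map_add' := fun x y => smul_add _ _ _
      map_smul' := fun c x => smul_comm _ _ _ }
  rcases eq_bot_or_eq_top (LinearMap.range f) with h | h
  · have : f s ∈ LinearMap.range f := ⟨s, rfl⟩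
    rw [h] at this
    exact this
  · exfalso
    let _ : Module (ZLoc p) S := Module.compHom S (algebraMap (ZLoc p) (MonoidAlgebra (ZLoc p) G))
    have : IsScalarTower (ZLoc p) (MonoidAlgebra (ZLoc p) G) S := ⟨fun r c s => by
      change _ = algebraMap (ZLoc p) (MonoidAlgebra (ZLoc p) G) r • c • s
      rw [Algebra.smul_def, mul_smul]⟩
    have hf : Module.Finite (ZLoc p) S := Module.Finite.trans (MonoidAlgebra (ZLoc p) G) S
    have h2 : (⊤ : Submodule (ZLoc p) S) = ⊥ := by
      refine Submodule.eq_bot_of_le_smul_of_le_jacobson_bot (Ideal.span {(p : ZLoc p)}) ⊤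
        hf.fg_top ?_ ?_
      · intro x _
        have : x ∈ LinearMap.range f := h ▸ trivial
        obtain ⟨y, rfl⟩ := this
        have h3 : f y = (p : ZLoc p) • y := (Nat.cast_smul_eq_nsmul _ _ _).symm
        rw [h3]
        exact Submodule.smul_mem_smul (Ideal.mem_span_singleton_self _) trivial
      · rw [Ideal.span_singleton_le_iff_mem]
        exact p_mem_jac p
    have := IsSimpleModule.nontrivial (MonoidAlgebra (ZLoc p) G) S
    obtain ⟨x, hx⟩ := exists_ne (0 : S)
    exact hx ((Submodule.mem_bot (ZLoc p)).1 (h2 ▸ Submodule.mem_top))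

theorem gr_smul_simple {G : Type} [Group G] [Finite G] (S : Type) [AddCommGroup S]
    [Module (MonoidAlgebra (ZLoc p) G) S] [IsSimpleModule (MonoidAlgebra (ZLoc p) G) S]
    (c : MonoidAlgebra (ZLoc p) G) (hc : groupRingToFp p G c = 0) (s : S) : c • s = 0 := by
  obtain ⟨y, rfl⟩ := gr_ker p hc
  rw [Nat.cast_smul_eq_nsmul, nsmul_eq_mul, mul_smul, Nat.cast_smul_eq_nsmul]
  exact p_smul_simple p (G := G) S _

theorem radKer_gr (G : Type) [Group G] [Finite G] : RadKer (groupRingToFp p G) :=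
  fun S _ _ _ c s hc => gr_smul_simple p S c hc s

theorem fixed_simple {G H : Type} [Group G] [Finite G] [Group H] (π : G →* H)
    (hπ : IsPGroup p π.ker) (S : Type) [AddCommGroup S]
    [Module (MonoidAlgebra (ZLoc p) G) S] [IsSimpleModule (MonoidAlgebra (ZLoc p) G) S]
    (g : G) (hg : π g = 1) (s : S) : MonoidAlgebra.of (ZLoc p) G g • s = s := by
  have hnt := IsSimpleModule.nontrivial (MonoidAlgebra (ZLoc p) G) S
  obtain ⟨x, hx⟩ := exists_ne (0 : S)
  have hfin : Finite S := by
    choose z hz using gr_surjective p G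
    refine Finite.of_surjective (fun d => z d • x) fun y => ?_
    obtain ⟨c, rfl⟩ := IsSimpleModule.toSpanSingleton_surjective (MonoidAlgebra (ZLoc p) G) hx y
    refine ⟨groupRingToFp p G c, ?_⟩
    have := gr_smul_simple p S (z (groupRingToFp p G c) - c) (by simp [hz]) x
    rw [sub_smul, sub_eq_zero] at this
    simpa using this
  have hdvd : p ∣ Nat.card S := by
    have : addOrderOf x = p := addOrderOf_eq_prime (p_smul_simple p (G := G) S x) hx
    rw [← this]
    exact addOrderOf_dvd_natCard x
  let _ : MulAction G S := MulAction.compHom S (MonoidAlgebra.of (ZLoc p) G)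
  have hsm : ∀ (g : G) (s : S), g • s = MonoidAlgebra.of (ZLoc p) G g • s := fun _ _ => rfl
  have h0 : (0 : S) ∈ MulAction.fixedPoints π.ker S := fun g => smul_zero
    (MonoidAlgebra.of (ZLoc p) G g)
  obtain ⟨b, hb, hb0⟩ := hπ.exists_fixed_point_of_prime_dvd_card_of_fixed_point S hdvd h0
  let F : Submodule (MonoidAlgebra (ZLoc p) G) S :=
    { carrier := {s | ∀ g, π g = 1 → MonoidAlgebra.of (ZLoc p) G g • s = s}
      add_mem' := fun {x y} hx hy g hg => by rw [smul_add, hx g hg, hy g hg]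
      zero_mem' := fun g _ => smul_zero _
      smul_mem' := fun c s hs g hg => by
        induction c using MonoidAlgebra.induction_linear with
        | zero => simp
        | add a b ha hb => rw [add_smul, smul_add, ha, hb]
        | single h r =>
          have := hs (h⁻¹ * g * h) (by simp [hg])
          conv_rhs => rw [← this]
          rw [smul_smul, smul_smul]
          congr 1
          simp [MonoidAlgebra.single_mul_single, mul_assoc] }
  have hF : F = ⊤ := by
    refine (eq_bot_or_eq_top F).resolve_left fun h => hb0 ?_
    have : b ∈ F := fun g hg => hb ⟨g, hg⟩
    rw [h] at this
    exact this.symm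
  have : s ∈ F := hF ▸ trivial
  exact this g hg

noncomputable def bigRed {G H : Type} [Group G] [Group H] (π : G →* H) :
    MonoidAlgebra (ZLoc p) G →+* MonoidAlgebra (ZMod p) H :=
  (MonoidAlgebra.mapDomainRingHom (ZMod p) π).comp (groupRingToFp p G)

theorem mapDomain_surjective {R G H : Type} [CommRing R] [Group G] [Group H] (π : G →* H)
    (ι : H →* G) (hι : ∀ h, π (ι h) = h) :
    Function.Surjective (MonoidAlgebra.mapDomainRingHom R π) := by
  intro x
  refine ⟨MonoidAlgebra.mapDomainRingHom R ι x, ?_⟩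
  rw [← RingHom.comp_apply, ← MonoidAlgebra.mapDomainRingHom_comp]
  have : π.comp ι = MonoidHom.id H := MonoidHom.ext hι
  rw [this, MonoidAlgebra.mapDomainRingHom_id]; rfl

theorem bigRed_surjective {G H : Type} [Group G] [Group H] (π : G →* H)
    (ι : H →* G) (hι : ∀ h, π (ι h) = h) : Function.Surjective (bigRed p π) :=
  (mapDomain_surjective π ι hι).comp (gr_surjective p G)

theorem radKer_bigRed {G H : Type} [Group G] [Finite G] [Group H] (π : G →* H)
    (ι : H →* G) (hι : ∀ h, π (ι h) = h) (hπ : IsPGroup p π.ker) : RadKer (bigRed p π) := by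
  intro S _ _ _ c s hc
  have h1 : ∀ c : MonoidAlgebra (ZLoc p) G, c • s = MonoidAlgebra.mapDomainRingHom (ZLoc p) ι
      (MonoidAlgebra.mapDomainRingHom (ZLoc p) π c) • s := by
    intro c
    induction c using MonoidAlgebra.induction_linear with
    | zero => simp
    | add a b ha hb => rw [add_smul, map_add, map_add, add_smul, ha, hb]
    | single g r =>
      have h2 := fixed_simple p π hπ S ((ι (π g))⁻¹ * g) (by simp [hι]) s
      simp only [MonoidAlgebra.mapDomainRingHom_apply, MonoidAlgebra.mapDomain_single]
      conv_rhs => rw [← h2, smul_smul]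
      congr 1
      simp [MonoidAlgebra.single_mul_single]
  rw [h1]
  refine gr_smul_simple p S _ ?_ s
  rw [gr_natural, gr_natural]
  have : MonoidAlgebra.mapDomainRingHom (ZMod p) π (groupRingToFp p G c) = 0 := hc
  rw [this, map_zero]

theorem radKer_mapDomain {G H : Type} [Group G] [Finite G] [Group H] (π : G →* H)
    (ι : H →* G) (hι : ∀ h, π (ι h) = h) (hπ : IsPGroup p π.ker) :
    RadKer (MonoidAlgebra.mapDomainRingHom (ZMod p) π) := by
  intro S _ _ _ c s hc
  obtain ⟨c, rfl⟩ := gr_surjective p G c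
  let _ : Module (MonoidAlgebra (ZLoc p) G) S := Module.compHom S (groupRingToFp p G)
  have : IsSimpleModule (MonoidAlgebra (ZLoc p) G) S := by
    rw [isSimpleModule_iff_toSpanSingleton_surjective]
    refine ⟨IsSimpleModule.nontrivial (MonoidAlgebra (ZMod p) G) S, fun x hx y => ?_⟩
    obtain ⟨d, hd⟩ := IsSimpleModule.toSpanSingleton_surjective (MonoidAlgebra (ZMod p) G) hx y
    obtain ⟨c, rfl⟩ := gr_surjective p G d
    exact ⟨c, hd⟩
  exact radKer_bigRed p π ι hι hπ S c s hc

end rings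

section semi
variable {A B : Type} [Ring A] [Ring B] {φ : A →+* B}

theorem mem_ringJacobson_iff [IsSemisimpleRing B] (hφ : RadKer φ) (hs : Function.Surjective φ)
    (x : A) : x ∈ ringJacobson A ↔ φ x = 0 := by
  constructor
  · intro hx
    have hx' : φ x ∈ ringJacobson B := by
      rw [ringJacobson, TwoSidedIdeal.mem_jacobson_iff] at hx ⊢
      intro y
      obtain ⟨y, rfl⟩ := hs y
      obtain ⟨z, hz⟩ := hx y
      refine ⟨φ z, ?_⟩
      rw [TwoSidedIdeal.mem_bot] at hz ⊢
      simpa using congrArg φ hz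
    have h1 : φ x ∈ (⊥ : Ideal B).jacobson := by
      rw [ringJacobson, ← TwoSidedIdeal.mem_asIdeal, TwoSidedIdeal.asIdeal_jacobson] at hx'
      simpa using hx'
    have h2 : φ x ∈ Ring.jacobson B := by
      rw [Ring.jacobson_eq_sInf_isMaximal]
      rw [Ideal.jacobson] at h1
      simpa using h1
    rw [IsSemisimpleRing.jacobson_eq_bot] at h2
    exact h2
  · intro hx
    rw [ringJacobson, ← TwoSidedIdeal.mem_asIdeal, TwoSidedIdeal.asIdeal_jacobson, Ideal.jacobson,
      Submodule.mem_sInf]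
    rintro I ⟨_, hI⟩
    have : IsSimpleModule A (A ⧸ I) := isSimpleModule_iff_isCoatom.2 (Ideal.isMaximal_def.1 hI)
    have := hφ (A ⧸ I) x (Submodule.mkQ I 1) hx
    rw [← map_smul, smul_eq_mul, mul_one] at this
    exact (Submodule.Quotient.mk_eq_zero I).1 this

theorem semiperfect_aux [IsSemisimpleRing B] (hs : Function.Surjective φ) (c : RingCon A)
    (hc : c = RingCon.ker φ) :
    (IsSemisimpleRing c.Quotient ∧ ∀ x : c.Quotient, IsIdempotentElem x →
      ∃ e : A, IsIdempotentElem e ∧ c.mk' e = x) ↔ IdemLift φ := by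
  subst hc
  let E := RingCon.quotientKerEquivOfSurjective φ hs
  have hE : ∀ a, E ((RingCon.ker φ).mk' a) = φ a := fun a => rfl
  constructor
  · rintro ⟨_, h⟩ x hx
    obtain ⟨e, he, h2⟩ := h (E.symm x) (hx.map E.symm)
    exact ⟨e, he, by rw [← hE, h2, E.apply_symm_apply]⟩
  · intro h
    refine ⟨E.symm.isSemisimpleRing, fun x hx => ?_⟩
    obtain ⟨e, he, h2⟩ := h (E x) (hx.map E)
    exact ⟨e, he, E.injective (by rw [hE, h2])⟩

theorem semiperfect_iff [IsSemisimpleRing B] (hφ : RadKer φ) (hs : Function.Surjective φ) :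
    IsSemiperfectRing A ↔ IdemLift φ := by
  refine semiperfect_aux hs _ ?_
  ext x y
  rw [TwoSidedIdeal.rel_iff, mem_ringJacobson_iff hφ hs, map_sub, sub_eq_zero]
  rfl

theorem idemLift_iff (p : ℕ) [Fact p.Prime] {G H : Type} [Group G] [Group H] (π : G →* H)
    (ι : H →* G) (hι : ∀ h, π (ι h) = h) :
    IdemLift (bigRed p π) ↔ IdemLift (groupRingToFp p H) := by
  constructor
  · intro h x hx
    obtain ⟨e, he, rfl⟩ := h x hx
    exact ⟨_, he.map (MonoidAlgebra.mapDomainRingHom (ZLoc p) π), gr_natural p π e⟩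
  · intro h x hx
    obtain ⟨e, he, rfl⟩ := h x hx
    refine ⟨_, he.map (MonoidAlgebra.mapDomainRingHom (ZLoc p) ι), ?_⟩
    rw [bigRed, RingHom.comp_apply, gr_natural, ← RingHom.comp_apply,
      ← MonoidAlgebra.mapDomainRingHom_comp]
    have : π.comp ι = MonoidHom.id H := MonoidHom.ext hι
    rw [this, MonoidAlgebra.mapDomainRingHom_id]; rfl

theorem semisimple_B (p : ℕ) [Fact p.Prime] (H : Type) [Group H] [Finite H]
    (hH : ¬ p ∣ Nat.card H) : IsSemisimpleRing (MonoidAlgebra (ZMod p) H) := by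
  have : NeZero (Nat.card H : ZMod p) := ⟨fun h => hH ((ZMod.natCast_eq_zero_iff _ _).1 h)⟩
  infer_instance

end semi
end SPR

namespace SPR

section fwd

theorem same_refl (D Q : Type) [Ring D] [AddCommGroup Q] [Module D Q] [IsNoetherian D Q]
    [IsArtinian D Q] : SameCompositionFactors D Q Q := by
  obtain ⟨s, h0, h1⟩ := exists_compositionSeries_of_isNoetherian_isArtinian D Q
  have hm : Monotone s.toFun := s.strictMono.monotone
  refine ⟨s.length, s.toFun, s.toFun, Equiv.refl _, hm, hm, h0, h1, h0, h1, fun i => ⟨?_, ⟨?_⟩⟩⟩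
  · exact (covBy_iff_quot_is_simple (hm (Fin.castSucc_lt_succ (i := i)).le)).1 (s.step i)
  · exact LinearEquiv.refl _ _

theorem proj_restrict {R C M : Type} [CommRing R] [Ring C] [Algebra R C] [Module.Free R C]
    [AddCommGroup M] [Module R M] [Module C M] [IsScalarTower R C M] [Module.Projective C M] :
    Module.Projective R M := by
  obtain ⟨s, hs⟩ := Module.projective_def'.1 (inferInstance : Module.Projective C M)
  refine Module.Projective.of_split (M := M →₀ C) (s.restrictScalars R)
    ((Finsupp.linearCombination C (id : M → M)).restrictScalars R) ?_
  ext x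
  exact LinearMap.congr_fun hs x

variable (p : ℕ) [hp : Fact p.Prime]

theorem witness_of_idemLift {G H : Type} [Group G] [Finite G] [Group H] [Finite H] (π : G →* H)
    (ι : H →* G) (hι : ∀ h, π (ι h) = h) (hπ : IsPGroup p π.ker) (hH : ¬ p ∣ Nat.card H)
    (hI : IdemLift (bigRed p π))
    (Q : Type) [AddCommGroup Q] [Module (MonoidAlgebra (ZMod p) G) Q]
    [Module.Finite (MonoidAlgebra (ZMod p) G) Q] [Module.Projective (MonoidAlgebra (ZMod p) G) Q] :
    Nonempty (ReductionWitness p G Q) := by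
  have hss := semisimple_B p H hH
  let ψ := MonoidAlgebra.mapDomainRingHom (ZMod p) π
  let ρ := MonoidAlgebra.mapDomainRingHom (ZMod p) ι
  have hψρ : ∀ b, ψ (ρ b) = b := by
    intro b
    have : π.comp ι = MonoidHom.id H := MonoidHom.ext hι
    change (ψ.comp ρ) b = b
    rw [← MonoidAlgebra.mapDomainRingHom_comp, this, MonoidAlgebra.mapDomainRingHom_id]; rfl
  have hradψ : RadKer ψ := radKer_mapDomain p π ι hι hπ
  have hradΦ : RadKer (bigRed p π) := radKer_bigRed p π ι hι hπ
  let V := Q ⧸ JM ψ Q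
  let _ : Module (MonoidAlgebra (ZMod p) H) V := Module.compHom V ρ
  have hVsm : ∀ (b : MonoidAlgebra (ZMod p) H) (v : V), b • v = ρ b • v := fun _ _ => rfl
  let fQ : Q →ₛₗ[ψ] V :=
    { toFun := (JM ψ Q).mkQ
      map_add' := map_add _
      map_smul' := fun d q => by
        rw [hVsm, ← map_smul, ← sub_eq_zero, ← map_sub, ← sub_smul]
        exact (Submodule.Quotient.mk_eq_zero _).2 (smul_mem_JM (by simp [hψρ]) _) }
  have hfQ : IsLift fQ := ⟨Submodule.mkQ_surjective _, fun m hm =>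
    (Submodule.Quotient.mk_eq_zero _).1 hm⟩
  have : Finite Q := Module.finite_of_finite (MonoidAlgebra (ZMod p) G)
  have : Finite V := Finite.of_surjective _ hfQ.1
  have hV : Liftable (bigRed p π) V := liftable_of_idemLift (bigRed_surjective p π ι hι) hI
  obtain ⟨M, _, _, hMf, hMp, f, hf⟩ := hV
  let red := groupRingToFp p G
  have hreds : Function.Surjective red := gr_surjective p G
  let _ : Module (MonoidAlgebra (ZLoc p) G) Q := Module.compHom Q red
  have hQsm : ∀ (c : MonoidAlgebra (ZLoc p) G) (q : Q), c • q = red c • q := fun _ _ => rfl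
  let fQ' : Q →ₛₗ[bigRed p π] V :=
    { toFun := fQ
      map_add' := map_add _
      map_smul' := fun c q => fQ.map_smulₛₗ (red c) q }
  obtain ⟨g, hg⟩ := exists_lift f fQ' hfQ.1
  have hg' : ∀ x, fQ (g x) = f x := hg
  let N : Submodule (MonoidAlgebra (ZLoc p) G) M := JM red M
  let choo : MonoidAlgebra (ZMod p) G → MonoidAlgebra (ZLoc p) G := fun d => (hreds d).choose
  have hchoo : ∀ d, red (choo d) = d := fun d => (hreds d).choose_spec
  let Mb := M ⧸ N
  let _ : SMul (MonoidAlgebra (ZMod p) G) Mb := ⟨fun d x => choo d • x⟩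
  have hMb : ∀ (c : MonoidAlgebra (ZLoc p) G) (x : Mb), red c • x = c • x := by
    intro c x
    obtain ⟨x, rfl⟩ := N.mkQ_surjective x
    change choo (red c) • N.mkQ x = _
    rw [← map_smul, ← map_smul, ← sub_eq_zero, ← map_sub, ← sub_smul]
    exact (Submodule.Quotient.mk_eq_zero _).2 (smul_mem_JM (by simp [hchoo]) _)
  let _ : Module (MonoidAlgebra (ZMod p) G) Mb := Function.Surjective.moduleLeft red hreds hMb
  have hNg : N ≤ LinearMap.ker g := by
    refine Submodule.span_le.2 ?_
    rintro _ ⟨c, m, hc, rfl⟩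
    have : g (c • m) = red c • g m := map_smul g c m
    simp [this, hc]
  let g0 : Mb →ₗ[MonoidAlgebra (ZLoc p) G] Q := N.liftQ g hNg
  let gb : Mb →ₗ[MonoidAlgebra (ZMod p) G] Q :=
    { toFun := g0
      map_add' := map_add _
      map_smul' := fun d x => by
        obtain ⟨c, rfl⟩ := hreds d
        rw [hMb, map_smul, hQsm]; rfl }
  have hgb : ∀ m, gb (N.mkQ m) = g m := fun m => rfl
  have hgs : Function.Surjective g := by
    have : Function.Surjective gb := by
      rw [← LinearMap.range_eq_top]
      refine nak hradψ _ fun q => ?_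
      obtain ⟨m, hm⟩ := hf.1 (fQ q)
      refine ⟨g m, ⟨N.mkQ m, rfl⟩, hfQ.2 _ ?_⟩
      rw [map_sub, hg', hm, sub_self]
    intro q
    obtain ⟨x, rfl⟩ := this q
    obtain ⟨x, rfl⟩ := N.mkQ_surjective x
    exact ⟨x, rfl⟩
  have hgbs : Function.Surjective gb := fun q => by
    obtain ⟨m, rfl⟩ := hgs q
    exact ⟨N.mkQ m, rfl⟩
  have hMbfin : Module.Finite (MonoidAlgebra (ZMod p) G) Mb := by
    have h1 : Module.Finite (MonoidAlgebra (ZLoc p) G) Mb := inferInstance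
    let F : Mb →ₛₗ[red] Mb :=
      { toFun := id, map_add' := fun _ _ => rfl, map_smul' := fun c x => (hMb c x).symm }
    have hr : RingHomSurjective red := ⟨hreds⟩
    exact Module.Finite.of_surjective F Function.surjective_id
  have hinj : Function.Injective gb := by
    obtain ⟨s, hs⟩ := Module.projective_lifting_property gb LinearMap.id hgbs
    have hs' : ∀ x, gb (s x) = x := fun x => LinearMap.congr_fun hs x
    have hsur : Function.Surjective s := by
      rw [← LinearMap.range_eq_top]
      refine nak hradψ _ fun x => ⟨s (gb x), ⟨_, rfl⟩, ?_⟩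
      have h0 : gb (x - s (gb x)) = 0 := by rw [map_sub, hs', sub_self]
      obtain ⟨m, hm⟩ := N.mkQ_surjective (x - s (gb x))
      rw [← hm] at h0 ⊢
      have h1 : f m = 0 := by rw [← hg', ← hgb, h0, map_zero]
      have h2 : m ∈ JM (bigRed p π) M := hf.2 m h1
      refine Submodule.span_induction (p := fun (m : M) _ => N.mkQ m ∈ JM ψ Mb) ?_ ?_ ?_ ?_ h2
      · rintro _ ⟨c, m, hc, rfl⟩
        rw [map_smul, ← hMb]
        exact smul_mem_JM (φ := ψ) hc _
      · rw [map_zero]; exact Submodule.zero_mem _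
      · intro x y _ _ hx hy
        rw [map_add]; exact Submodule.add_mem _ hx hy
      · intro c x _ hx
        rw [map_smul, ← hMb]; exact Submodule.smul_mem _ _ hx
    intro a b hab
    obtain ⟨a, rfl⟩ := hsur a
    obtain ⟨b, rfl⟩ := hsur b
    rw [hs', hs'] at hab
    rw [hab]
  have hker : ∀ m, g m = 0 → m ∈ N := fun m hm => by
    have : gb (N.mkQ m) = gb 0 := by rw [hgb, hm, map_zero]
    exact (Submodule.Quotient.mk_eq_zero _).1 (hinj this)
  let _ : Module (ZLoc p) M := Module.compHom M (algebraMap (ZLoc p) (MonoidAlgebra (ZLoc p) G))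
  have hrm : ∀ (r : ZLoc p) (m : M), r • m =
    algebraMap (ZLoc p) (MonoidAlgebra (ZLoc p) G) r • m := fun _ _ => rfl
  have : IsScalarTower (ZLoc p) (MonoidAlgebra (ZLoc p) G) M := ⟨fun r c s => by
    rw [hrm, Algebra.smul_def, mul_smul]⟩
  refine ⟨{ M := M, finite := hMf, projectiveLoc := proj_restrict (C := MonoidAlgebra (ZLoc p) G),
            X := Q, f := ?_, surjective := ?_, ker_eq := ?_, same := same_refl _ _ }⟩
  · exact { toFun := g, map_add' := map_add _, map_smul' := fun c x => map_smul g c x }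
  · exact hgs
  · intro m
    change g m = 0 ↔ _
    constructor
    · intro h
      have h1 := hker m h
      refine Submodule.span_induction (p := fun m _ => m ∈ ((Ideal.span {(p : ZLoc p)}) • (⊤ : Submodule (ZLoc p) M))) ?_ (Submodule.zero_mem _)
        (fun x y _ _ hx hy => Submodule.add_mem _ hx hy) ?_ h1
      · rintro _ ⟨c, m, hc, rfl⟩
        obtain ⟨y, rfl⟩ := gr_ker p hc
        rw [smul_assoc]
        exact Submodule.smul_mem_smul (Ideal.mem_span_singleton_self _) trivial
      · intro c x _ hx
        rw [Submodule.ideal_span_singleton_smul, Submodule.mem_smul_pointwise_iff_exists] at hx ⊢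
        obtain ⟨y, -, rfl⟩ := hx
        exact ⟨c • y, trivial, (smul_comm _ _ _)⟩
    · intro h
      rw [Submodule.ideal_span_singleton_smul, Submodule.mem_smul_pointwise_iff_exists] at h
      obtain ⟨y, -, rfl⟩ := h
      have h0 : red (algebraMap (ZLoc p) (MonoidAlgebra (ZLoc p) G) (p : ZLoc p)) = 0 := by
        rw [map_natCast, map_natCast, MonoidAlgebra.natCast_def]; simp
      rw [hrm, map_smul, hQsm, h0, zero_smul]
end fwd
end SPR

namespace SPR

section fm
variable {k : Type} [CommRing k]

/-- twisted function module -/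
def FM (X V : Type) : Type := X → V

instance (X V : Type) [AddCommGroup V] : AddCommGroup (FM X V) :=
  inferInstanceAs (AddCommGroup (X → V))

instance (X V : Type) [Finite X] [Finite V] : Finite (FM X V) :=
  inferInstanceAs (Finite (X → V))

def FM.mk {X V : Type} (f : X → V) : FM X V := f

theorem linear_of_single {Γ M N : Type} [Group Γ] [AddCommGroup M] [AddCommGroup N]
    [Module (MonoidAlgebra k Γ) M] [Module (MonoidAlgebra k Γ) N] (T : M →+ N)
    (h : ∀ (g : Γ) (r : k) m, T (MonoidAlgebra.single g r • m) = MonoidAlgebra.single g r • T m)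
    (c : MonoidAlgebra k Γ) (m : M) : T (c • m) = c • T m := by
  induction c using MonoidAlgebra.induction_linear with
  | zero => simp
  | add a b ha hb => rw [add_smul, map_add, ha, hb, add_smul]
  | single g r => exact h g r m

/-- linear equivalence from an additive equivalence compatible with `single` -/
def mkEquiv {Γ M N : Type} [Group Γ] [AddCommGroup M] [AddCommGroup N]
    [Module (MonoidAlgebra k Γ) M] [Module (MonoidAlgebra k Γ) N] (T : M ≃+ N)
    (h : ∀ (g : Γ) (r : k) m, T (MonoidAlgebra.single g r • m) = MonoidAlgebra.single g r • T m) :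
    M ≃ₗ[MonoidAlgebra k Γ] N :=
  { T with map_smul' := linear_of_single (T : M →+ N) h }

variable {Γ : Type} [Group Γ] {X V : Type} [MulAction Γ X] [AddCommGroup V]
  [Module (MonoidAlgebra k Γ) V]

variable (k Γ X V) in
noncomputable def fmG : Γ →* AddMonoid.End (X → V) where
  toFun g := AddMonoidHom.mk' (fun f x => MonoidAlgebra.of k Γ g • f (g⁻¹ • x))
    (fun a b => by ext x; simp)
  map_one' := by
    ext f x
    change MonoidAlgebra.of k Γ 1 • f ((1 : Γ)⁻¹ • x) = f x
    rw [map_one, one_smul, inv_one, one_smul]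
  map_mul' a b := by
    ext f x
    change MonoidAlgebra.of k Γ (a * b) • f ((a * b)⁻¹ • x) =
      MonoidAlgebra.of k Γ a • MonoidAlgebra.of k Γ b • f (b⁻¹ • a⁻¹ • x)
    rw [map_mul, mul_smul, mul_inv_rev, mul_smul]

variable (k Γ X V) in
noncomputable def fmHom : MonoidAlgebra k Γ →+* AddMonoid.End (X → V) :=
  MonoidAlgebra.liftNCRingHom
    ((Module.toAddMonoidEnd (MonoidAlgebra k Γ) (X → V)).comp (algebraMap k (MonoidAlgebra k Γ)))
    (fmG k Γ X V) (fun r g => by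
      unfold Commute SemiconjBy
      ext f x
      change algebraMap k (MonoidAlgebra k Γ) r • MonoidAlgebra.of k Γ g • f (g⁻¹ • x) =
        MonoidAlgebra.of k Γ g • algebraMap k (MonoidAlgebra k Γ) r • f (g⁻¹ • x)
      rw [smul_smul, smul_smul, Algebra.commutes])

noncomputable instance instModuleFM : Module (MonoidAlgebra k Γ) (FM X V) :=
  Module.compHom (X → V) (fmHom k Γ X V)

theorem FM.single_smul (g : Γ) (r : k) (f : FM X V) (x : X) :
    (MonoidAlgebra.single g r • f : FM X V) x = MonoidAlgebra.single g r • f (g⁻¹ • x) := by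
  change (fmHom k Γ X V (MonoidAlgebra.single g r)) f x = _
  have h1 : fmHom k Γ X V (MonoidAlgebra.single g r) = _ :=
    MonoidAlgebra.liftNCRingHom_single _ _ _ g r
  rw [h1]
  change algebraMap k (MonoidAlgebra k Γ) r • MonoidAlgebra.of k Γ g • f (g⁻¹ • x) = _
  rw [smul_smul]
  congr 1
  simp [MonoidAlgebra.single_mul_single]

theorem FM.add_apply (f f' : FM X V) (x : X) : (f + f') x = f x + f' x := rfl

/-- congruence in the set -/
noncomputable def FM.congrSet {Y : Type} [MulAction Γ Y] (e : X ≃ Y)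
    (he : ∀ (g : Γ) x, e (g • x) = g • e x) : FM Y V ≃ₗ[MonoidAlgebra k Γ] FM X V :=
  mkEquiv { toFun := fun f x => f (e x)
            invFun := fun f y => f (e.symm y)
            left_inv := fun f => funext fun y => congrArg f (e.apply_symm_apply y)
            right_inv := fun f => funext fun x => congrArg f (e.symm_apply_apply x)
            map_add' := fun _ _ => rfl } (fun g r m => by
    funext x
    change (MonoidAlgebra.single g r • m : FM Y V) (e x) = _
    rw [FM.single_smul, FM.single_smul, ← he]; rfl)

noncomputable def FM.curry (Y : Type) [MulAction Γ Y] :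
    FM Y (FM X V) ≃ₗ[MonoidAlgebra k Γ] FM (Y × X) V :=
  mkEquiv { toFun := fun f yx => f yx.1 yx.2
            invFun := fun f y x => f (y, x)
            left_inv := fun f => rfl
            right_inv := fun f => rfl
            map_add' := fun _ _ => rfl } (fun g r m => by
    funext ⟨y, x⟩
    change (MonoidAlgebra.single g r • m : FM Y (FM X V)) y x = _
    rw [FM.single_smul, FM.single_smul, FM.single_smul]; rfl)

/-- trivial action factor -/
noncomputable def FM.trivFactor (F : Type) [MulAction Γ (F × X)]
    (hF : ∀ (g : Γ) (z : F × X), g • z = (z.1, g • z.2)) :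
    FM (F × X) V ≃ₗ[MonoidAlgebra k Γ] (F → FM X V) :=
  mkEquiv { toFun := fun f y x => f (y, x)
            invFun := fun f yx => f yx.1 yx.2
            left_inv := fun f => rfl
            right_inv := fun f => rfl
            map_add' := fun _ _ => rfl } (fun g r m => by
    funext y x
    change (MonoidAlgebra.single g r • m : FM (F × X) V) (y, x) = 
      (MonoidAlgebra.single g r • FM.mk (fun x => m (y, x)) : FM X V) x
    rw [FM.single_smul, FM.single_smul, hF]; rfl)

noncomputable def FM.split (S S' : SubMulAction Γ X) (h : ∀ x, x ∈ S' ↔ x ∉ S) :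
    FM X V ≃ₗ[MonoidAlgebra k Γ] (FM S V × FM S' V) :=
  mkEquiv (AddEquiv.ofBijective (AddMonoidHom.mk' (fun f : FM X V => 
      ((fun x => f x : FM S V), (fun x => f x : FM S' V))) (fun _ _ => rfl)) (by
    classical
    constructor
    · intro f f' hf
      funext x
      by_cases hx : x ∈ S
      · exact congrFun (congrArg Prod.fst hf) ⟨x, hx⟩
      · exact congrFun (congrArg Prod.snd hf) ⟨x, (h x).2 hx⟩
    · rintro ⟨a, b⟩
      refine ⟨fun x => if hx : x ∈ S then a ⟨x, hx⟩ else b ⟨x, (h x).2 hx⟩, ?_⟩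
      refine Prod.ext (funext fun x => ?_) (funext fun x => ?_)
      · exact dif_pos x.2
      · exact dif_neg ((h x).1 x.2))) (fun g r m => by
    refine Prod.ext (funext fun x => ?_) (funext fun x => ?_)
    · change (MonoidAlgebra.single g r • m : FM X V) x = 
        (MonoidAlgebra.single g r • FM.mk (fun x : S => m x) : FM S V) x
      rw [FM.single_smul, FM.single_smul]; rfl
    · change (MonoidAlgebra.single g r • m : FM X V) x = 
        (MonoidAlgebra.single g r • FM.mk (fun x : S' => m x) : FM S' V) x
      rw [FM.single_smul, FM.single_smul]; rfl)

noncomputable def FM.point [Unique X] : FM X V ≃ₗ[MonoidAlgebra k Γ] V :=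
  mkEquiv { toFun := fun f => f default
            invFun := fun v _ => v
            left_inv := fun f => funext fun x => congrArg f (Subsingleton.elim _ _)
            right_inv := fun f => rfl
            map_add' := fun _ _ => rfl } (fun g r m => by
    change (MonoidAlgebra.single g r • m : FM X V) default = _
    rw [FM.single_smul]
    exact congrArg (fun x => MonoidAlgebra.single g r • m x) (Subsingleton.elim _ _))
end fm
end SPR

namespace SPR

section proj
variable {G H : Type} [Group G] [Group H]

/-- the action of `G` on the kernel -/
@[reducible]
def kerAction (π : G →* H) (ι : H →* G) (hι : ∀ h, π (ι h) = h) : MulAction G π.ker where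
  smul g y := ⟨g * y * (ι (π g))⁻¹, by
    have := y.2
    rw [MonoidHom.mem_ker] at this ⊢
    simp [this, hι]⟩
  one_smul y := by
    apply Subtype.ext
    change 1 * (y : G) * (ι (π 1))⁻¹ = y
    simp
  mul_smul a b y := by
    apply Subtype.ext
    change a * b * (y : G) * (ι (π (a * b)))⁻¹ = a * (b * y * (ι (π b))⁻¹) * (ι (π a))⁻¹
    simp [mul_assoc]

theorem fm_projective (p : ℕ) [Fact p.Prime] [Finite G] [Finite H] (π : G →* H)
    (ι : H →* G) (hι : ∀ h, π (ι h) = h) (hH : ¬ p ∣ Nat.card H)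
    (V : Type) [AddCommGroup V] [Module (MonoidAlgebra (ZMod p) H) V]
    [mG : Module (MonoidAlgebra (ZMod p) G) V]
    (hmG : ∀ (g : G) (r : ZMod p) (v : V), (MonoidAlgebra.single g r : MonoidAlgebra (ZMod p) G) • v
      = (MonoidAlgebra.single (π g) r : MonoidAlgebra (ZMod p) H) • v)
    [MulAction G π.ker] (hact : ∀ (g : G) (y : π.ker), ((g • y : π.ker) : G) = g * y * (ι (π g))⁻¹) :
    Module.Projective (MonoidAlgebra (ZMod p) G) (FM π.ker V) := by
  classical
  have hss := semisimple_B p H hH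
  have := Fintype.ofFinite π.ker
  have hVp : Module.Projective (MonoidAlgebra (ZMod p) H) V :=
    Module.projective_of_isSemisimpleRing _ _
  let ρ := MonoidAlgebra.mapDomainRingHom (ZMod p) ι
  have hρ : ∀ h r, ρ (MonoidAlgebra.single h r) = MonoidAlgebra.single (ι h) r := fun h r => by
    simp [ρ]
  let Q := FM π.ker V
  refine Module.Projective.of_lifting_property'' fun q hq => ?_
  change Function.Surjective q at hq
  let F := Q →₀ MonoidAlgebra (ZMod p) G
  let _ : Module (MonoidAlgebra (ZMod p) H) F := Module.compHom F ρ
  let _ : Module (MonoidAlgebra (ZMod p) H) Q := Module.compHom Q ρ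
  have hF : ∀ b (x : F), b • x = ρ b • x := fun _ _ => rfl
  have hQ : ∀ b (x : Q), b • x = ρ b • x := fun _ _ => rfl
  let q' : F →ₗ[MonoidAlgebra (ZMod p) H] Q :=
    { toFun := q, map_add' := map_add q, map_smul' := fun b x => map_smul q (ρ b) x }
  let δ (y : π.ker) : V →+ Q := AddMonoidHom.mk' (fun v => (Pi.single y v : π.ker → V))
    (fun a b => Pi.single_add (f := fun _ : π.ker => V) y a b)
  have hδ : ∀ y v x, δ y v x = if x = y then v else 0 := fun y v x => by
    change (Pi.single y v : π.ker → V) x = _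
    rw [Pi.single_apply]
  have hδs : ∀ (g : G) (r : ZMod p) y v, (MonoidAlgebra.single g r : MonoidAlgebra (ZMod p) G) • δ y v
      = δ (g • y) ((MonoidAlgebra.single (π g) r : MonoidAlgebra (ZMod p) H) • v) := by
    intro g r y v
    funext x
    rw [FM.single_smul, hmG, hδ, hδ]
    simp only [inv_smul_eq_iff]
    split_ifs <;> simp
  let i : V →ₗ[MonoidAlgebra (ZMod p) H] Q :=
    { toFun := δ 1
      map_add' := map_add _
      map_smul' := linear_of_single (δ 1) (fun h r v => by
        rw [hQ, hρ, hδs, hι]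
        congr 1
        rw [show ι h • (1 : π.ker) = 1 from Subtype.ext (by rw [hact]; simp [hι])]) }
  obtain ⟨t, ht⟩ := Module.projective_lifting_property q' i hq
  have ht' : ∀ v, q (t v) = δ 1 v := fun v => LinearMap.congr_fun ht v
  let T : Q →+ F := AddMonoidHom.mk' (fun f => ∑ y : π.ker,
      (MonoidAlgebra.single (y : G) 1 : MonoidAlgebra (ZMod p) G) • t (f y)) (fun a b => by
    rw [← Finset.sum_add_distrib]
    refine Finset.sum_congr rfl fun y _ => ?_
    rw [FM.add_apply, map_add, smul_add])
  have hT : ∀ f, T f = ∑ y : π.ker,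
      (MonoidAlgebra.single (y : G) 1 : MonoidAlgebra (ZMod p) G) • t (f y) := fun _ => rfl
  refine ⟨{ toFun := T, map_add' := map_add T, map_smul' := linear_of_single T ?_ }, ?_⟩
  · intro g r f
    rw [hT, hT, Finset.smul_sum]
    refine (Fintype.sum_equiv (MulAction.toPerm g) _ _ fun z => ?_).symm
    change _ = (MonoidAlgebra.single ((g • z : π.ker) : G) 1 : MonoidAlgebra (ZMod p) G) •
      t ((MonoidAlgebra.single g r • f : Q) (g • z))
    rw [FM.single_smul, inv_smul_smul, hmG, map_smul, hF, hρ, smul_smul, smul_smul, hact,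
      MonoidAlgebra.single_mul_single, MonoidAlgebra.single_mul_single]
    simp
  · apply LinearMap.ext
    intro f
    change q (T f) = f
    rw [hT, map_sum]
    have : ∀ y : π.ker, q ((MonoidAlgebra.single (y : G) 1 : MonoidAlgebra (ZMod p) G) • t (f y))
        = δ y (f y) := by
      intro y
      have hy : π y = 1 := y.2
      rw [map_smul, ht', hδs, hy, show (y : G) • (1 : π.ker) = y from
        Subtype.ext (by rw [hact]; simp [hy])]
      rw [← MonoidAlgebra.one_def, one_smul]
    rw [Finset.sum_congr rfl fun y _ => this y]
    exact Finset.univ_sum_single (M := fun _ : π.ker => V) f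
end proj

section chain
variable {B D : Type} [Ring B] [Ring D] {X Y : Type} [AddCommGroup X] [Module B D] [Module D X] [Module B X]
  [IsScalarTower B D X] [AddCommGroup Y] [Module D Y] [Module B Y]
  [IsScalarTower B D Y] [IsSemisimpleRing B]

theorem chain_step (a b : Submodule D X) (hab : a ≤ b) :
    Nonempty ((a × (b ⧸ a.comap b.subtype)) ≃ₗ[B] b) := by
  let N : Submodule B b := (a.comap b.subtype).restrictScalars B
  obtain ⟨C, hC⟩ := exists_isCompl N
  let e1 : a ≃ₗ[B] N := (Submodule.comapSubtypeEquivOfLe hab).symm.restrictScalars B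
  let e2 : (b ⧸ a.comap b.subtype) ≃ₗ[B] C := 
    (Submodule.quotEquivOfEq N N rfl).trans (Submodule.quotientEquivOfIsCompl N C hC)
  exact ⟨(LinearEquiv.prodCongr e1 e2).trans (Submodule.prodEquivOfIsCompl N C hC)⟩

def finLastEquiv {n : ℕ} (S : Fin (n + 1) → Type) [∀ i, AddCommGroup (S i)]
    [∀ i, Module B (S i)] : (S (Fin.last n) × ∀ i : Fin n, S i.castSucc) ≃ₗ[B] (∀ i, S i) :=
  { Fin.snocEquiv S with
    map_add' := by
      rintro ⟨a, b⟩ ⟨c, d⟩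
      funext i
      refine Fin.lastCases ?_ (fun i => ?_) i <;> simp [Fin.snocEquiv]
    map_smul' := by
      rintro r ⟨a, b⟩
      funext i
      refine Fin.lastCases ?_ (fun i => ?_) i <;> simp [Fin.snocEquiv] }

theorem chain_split {n : ℕ} (c : Fin (n + 1) → Submodule D X) (hc : Monotone c) (h0 : c 0 = ⊥) :
    Nonempty ((∀ j : Fin n, (c j.succ ⧸ (c j.castSucc).comap (c j.succ).subtype)) ≃ₗ[B]
      c (Fin.last n)) := by
  induction n with
  | zero =>
    have : Subsingleton (c (Fin.last 0)) := by
      change Subsingleton (c 0)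
      rw [h0]; infer_instance
    exact ⟨0⟩
  | succ n ih =>
    obtain ⟨e⟩ := ih (fun j => c j.castSucc) (fun i j h => hc (Fin.castSucc_le_castSucc_iff.2 h)) h0
    obtain ⟨f⟩ := chain_step (B := B) (c (Fin.last n).castSucc) (c (Fin.last (n+1))) (hc (Fin.le_last _))
    let g := finLastEquiv (B := B) (fun j : Fin (n + 1) => (c j.succ ⧸ (c j.castSucc).comap (c j.succ).subtype))
    refine ⟨g.symm.trans ((LinearEquiv.prodComm B _ _).trans (LinearEquiv.trans (LinearEquiv.prodCongr e (LinearEquiv.refl B _)) f))⟩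

theorem same_iso (h : SameCompositionFactors D X Y) : Nonempty (X ≃ₗ[B] Y) := by
  obtain ⟨n, c, d, σ, hc, hd, hc0, hc1, hd0, hd1, h⟩ := h
  obtain ⟨e⟩ := chain_split (B := B) c hc hc0
  obtain ⟨f⟩ := chain_split (B := B) d hd hd0
  let t : ∀ i, _ := fun i => ((h i).2.some).restrictScalars B
  let e1 : c (Fin.last n) ≃ₗ[B] X := (LinearEquiv.ofTop _ hc1).restrictScalars B
  let f1 : d (Fin.last n) ≃ₗ[B] Y := (LinearEquiv.ofTop _ hd1).restrictScalars B
  let s := LinearEquiv.piCongrLeft B 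
    (fun j : Fin n => (d j.succ ⧸ (d j.castSucc).comap (d j.succ).subtype)) σ
  exact ⟨((e1.symm.trans e.symm).trans (LinearEquiv.piCongrRight t)).trans (s.trans (f.trans f1))⟩
end chain
end SPR

namespace SPR

section wit
variable (p : ℕ) [hp : Fact p.Prime]

theorem isUnit_card {n : ℕ} (hn : ¬ p ∣ n) : IsUnit (n : ZLoc p) := by
  have h : (n : ℤ) ∈ (Ideal.span {(p : ℤ)}).primeCompl := by
    intro h
    rw [SetLike.mem_coe, Ideal.mem_span_singleton] at h
    exact hn (by exact_mod_cast h)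
  have := IsLocalization.map_units (ZLoc p) (⟨(n : ℤ), h⟩ : (Ideal.span {(p : ℤ)}).primeCompl)
  simpa using this

theorem proj_of_loc {R : Type} [CommRing R] {H : Type} [Group H] [Finite H] (hH : IsUnit (Nat.card H : R))
    {M : Type} [AddCommGroup M] [Module R M] [Module (MonoidAlgebra R H) M]
    [IsScalarTower R (MonoidAlgebra R H) M] [Module.Projective R M] :
    Module.Projective (MonoidAlgebra R H) M := by
  have := Fintype.ofFinite H
  refine Module.Projective.of_lifting_property'' fun q hq => ?_
  obtain ⟨s, hs⟩ := Module.projective_lifting_property (q.restrictScalars R) LinearMap.id hq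
  have hs' : ∀ v, q (s v) = v := fun v => LinearMap.congr_fun hs v
  obtain ⟨u, hu⟩ := hH.exists_left_inv
  refine ⟨u • s.sumOfConjugatesEquivariant H, ?_⟩
  apply LinearMap.ext
  intro v
  rw [LinearMap.comp_apply, LinearMap.smul_apply, LinearMap.sumOfConjugatesEquivariant_apply]
  have : ∀ r : R, ∀ x, q (r • x) = r • q x := fun r x => (q.restrictScalars R).map_smul r x
  rw [this, map_sum]
  have h2 : ∀ g : H, q (s.conjugate g v) = v := by
    intro g
    rw [LinearMap.conjugate_apply, map_smul, hs', smul_smul, MonoidAlgebra.single_mul_single]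
    simp [← MonoidAlgebra.one_def]
  rw [Finset.sum_congr rfl fun g _ => h2 g, Finset.sum_const, Finset.card_univ,
    ← Nat.card_eq_fintype_card, ← Nat.cast_smul_eq_nsmul R, smul_smul, hu, one_smul]
  rfl

theorem witness_liftable {G H : Type} [Group G] [Finite G] [Group H] [Finite H] 
    (ι : H →* G) (hH : ¬ p ∣ Nat.card H)
    {Q : Type} [AddCommGroup Q] [Module (MonoidAlgebra (ZMod p) G) Q]
    (w : ReductionWitness p G Q)
    {W : Type} [AddCommGroup W] [Module (MonoidAlgebra (ZMod p) H) W] (e : Q ≃+ W)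
    (he : ∀ (h : H) (r : ZMod p) (q : Q), 
      e ((MonoidAlgebra.single (ι h) r : MonoidAlgebra (ZMod p) G) • q) =
      (MonoidAlgebra.single h r : MonoidAlgebra (ZMod p) H) • e q) :
    Liftable (groupRingToFp p H) W := by
  have hss := semisimple_B p H hH
  obtain ⟨M, hMf, hMp, X, f, hfs, hfk, same⟩ := w
  let ρ := MonoidAlgebra.mapDomainRingHom (ZMod p) ι
  have hρ : ∀ h r, ρ (MonoidAlgebra.single h r) = MonoidAlgebra.single (ι h) r := fun h r => by
    simp [ρ]
  let μ := MonoidAlgebra.mapDomainRingHom (ZLoc p) ι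
  have hμ : ∀ h r, μ (MonoidAlgebra.single h r) = MonoidAlgebra.single (ι h) r := fun h r => by
    simp [μ]
  let _ : Module (MonoidAlgebra (ZMod p) H) (MonoidAlgebra (ZMod p) G) := Module.compHom _ ρ
  let _ : Module (MonoidAlgebra (ZMod p) H) X := Module.compHom _ ρ
  let _ : Module (MonoidAlgebra (ZMod p) H) Q := Module.compHom _ ρ
  have hX : ∀ (b : MonoidAlgebra (ZMod p) H) (x : X), b • x = ρ b • x := fun _ _ => rfl
  have hQ : ∀ (b : MonoidAlgebra (ZMod p) H) (x : Q), b • x = ρ b • x := fun _ _ => rfl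
  have hD : ∀ (b : MonoidAlgebra (ZMod p) H) (x : MonoidAlgebra (ZMod p) G), b • x = ρ b * x :=
    fun _ _ => rfl
  have : IsScalarTower (MonoidAlgebra (ZMod p) H) (MonoidAlgebra (ZMod p) G) X :=
    ⟨fun b d x => by rw [hD, hX, mul_smul]⟩
  have : IsScalarTower (MonoidAlgebra (ZMod p) H) (MonoidAlgebra (ZMod p) G) Q :=
    ⟨fun b d x => by rw [hD, hQ, mul_smul]⟩
  obtain ⟨e1⟩ := same_iso (B := MonoidAlgebra (ZMod p) H) same
  let e2 : Q ≃ₗ[MonoidAlgebra (ZMod p) H] W := mkEquiv e (fun h r q => by rw [hQ, hρ, he])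
  refine Liftable.congr ?_ (e1.trans e2)
  let _ : Module (MonoidAlgebra (ZLoc p) H) M := Module.compHom _ μ
  have hM : ∀ (b : MonoidAlgebra (ZLoc p) H) (x : M), b • x = μ b • x := fun _ _ => rfl
  have : IsScalarTower (ZLoc p) (MonoidAlgebra (ZLoc p) H) M := ⟨fun r b x => by
    have h1 : μ (r • b) = r • μ b := by
      induction b using MonoidAlgebra.induction_linear with
      | zero => simp
      | add a b ha hb => rw [smul_add, map_add, ha, hb, map_add, smul_add]
      | single g s => rw [MonoidAlgebra.smul_single, hμ, hμ, MonoidAlgebra.smul_single]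
    rw [hM, hM, h1, smul_assoc]⟩
  have : Module.Finite (ZLoc p) M := Module.Finite.trans (MonoidAlgebra (ZLoc p) G) M
  have : Module.Finite (MonoidAlgebra (ZLoc p) H) M := Module.Finite.of_restrictScalars_finite (ZLoc p) _ _
  have := proj_of_loc (isUnit_card p hH) (M := M)
  refine ⟨M, _, _, ‹_›, ‹_›, { toFun := f, map_add' := map_add f, map_smul' := fun c m => ?_ }, hfs, ?_⟩
  · rw [hX, hM, f.map_smulₛₗ, gr_natural]
  · intro m hm
    change f m = 0 at hm
    rw [hfk, Submodule.ideal_span_singleton_smul, Submodule.mem_smul_pointwise_iff_exists] at hm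
    obtain ⟨y, -, rfl⟩ := hm
    rw [← algebraMap_smul (MonoidAlgebra (ZLoc p) H)]
    refine smul_mem_JM ?_ _
    rw [map_natCast, map_natCast, MonoidAlgebra.natCast_def]; simp

/-- conjugation action on kernel -/
@[reducible]
def conjAction {G H : Type} [Group G] [Group H] (π : G →* H) (ι : H →* G) : MulAction H π.ker where
  smul h y := ⟨ι h * y * (ι h)⁻¹, by
    have := y.2
    rw [MonoidHom.mem_ker] at this ⊢
    simp [this]⟩
  one_smul y := by
    apply Subtype.ext
    change ι 1 * (y : G) * (ι 1)⁻¹ = y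
    simp
  mul_smul a b y := by
    apply Subtype.ext
    change ι (a * b) * (y : G) * (ι (a * b))⁻¹ = ι a * (ι b * y * (ι b)⁻¹) * (ι a)⁻¹
    simp [mul_assoc]

theorem fm_liftable {G H : Type} [Group G] [Finite G] [Group H] [Finite H] (π : G →* H)
    (ι : H →* G) (hι : ∀ h, π (ι h) = h) (hH : ¬ p ∣ Nat.card H)
    (h1 : ∀ (Q : Type) [AddCommGroup Q] [Module (MonoidAlgebra (ZMod p) G) Q],
        Module.Finite (MonoidAlgebra (ZMod p) G) Q →
        Module.Projective (MonoidAlgebra (ZMod p) G) Q →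
        Nonempty (ReductionWitness p G Q))
    [MulAction H π.ker] (hact : ∀ (h : H) (y : π.ker), ((h • y : π.ker) : G) = ι h * y * (ι h)⁻¹)
    (V : Type) [AddCommGroup V] [Finite V] [Module (MonoidAlgebra (ZMod p) H) V] :
    Liftable (groupRingToFp p H) (FM π.ker V) := by
  let ψ := MonoidAlgebra.mapDomainRingHom (ZMod p) π
  let _ : Module (MonoidAlgebra (ZMod p) G) V := Module.compHom V ψ
  have hV : ∀ (g : G) (r : ZMod p) (v : V), (MonoidAlgebra.single g r : MonoidAlgebra (ZMod p) G) • v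
      = (MonoidAlgebra.single (π g) r : MonoidAlgebra (ZMod p) H) • v := fun g r v => by
    change ψ (MonoidAlgebra.single g r) • v = _
    simp [ψ]
  let _ := kerAction π ι hι
  have := fm_projective p π ι hι hH V hV (fun g y => rfl)
  obtain ⟨w⟩ := h1 (FM π.ker V) (Module.Finite.of_finite) this
  refine witness_liftable p ι hH w (AddEquiv.refl _) fun h r q => ?_
  funext y
  change (MonoidAlgebra.single (ι h) r • q : FM π.ker V) y = (MonoidAlgebra.single h r • q : FM π.ker V) y
  rw [FM.single_smul, FM.single_smul, hV, hι]
  congr 2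
  apply Subtype.ext
  rw [hact]
  change (ι h)⁻¹ * (y : G) * (ι (π (ι h)⁻¹))⁻¹ = _
  simp [hι]
end wit
end SPR

namespace SPR

section burn
variable {A k Γ : Type} [Ring A] [CommRing k] [Group Γ] [Finite Γ] {φ : A →+* MonoidAlgebra k Γ}
  {p : ℕ} {V : Type} [AddCommGroup V] [Module (MonoidAlgebra k Γ) V]

theorem trans_pg (hφ : RadKer φ) {Y X : Type} [Finite Y] [Finite X] [MulAction Γ Y] [MulAction Γ X]
    (hY : ∀ K : Subgroup Γ, ∃ a : ℕ, Nat.card {y : Y // ∀ h ∈ K, h • y = y} = p ^ a)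
    (hL : PG φ p (FM (Y × X) V)) (m : ℕ)
    (ih : ∀ (X' : Type) [Finite X'] [MulAction Γ X'],
      (∀ x : X', Nat.card (MulAction.stabilizer Γ x) < m) → PG φ p (FM X' V))
    (x0 : X) (hx0 : ∀ x, ∃ h : Γ, h • x0 = x)
    (hm : ∀ x : X, Nat.card (MulAction.stabilizer Γ x) < m + 1) : PG φ p (FM X V) := by
  let K := MulAction.stabilizer Γ x0
  let F := {y : Y // ∀ h ∈ K, h • y = y}
  let Z : SubMulAction Γ (Y × X) :=
    { carrier := {z | ∀ h : Γ, h • z.2 = z.2 → h • z.1 = z.1}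
      smul_mem' := fun c z hz h hh => by
        have h1 := hz (c⁻¹ * h * c) (by
          simp only [Prod.smul_snd] at hh
          rw [mul_smul, mul_smul, hh, inv_smul_smul])
        simp only [Prod.smul_fst]
        rw [mul_smul, mul_smul, inv_smul_eq_iff] at h1
        exact h1 }
  have hZ : ∀ z : Y × X, z ∈ Z ↔ ∀ h : Γ, h • z.2 = z.2 → h • z.1 = z.1 := fun _ => Iff.rfl
  let Z' : SubMulAction Γ (Y × X) :=
    { carrier := {z | z ∉ Z}
      smul_mem' := fun c z hz h => hz (by
        have := Z.smul_mem c⁻¹ h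
        rwa [inv_smul_smul] at this) }
  have hZ' : ∀ z : Y × X, z ∈ Z' ↔ z ∉ Z := fun _ => Iff.rfl
  have e0 := FM.split (k := k) (V := V) Z' Z (fun z => by rw [hZ']; simp)
  have h1 : PG φ p (FM Z' V) := by
    refine ih Z' fun z => ?_
    obtain ⟨⟨y, x⟩, hz⟩ := z
    have hz' := hz
    rw [hZ', hZ] at hz'
    push Not at hz'
    obtain ⟨h, hh, hh'⟩ := hz'
    refine lt_of_lt_of_le ?_ (Nat.lt_succ_iff.1 (hm x))
    change Set.ncard (MulAction.stabilizer Γ (⟨(y, x), hz⟩ : Z') : Set Γ) < Set.ncard (MulAction.stabilizer Γ x : Set Γ)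
    refine Set.ncard_lt_ncard ⟨?_, ?_⟩ (Set.toFinite _)
    · intro g hg
      have : (g • (⟨(y, x), hz⟩ : Z')) = ⟨(y, x), hz⟩ := hg
      exact congrArg (fun z : Z' => z.1.2) this
    · intro hs
      have : (h • (⟨(y, x), hz⟩ : Z')) = ⟨(y, x), hz⟩ := hs hh
      exact hh' (congrArg (fun z : Z' => z.1.1) this)
  have h2 : PG φ p (FM Z V) := PG.cancel hφ (hL.congr e0) h1
  let _ : MulAction Γ (F × X) :=
    { smul := fun g z => (z.1, g • z.2)
      one_smul := fun z => Prod.ext rfl (one_smul _ _)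
      mul_smul := fun a b z => Prod.ext rfl (mul_smul _ _ _) }
  have hsm : ∀ (g : Γ) (z : F × X), g • z = (z.1, g • z.2) := fun _ _ => rfl
  choose t ht using hx0
  let e : F × X → Z := fun z => ⟨(t z.2 • (z.1 : Y), z.2), fun h hh => by
    have hk := z.1.2 ((t z.2)⁻¹ * h * t z.2) (by
      rw [MulAction.mem_stabilizer_iff, mul_smul, mul_smul, ht, hh, inv_smul_eq_iff, ht])
    rw [mul_smul, mul_smul, inv_smul_eq_iff] at hk
    exact hk⟩
  have he : Function.Bijective e := by
    constructor
    · rintro ⟨y, x⟩ ⟨y', x'⟩ h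
      have hx : x = x' := congrArg (fun z : Z => z.1.2) h
      subst hx
      have hy : t x • (y : Y) = t x • (y' : Y) := congrArg (fun z : Z => z.1.1) h
      rw [Subtype.ext (smul_left_cancel _ hy)]
    · rintro ⟨⟨y, x⟩, hz⟩
      refine ⟨(⟨(t x)⁻¹ • y, fun h hh => ?_⟩, x), ?_⟩
      · have := hz (t x * h * (t x)⁻¹) (by
          change _ • x = x
          have h3 : (t x)⁻¹ • x = x0 := by rw [inv_smul_eq_iff, ht]
          rw [mul_smul, mul_smul, h3, MulAction.mem_stabilizer_iff.1 hh, ht])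
        change _ • y = y at this
        rw [mul_smul, mul_smul] at this
        exact eq_inv_smul_iff.2 this
      · apply Subtype.ext
        exact Prod.ext (smul_inv_smul _ _) rfl
  have e1 : FM Z V ≃ₗ[MonoidAlgebra k Γ] FM (F × X) V := FM.congrSet (Equiv.ofBijective e he) (by
    rintro g ⟨y, x⟩
    apply Subtype.ext
    refine Prod.ext ?_ rfl
    change t (g • x) • (y : Y) = g • t x • (y : Y)
    have := y.2 ((g * t x)⁻¹ * t (g • x)) (by
      rw [MulAction.mem_stabilizer_iff, mul_smul, ht, inv_smul_eq_iff, mul_smul, ht])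
    rw [mul_smul, inv_smul_eq_iff, mul_smul] at this
    exact this)
  obtain ⟨a, ha⟩ := hY K
  exact PG.of_pow (ι := F) ha (h2.congr (e1.trans (FM.trivFactor F hsm)))

theorem burnside (hφ : RadKer φ) {Y : Type} [Finite Y] [MulAction Γ Y]
    (hY : ∀ K : Subgroup Γ, ∃ a : ℕ, Nat.card {y : Y // ∀ h ∈ K, h • y = y} = p ^ a)
    (hL : ∀ (X : Type) [Finite X] [MulAction Γ X], PG φ p (FM (Y × X) V)) (m : ℕ) :
    ∀ (X : Type) [Finite X] [MulAction Γ X],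
      (∀ x : X, Nat.card (MulAction.stabilizer Γ x) < m) → PG φ p (FM X V) := by
  have hemp : ∀ (X : Type) [MulAction Γ X], IsEmpty X → PG φ p (FM X V) := fun X _ _ => by
    have : Subsingleton (FM X V) := inferInstanceAs (Subsingleton (X → V))
    exact Liftable.pg .of_subsingleton
  induction m with
  | zero => exact fun X _ _ h => hemp X ⟨fun x => absurd (h x) (by simp)⟩
  | succ m ih =>
    have key : ∀ n : ℕ, ∀ (X : Type) [Finite X] [MulAction Γ X], Nat.card X = n →
      (∀ x : X, Nat.card (MulAction.stabilizer Γ x) < m + 1) → PG φ p (FM X V) := by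
      intro n
      induction n using Nat.strong_induction_on with
      | _ n ihn =>
        intro X _ _ hn hX
        rcases isEmpty_or_nonempty X with h | ⟨⟨x0⟩⟩
        · exact hemp X h
        let O : SubMulAction Γ X :=
          { carrier := MulAction.orbit Γ x0
            smul_mem' := fun c x hx => by
              obtain ⟨g, rfl⟩ := hx
              exact ⟨c * g, mul_smul _ _ _⟩ }
        have hO : ∀ x, x ∈ O ↔ x ∈ MulAction.orbit Γ x0 := fun _ => Iff.rfl
        let O' : SubMulAction Γ X :=
          { carrier := {x | x ∉ O}
            smul_mem' := fun c x hx h => hx (by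
              have := O.smul_mem c⁻¹ h
              rwa [inv_smul_smul] at this) }
        have e := (FM.split (k := k) (V := V) O O' (fun x => Iff.rfl)).symm
        refine PG.congr (PG.prod ?_ ?_) e
        · refine trans_pg hφ hY (hL O) m (fun X' _ _ h => ih X' h) ⟨x0, MulAction.mem_orbit_self _⟩ ?_ ?_
          · rintro ⟨_, ⟨h, rfl⟩⟩
            exact ⟨h, rfl⟩
          · intro x
            rw [SubMulAction.stabilizer_of_subMul]
            exact hX x
        · refine ihn _ ?_ O' rfl ?_
          · rw [← hn]
            exact Finite.card_subtype_lt (p := fun x => x ∈ O') (x := x0)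
              (fun h => h (MulAction.mem_orbit_self x0))
          · intro x
            rw [SubMulAction.stabilizer_of_subMul]
            exact hX x
    exact fun X _ _ => key _ X rfl

theorem burnside_pt (hφ : RadKer φ) {Y : Type} [Finite Y] [MulAction Γ Y]
    (hY : ∀ K : Subgroup Γ, ∃ a : ℕ, Nat.card {y : Y // ∀ h ∈ K, h • y = y} = p ^ a)
    (hL : ∀ (X : Type) [Finite X] [MulAction Γ X], PG φ p (FM (Y × X) V)) : PG φ p V := by
  let _ : MulAction Γ Unit :=
    { smul := fun _ x => x, one_smul := fun _ => rfl, mul_smul := fun _ _ _ => rfl }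
  have := burnside hφ hY hL (Nat.card Γ + 1) Unit (fun x => 
    Nat.lt_succ_iff.2 (Subgroup.card_le_card_group _))
  exact this.congr (FM.point (k := k) (Γ := Γ) (X := Unit) (V := V))
end burn
end SPR

namespace SPR

section fin
variable (p : ℕ) [hp : Fact p.Prime]

theorem sep_gr (H : Type) [Group H] [Finite H] : Sep (groupRingToFp p H) := by
  intro M N _ _ _ _ _ _ _ _ h θ
  let m : N →ₗ[MonoidAlgebra (ZLoc p) H] N := p • LinearMap.id
  have hm : ∀ x, m x = p • x := fun _ => rfl
  have hJ : ∀ x ∈ JM (groupRingToFp p H) N, x ∈ LinearMap.range m := by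
    intro x hx
    have : JM (groupRingToFp p H) N ≤ LinearMap.range m := by
      refine Submodule.span_le.2 ?_
      rintro _ ⟨c, n, hc, rfl⟩
      obtain ⟨y, rfl⟩ := gr_ker p hc
      refine ⟨y • n, ?_⟩
      rw [hm, Nat.cast_smul_eq_nsmul, smul_assoc]
    exact this hx
  have step : ∀ θ : M →ₗ[MonoidAlgebra (ZLoc p) H] N, ∃ θ' : M →ₗ[MonoidAlgebra (ZLoc p) H] N,
      ∀ x, θ x = p • θ' x := by
    intro θ
    obtain ⟨θ', h'⟩ := Module.projective_lifting_property m.rangeRestrict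
      (θ.codRestrict (LinearMap.range m) fun x => hJ _ (h θ x)) m.surjective_rangeRestrict
    refine ⟨θ', fun x => ?_⟩
    have := congrArg Subtype.val (LinearMap.congr_fun h' x)
    exact this.symm
  have stepn : ∀ n : ℕ, ∃ θ' : M →ₗ[MonoidAlgebra (ZLoc p) H] N, ∀ x, θ x = p ^ n • θ' x := by
    intro n
    induction n with
    | zero => exact ⟨θ, fun x => by simp⟩
    | succ n ih =>
      obtain ⟨θ', h'⟩ := ih
      obtain ⟨θ'', h''⟩ := step θ'
      exact ⟨θ'', fun x => by rw [h', h'', smul_smul, pow_succ]⟩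
  let _ : Module (ZLoc p) N := Module.compHom N (algebraMap (ZLoc p) (MonoidAlgebra (ZLoc p) H))
  have hrm : ∀ (r : ZLoc p) (m : N), r • m =
    algebraMap (ZLoc p) (MonoidAlgebra (ZLoc p) H) r • m := fun _ _ => rfl
  have : IsScalarTower (ZLoc p) (MonoidAlgebra (ZLoc p) H) N := ⟨fun r c s => by
    rw [hrm, Algebra.smul_def, mul_smul]⟩
  have : Module.Finite (ZLoc p) N := Module.Finite.trans (MonoidAlgebra (ZLoc p) H) N
  have : IsNoetherianRing (ZLoc p) :=
    IsLocalization.isNoetherianRing (Ideal.span {(p : ℤ)}).primeCompl _ inferInstance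
  have key := Ideal.iInf_pow_smul_eq_bot_of_isLocalRing (M := N) (Ideal.span {(p : ZLoc p)}) (by
    intro h
    have h1 : (1 : ZLoc p) ∈ Ideal.span {(p : ZLoc p)} := h ▸ trivial
    obtain ⟨c, hc⟩ := Ideal.mem_span_singleton.1 h1
    have := congrArg (locToZMod p) hc
    simp at this)
  ext x
  rw [LinearMap.zero_apply, ← Submodule.mem_bot (ZLoc p), ← key, Submodule.mem_iInf]
  intro n
  obtain ⟨θ', h'⟩ := stepn n
  rw [h', ← Nat.cast_smul_eq_nsmul (ZLoc p), Nat.cast_pow]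
  exact Submodule.smul_mem_smul (Ideal.pow_mem_pow (Ideal.mem_span_singleton_self _) n) trivial

theorem not_dvd_mult {H : Type} [Group H] [Finite H] (hH : ¬ p ∣ Nat.card H)
    {ε : MonoidAlgebra (ZMod p) H} (hε0 : ε ≠ 0) (hε : IsIdempotentElem ε)
    (hc : ∀ b, ε * b = b * ε) (S : Submodule (MonoidAlgebra (ZMod p) H) (MonoidAlgebra (ZMod p) H))
    {n : ℕ} (e : Submodule.span (MonoidAlgebra (ZMod p) H) {ε} ≃ₗ[MonoidAlgebra (ZMod p) H] (Fin n → S)) :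
    ¬ p ∣ n := by
  classical
  intro hn
  have := Fintype.ofFinite H
  let B := MonoidAlgebra (ZMod p) H
  let I := Submodule.span B {ε}
  let u (j : Fin n) : S →ₗ[B] B := I.subtype ∘ₗ e.symm.toLinearMap ∘ₗ LinearMap.single B (fun _ => S) j
  let w : B →ₗ[B] I := (LinearMap.toSpanSingleton B B ε).codRestrict I
    (fun b => Submodule.mem_span_singleton.2 ⟨b, rfl⟩)
  let v (j : Fin n) : B →ₗ[B] S := LinearMap.proj j ∘ₗ e.toLinearMap ∘ₗ w
  have hw : ∀ x : I, w x = x := by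
    rintro ⟨x, hx⟩
    obtain ⟨a, rfl⟩ := Submodule.mem_span_singleton.1 hx
    apply Subtype.ext
    change (a * ε) * ε = a * ε
    rw [mul_assoc, hε.eq]
  have hvu : ∀ j x, v j (u j x) = x := by
    intro j x
    change e (w ((e.symm (Pi.single j x) : I) : B)) j = x
    rw [hw, LinearEquiv.apply_symm_apply, Pi.single_eq_same]
  have huv : ∀ b, ∑ j, u j (v j b) = b * ε := by
    intro b
    change ∑ j, I.subtype (e.symm (Pi.single j (e (w b) j))) = b * ε
    rw [← map_sum, ← map_sum, Finset.univ_sum_single, LinearEquiv.symm_apply_apply]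
    rfl
  apply hε0
  have main : ∀ h : H, ε.coeff h⁻¹ = 0 := by
    intro h
    let T : B →ₗ[ZMod p] B := ∑ j, (Algebra.lsmul (ZMod p) (ZMod p) B (MonoidAlgebra.single h 1 : B) ∘ₗ
      (u j).restrictScalars (ZMod p)) ∘ₗ (v j).restrictScalars (ZMod p)
    have hT : ∀ b, T b = MonoidAlgebra.single h 1 * (b * ε) := by
      intro b
      rw [LinearMap.sum_apply, ← huv, Finset.mul_sum]; rfl
    have t1 : LinearMap.trace (ZMod p) B T = 0 := by
      rw [map_sum]
      have : ∀ j : Fin n, LinearMap.trace (ZMod p) B ((Algebra.lsmul (ZMod p) (ZMod p) B (MonoidAlgebra.single h 1 : B) ∘ₗ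
        (u j).restrictScalars (ZMod p)) ∘ₗ (v j).restrictScalars (ZMod p)) =
          LinearMap.trace (ZMod p) S (Algebra.lsmul (ZMod p) (ZMod p) S (MonoidAlgebra.single h 1 : B)) := by
        intro j
        rw [LinearMap.trace_comp_comm']
        congr 1
        ext1 x
        change v j ((MonoidAlgebra.single h 1 : B) • u j x) = (MonoidAlgebra.single h 1 : B) • x
        rw [map_smul, hvu]
      rw [Finset.sum_congr rfl fun j _ => this j, Finset.sum_const, Finset.card_univ, Fintype.card_fin,
        ← Nat.cast_smul_eq_nsmul (ZMod p), (ZMod.natCast_eq_zero_iff _ _).2 hn, zero_smul]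
    rw [LinearMap.trace_eq_matrix_trace (ZMod p) (MonoidAlgebra.basis H (ZMod p)), Matrix.trace] at t1
    have h2 : ∀ g : H, (LinearMap.toMatrix (MonoidAlgebra.basis H (ZMod p)) (MonoidAlgebra.basis H (ZMod p)) T).diag g
        = ε.coeff h⁻¹ := by
      intro g
      rw [Matrix.diag_apply, LinearMap.toMatrix_apply, hT]
      rw [show MonoidAlgebra.basis H (ZMod p) g = MonoidAlgebra.single g 1 by simp]
      rw [← hc, ← mul_assoc]
      change (MonoidAlgebra.single h 1 * ε * MonoidAlgebra.single g 1 : B).coeff g = _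
      rw [MonoidAlgebra.coeff_mul_single_apply, MonoidAlgebra.coeff_single_mul_apply]
      simp
    rw [Finset.sum_congr rfl fun g _ => h2 g, Finset.sum_const, Finset.card_univ,
      ← Nat.cast_smul_eq_nsmul (ZMod p), smul_eq_mul, mul_eq_zero, ← Nat.card_eq_fintype_card] at t1
    exact t1.resolve_left fun h => hH ((ZMod.natCast_eq_zero_iff _ _).1 h)
  ext h
  simpa using main h⁻¹

theorem central_of_twosided {B : Type} [Ring B] [IsSemisimpleRing B] {ε : B} (hε : IsIdempotentElem ε)
    (h : ∀ b, ε * b ∈ Submodule.span B {ε}) (b : B) : ε * b = b * ε := by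
  have h1 : ∀ b, ε * b * ε = ε * b := fun b => by
    obtain ⟨a, ha⟩ := Submodule.mem_span_singleton.1 (h b)
    rw [← ha, smul_eq_mul, mul_assoc, hε.eq]
  have h2 : ∀ b, (1 - ε) * (b * ε) = 0 := by
    intro b
    obtain ⟨f, hf, hfs⟩ := IsSemisimpleRing.ideal_eq_span_idempotent (Submodule.span B {(1 - ε) * (b * ε)})
    have hf' : f ∈ Submodule.span B {(1 - ε) * (b * ε)} := hfs ▸ Submodule.mem_span_singleton_self f
    obtain ⟨c, hc⟩ := Submodule.mem_span_singleton.1 hf'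
    have h3 : ∀ x, ε * x * (1 - ε) = 0 := fun x => by rw [mul_sub, mul_one, h1, sub_self]
    have h0 : f = 0 := by
      rw [← hf.eq, ← hc, smul_eq_mul]
      calc c * ((1 - ε) * (b * ε)) * (c * ((1 - ε) * (b * ε)))
          = c * (1 - ε) * b * (ε * c * (1 - ε)) * (b * ε) := by noncomm_ring
        _ = 0 := by rw [h3]; simp
    have h4 : (1 - ε) * (b * ε) ∈ Ideal.span {f} := hfs ▸ Submodule.mem_span_singleton_self _
    rw [h0] at h4
    simpa using h4
  have h5 := h2 b
  rw [sub_mul, one_mul, sub_eq_zero, ← mul_assoc, h1] at h5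
  exact h5.symm

theorem simple_liftable {H : Type} [Group H] [Finite H] (hH : ¬ p ∣ Nat.card H)
    (hPG : ∀ (V : Type) [AddCommGroup V] [Finite V] [Module (MonoidAlgebra (ZMod p) H) V],
      PG (groupRingToFp p H) p V)
    (S : Type) [AddCommGroup S] [Module (MonoidAlgebra (ZMod p) H) S]
    [IsSimpleModule (MonoidAlgebra (ZMod p) H) S] : Liftable (groupRingToFp p H) S := by
  have hss := semisimple_B p H hH
  obtain ⟨S', ⟨eS⟩⟩ := IsSemisimpleRing.exists_linearEquiv_ideal_of_isSimpleModule (MonoidAlgebra (ZMod p) H) S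
  refine Liftable.congr ?_ eS.symm
  have : IsSimpleModule (MonoidAlgebra (ZMod p) H) S' := .congr eS.symm
  have hlt := bot_lt_isotypicComponent (R := MonoidAlgebra (ZMod p) H) S'
  have htwo := Submodule.IsFullyInvariant.isotypicComponent (MonoidAlgebra (ZMod p) H) (MonoidAlgebra (ZMod p) H) S'
  obtain ⟨n, ⟨e⟩⟩ := (IsIsotypicOfType.isotypicComponent (MonoidAlgebra (ZMod p) H) (MonoidAlgebra (ZMod p) H) S').linearEquiv_fun
  obtain ⟨ε, hε, hI⟩ := IsSemisimpleRing.ideal_eq_span_idempotent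
    (isotypicComponent (MonoidAlgebra (ZMod p) H) (MonoidAlgebra (ZMod p) H) S')
  rw [hI] at hlt htwo e
  have hε0 : ε ≠ 0 := by
    rintro rfl
    simp at hlt
  have htwo' := isFullyInvariant_iff_isTwoSided.1 htwo
  have hc := central_of_twosided hε (fun b => htwo'.mul_mem_of_left b (Submodule.mem_span_singleton_self ε))
  have hn := not_dvd_mult p hH hε0 hε hc S' e
  obtain ⟨N, hN1, hN2⟩ := exists_common (hPG (Submodule.span (MonoidAlgebra (ZMod p) H) {ε}))
    (hPG (Submodule.span (MonoidAlgebra (ZMod p) H) {1 - ε}))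
  have h1 := central_lift (radKer_gr p H) (gr_surjective p H) (sep_gr p H) hε hc
    (pow_pos hp.out.pos N) hN1 hN2
  obtain ⟨K, hK⟩ := hPG S'
  exact Liftable.coprime (radKer_gr p H) (h1.congr e) hK
    (((Nat.Prime.coprime_iff_not_dvd hp.out).2 hn).symm.pow_right K)

theorem idemLift_of_one {G H : Type} [Group G] [Finite G] [Group H] [Finite H] (π : G →* H)
    (ι : H →* G) (hι : ∀ h, π (ι h) = h) (hπ : IsPGroup p π.ker) (hH : ¬ p ∣ Nat.card H)
    (h1 : ∀ (Q : Type) [AddCommGroup Q] [Module (MonoidAlgebra (ZMod p) G) Q],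
        Module.Finite (MonoidAlgebra (ZMod p) G) Q →
        Module.Projective (MonoidAlgebra (ZMod p) G) Q →
        Nonempty (ReductionWitness p G Q)) : IdemLift (groupRingToFp p H) := by
  have hss := semisimple_B p H hH
  let _ := conjAction π ι
  have hact : ∀ (h : H) (y : π.ker), ((h • y : π.ker) : G) = ι h * y * (ι h)⁻¹ := fun _ _ => rfl
  have hY : ∀ K : Subgroup H, ∃ a : ℕ, Nat.card {y : π.ker // ∀ h ∈ K, h • y = y} = p ^ a := by
    intro K
    let F : Subgroup π.ker :=
      { carrier := {y | ∀ h ∈ K, h • y = y}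
        one_mem' := fun h _ => Subtype.ext (by rw [hact]; simp)
        mul_mem' := fun {a b} ha hb h hh => Subtype.ext (by
          have h1 := congrArg Subtype.val (ha h hh)
          have h2 := congrArg Subtype.val (hb h hh)
          rw [hact] at h1 h2 ⊢
          rw [Subgroup.coe_mul]
          conv_rhs => rw [← h1, ← h2]
          group)
        inv_mem' := fun {a} ha h hh => Subtype.ext (by
          have h1 := congrArg Subtype.val (ha h hh)
          rw [hact] at h1 ⊢
          rw [Subgroup.coe_inv]
          conv_rhs => rw [← h1]
          group) }
    have := IsPGroup.iff_card.1 (hπ.to_subgroup F)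
    exact this
  have hPG : ∀ (V : Type) [AddCommGroup V] [Finite V] [Module (MonoidAlgebra (ZMod p) H) V],
      PG (groupRingToFp p H) p V := by
    intro V _ _ _
    refine burnside_pt (radKer_gr p H) hY fun X _ _ => Liftable.pg ?_
    exact (fm_liftable p π ι hι hH h1 hact (FM X V)).congr (FM.curry π.ker)
  refine idemLift_of_liftable (radKer_gr p H) (gr_surjective p H) fun x _ => ?_
  exact liftable_of_simple fun S _ _ _ => simple_liftable p hH hPG S
end fin
end SPR

/-- Suppose the finite group `G` is the semidirect product `G = P ⋊ H` of a normal Sylow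
`p`-subgroup `P` and a subgroup `H` of order prime to `p`. Then the following are
equivalent: (1) `α(G⁺(ℚG)) ⊇ β(K⁺(𝔽_pG))`, i.e. every finitely generated projective
`𝔽_pG`-module is, up to composition factors, the reduction mod `p` of a `ℤ_(p)G`-lattice;
(2) `ℤ_(p)G` is semiperfect; (3) `ℤ_(p)H` is semiperfect. -/
theorem isSemiperfectRing_iff_of_sylow_semidirect
    (p : ℕ) [Fact p.Prime] (G : Type) [Group G] [Finite G]
    (P H : Subgroup G) (hPnormal : P.Normal) (hP : IsPGroup p P)
    (hH : ¬ p ∣ Nat.card H) (hmeet : P ⊓ H = ⊥) (hjoin : P ⊔ H = ⊤) :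
    ((∀ (Q : Type) [AddCommGroup Q] [Module (MonoidAlgebra (ZMod p) G) Q],
        Module.Finite (MonoidAlgebra (ZMod p) G) Q →
        Module.Projective (MonoidAlgebra (ZMod p) G) Q →
        Nonempty (ReductionWitness p G Q)) ↔
      IsSemiperfectRing (MonoidAlgebra (ZLoc p) G)) ∧
    (IsSemiperfectRing (MonoidAlgebra (ZLoc p) G) ↔
      IsSemiperfectRing (MonoidAlgebra (ZLoc p) H)) := by
  have hs : ∀ g : G, ∃ h : H, g * (h : G)⁻¹ ∈ P := by
    intro g
    have hg : g ∈ P ⊔ H := hjoin ▸ trivial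
    obtain ⟨a, ha, h, hh, rfl⟩ := Subgroup.mem_sup_of_normal_left.1 hg
    exact ⟨⟨h, hh⟩, by simpa using ha⟩
  have huniq : ∀ (g : G) (h h' : H), g * (h : G)⁻¹ ∈ P → g * (h' : G)⁻¹ ∈ P → h = h' := by
    intro g h h' h1 h2
    have h3 : (h : G) * (h' : G)⁻¹ ∈ P ⊓ H := by
      refine ⟨?_, H.mul_mem h.2 (H.inv_mem h'.2)⟩
      have := P.mul_mem (P.inv_mem h1) h2
      have h4 : (g * (h : G)⁻¹)⁻¹ * (g * (h' : G)⁻¹) = (h : G) * (h' : G)⁻¹ := by group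
      rwa [h4] at this
    rw [hmeet, Subgroup.mem_bot, mul_inv_eq_one] at h3
    exact Subtype.ext h3
  choose f hf using hs
  let π : G →* H := MonoidHom.mk' f (fun a b => by
    refine huniq (a * b) _ _ (hf _) ?_
    have h1 := P.mul_mem (hf a) (hPnormal.conj_mem _ (hf b) (f a))
    have h2 : a * (f a : G)⁻¹ * ((f a : G) * (b * (f b : G)⁻¹) * (f a : G)⁻¹) =
      a * b * ((f a * f b : H) : G)⁻¹ := by rw [Subgroup.coe_mul]; group
    rwa [h2] at h1)
  have hπf : ∀ g, π g = f g := fun _ => rfl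
  have hι : ∀ h, π (H.subtype h) = h := fun h => huniq h _ _ (hf _) (by simp)
  have hker : π.ker ≤ P := by
    intro g hg
    have h1 := hf g
    rw [← hπf, MonoidHom.mem_ker.1 hg] at h1
    simpa using h1
  have hπ : IsPGroup p π.ker := hP.to_le hker
  have hss := SPR.semisimple_B p H hH
  have e3 : IsSemiperfectRing (MonoidAlgebra (ZLoc p) H) ↔ SPR.IdemLift (groupRingToFp p H) :=
    SPR.semiperfect_iff (SPR.radKer_gr p H) (SPR.gr_surjective p H)
  have e2 : IsSemiperfectRing (MonoidAlgebra (ZLoc p) G) ↔ SPR.IdemLift (SPR.bigRed p π) :=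
    SPR.semiperfect_iff (SPR.radKer_bigRed p π H.subtype hι hπ)
      (SPR.bigRed_surjective p π H.subtype hι)
  have e23 := SPR.idemLift_iff p π H.subtype hι
  refine ⟨⟨fun h1 => ?_, fun h2 => ?_⟩, ?_⟩
  · exact e2.2 (e23.2 (SPR.idemLift_of_one p π H.subtype hι hπ hH h1))
  · intro Q _ _ hQ1 hQ2
    exact SPR.witness_of_idemLift p π H.subtype hι hπ hH (e2.1 h2) Q
  · rw [e2, e3, e23]
end

section
/- Let A₅ be the alternating group on 5 letters and let p be a prime. Then ℤ_(p)A₅ is semiperfect if and only if p ∈ {2, 3, 5} or p ≡ 2 or 3 (mod 5). In particular, ℤ_(2)A₅, ℤ_(3)A₅ and ℤ_(5)A₅ are semiperfect, while for p ∤ 60 the ring ℤ_(p)A₅ is semiperfect exactly when p is not a square modulo 5. -/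
section PartA

theorem mem_ringJacobson {R : Type*} [Ring R] {x : R} :
    x ∈ ringJacobson R ↔ x ∈ Ring.jacobson R := by
  rw [ringJacobson, ← TwoSidedIdeal.mem_asIdeal, TwoSidedIdeal.asIdeal_jacobson, ← Ideal.jacobson_bot]
  have : TwoSidedIdeal.asIdeal (⊥ : TwoSidedIdeal R) = ⊥ := by
    ext; simp
  rw [this]

theorem mk_eq_iff {R : Type*} [Ring R] {x y : R} :
    (ringJacobson R).ringCon.mk' x = (ringJacobson R).ringCon.mk' y ↔ x - y ∈ Ring.jacobson R := by
  rw [← mem_ringJacobson, ← TwoSidedIdeal.rel_iff]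
  exact RingCon.eq _

/-- in a finite algebra over a local ring, the maximal ideal is in the Jacobson radical -/
theorem smul_mem_jac {R A : Type*} [CommRing R] [IsLocalRing R] [Ring A] [Algebra R A]
    [Module.Finite R A] {t : R} (ht : t ∈ IsLocalRing.maximalIdeal R) (x : A) :
    t • x ∈ Ring.jacobson A := by
  rw [← Ideal.jacobson_bot, Ideal.mem_jacobson_iff]
  intro y
  have h : (⊤ : Submodule R A) ≤ LinearMap.range (LinearMap.mulRight R (1 + t • (y * x))) := by
    apply Submodule.le_of_le_smul_of_le_jacobson_bot (I := IsLocalRing.maximalIdeal R)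
      Module.Finite.fg_top (IsLocalRing.maximalIdeal_le_jacobson _)
    intro z _
    have : z = z * (1 + t • (y * x)) + t • (-(z * (y * x))) := by
      simp [mul_add]
    rw [this]
    exact Submodule.add_mem_sup ⟨z, rfl⟩ (Submodule.smul_mem_smul ht trivial)
  obtain ⟨z, hz⟩ := h (x := 1) trivial
  refine ⟨z, ?_⟩
  simp only [LinearMap.mulRight_apply] at hz
  rw [Ideal.mem_bot, ← hz]
  simp only [mul_add, mul_smul_comm, mul_one, mul_assoc]
  abel

theorem artin_quot {R : Type*} [CommRing R] [IsDomain R] [IsDiscreteValuationRing R]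
    {t : R} (ht : t ≠ 0) : IsArtinianRing (R ⧸ Ideal.span {t}) := by
  have : Ring.KrullDimLE 1 R := inferInstance
  rw [isArtinianRing_iff_krullDimLE_zero, Ring.KrullDimLE, Order.krullDimLE_iff,
    ← ENat.WithBot.add_le_add_one_right_iff, Nat.cast_zero, zero_add]
  exact (ringKrullDim_quotient_succ_le_of_nonZeroDivisor (mem_nonZeroDivisors_of_ne_zero ht)).trans
    (Order.KrullDimLE.krullDim_le)

theorem artin_alg {R : Type*} [CommRing R] [IsArtinianRing R] (G : Type*) [Group G] [Finite G] :
    IsArtinianRing (MonoidAlgebra R G) :=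
  IsArtinianRing.of_finite R _

theorem ker_map {R : Type*} [CommRing R] (G : Type*) [Group G] [Finite G] (t : R)
    (x : MonoidAlgebra R G)
    (hx : MonoidAlgebra.mapRingHom G (Ideal.Quotient.mk (Ideal.span {t})) x = 0) :
    ∃ y, x = t • y := by
  have h : ∀ g, ∃ r, x.coeff g = t * r := by
    intro g
    have := congrArg (fun z => z.coeff g) hx
    simp only [MonoidAlgebra.coeff_mapRingHom, MonoidAlgebra.coeff_zero, Finsupp.zero_apply] at this
    rw [Ideal.Quotient.eq_zero_iff_mem, Ideal.mem_span_singleton] at this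
    exact this
  choose r hr using h
  refine ⟨MonoidAlgebra.ofCoeff (Finsupp.equivFunOnFinite.symm r), ?_⟩
  ext g
  simp [hr]

theorem map_surj {R S : Type*} [CommRing R] [CommRing S] (G : Type*) [Group G] [Finite G]
    (f : R →+* S) (hf : Function.Surjective f) :
    Function.Surjective (MonoidAlgebra.mapRingHom G f) := by
  intro x
  choose r hr using hf
  refine ⟨MonoidAlgebra.ofCoeff (Finsupp.equivFunOnFinite.symm fun g => r (x.coeff g)), ?_⟩
  ext g
  simp [hr]

/-- elements of the radical are nilpotent modulo any nonzero `t` -/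
theorem jac_nilp {R : Type*} [CommRing R] [IsDomain R] [IsDiscreteValuationRing R]
    (G : Type*) [Group G] [Finite G] {t : R} (ht : t ≠ 0) {y : MonoidAlgebra R G}
    (hy : y ∈ Ring.jacobson (MonoidAlgebra R G)) : ∃ k : ℕ, ∃ z, y ^ k = t • z := by
  have := artin_quot ht
  have := artin_alg (R := R ⧸ Ideal.span {t}) G
  set f := MonoidAlgebra.mapRingHom G (Ideal.Quotient.mk (Ideal.span {t})) with hf
  have hs : Function.Surjective f := map_surj G _ Ideal.Quotient.mk_surjective
  have : RingHomSurjective f := ⟨hs⟩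
  have h1 : f y ∈ Ring.jacobson _ := Ring.le_comap_jacobson f hy
  obtain ⟨k, hk⟩ := IsArtinianRing.isNilpotent_jacobson_bot
    (R := MonoidAlgebra (R ⧸ Ideal.span {t}) G)
  rw [Ideal.jacobson_bot] at hk
  refine ⟨k, ker_map G t _ ?_⟩
  rw [map_pow, ← Ideal.mem_bot]
  have := Ideal.pow_mem_pow h1 k
  rw [hk] at this
  exact this

theorem semisimple_quot {R : Type*} [CommRing R] [IsDomain R] [IsDiscreteValuationRing R]
    (G : Type*) [Group G] [Finite G] :
    IsSemisimpleRing (ringJacobson (MonoidAlgebra R G)).ringCon.Quotient := by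
  obtain ⟨t, ht⟩ := IsDiscreteValuationRing.exists_irreducible R
  have := artin_quot ht.ne_zero
  have := artin_alg (R := R ⧸ Ideal.span {t}) G
  set f := MonoidAlgebra.mapRingHom G (Ideal.Quotient.mk (Ideal.span {t})) with hf
  have hs : Function.Surjective f := map_surj G _ Ideal.Quotient.mk_surjective
  set g := (ringJacobson (MonoidAlgebra R G)).ringCon.mk' with hg
  have hgs : Function.Surjective g := RingCon.mk'_surjective _
  have hk : RingHom.ker f ≤ RingHom.ker g := by
    intro x hx
    obtain ⟨y, rfl⟩ := ker_map G t x hx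
    rw [RingHom.mem_ker, ← map_zero g, hg, mk_eq_iff, sub_zero]
    refine smul_mem_jac ?_ _
    rw [IsLocalRing.mem_maximalIdeal]
    exact ht.not_isUnit
  let l := RingHom.liftOfSurjective f hs ⟨g, hk⟩
  have hl : Function.Surjective l := by
    intro q
    obtain ⟨x, rfl⟩ := hgs q
    exact ⟨f x, RingHom.liftOfRightInverse_comp_apply _ _ _ ⟨g, hk⟩ x⟩
  have : IsArtinianRing (ringJacobson (MonoidAlgebra R G)).ringCon.Quotient :=
    hl.isArtinianRing
  rw [IsArtinianRing.isSemisimpleRing_iff_jacobson, eq_bot_iff]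
  have : RingHomSurjective g := ⟨hgs⟩
  have hle : RingHom.ker g ≤ Ring.jacobson (MonoidAlgebra R G) := by
    intro x hx
    rw [RingHom.mem_ker, ← map_zero g, hg, mk_eq_iff, sub_zero] at hx
    exact hx
  rw [← Ring.map_jacobson_of_ker_le hle]
  rintro _ ⟨x, hx, rfl⟩
  rw [Ideal.mem_bot]
  change g x = 0
  rw [← map_zero g, hg, mk_eq_iff, sub_zero]
  exact hx

/-- refine an idempotent mod `J` to one mod `t` -/
theorem refine_idem {R : Type*} [CommRing R] [IsDomain R] [IsDiscreteValuationRing R]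
    (G : Type*) [Group G] [Finite G] {t : R} (ht : t ≠ 0) {b : MonoidAlgebra R G}
    (hb : b * b - b ∈ Ring.jacobson (MonoidAlgebra R G)) :
    ∃ a, a - b ∈ Ring.jacobson (MonoidAlgebra R G) ∧ ∃ z, a * a - a = t • z := by
  obtain ⟨k, z, hz⟩ := jac_nilp G ht hb
  set P : Polynomial ℤ := 1 - (1 - Polynomial.X ^ (k+1)) ^ (k+1) with hP
  have h0 : (Polynomial.X : Polynomial ℤ) ^ (k+1) ∣ P := by
    have := sub_dvd_pow_sub_pow (1 : Polynomial ℤ) (1 - Polynomial.X ^ (k+1)) (k+1)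
    simpa [hP] using this
  have h1 : (Polynomial.X - 1 : Polynomial ℤ) ^ (k+1) ∣ 1 - P := by
    have h : (Polynomial.X - 1 : Polynomial ℤ) ∣ 1 - Polynomial.X ^ (k+1) := by
      have := sub_dvd_pow_sub_pow (Polynomial.X : Polynomial ℤ) 1 (k+1)
      rw [one_pow] at this
      rw [← dvd_neg]; simpa using this
    simpa [hP] using pow_dvd_pow_of_dvd h (k+1)
  have h2 : (Polynomial.X * Polynomial.X - Polynomial.X : Polynomial ℤ) ∣ P - Polynomial.X := by
    have e : (Polynomial.X * Polynomial.X - Polynomial.X : Polynomial ℤ)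
      = Polynomial.X * (Polynomial.X - 1) := by ring
    rw [e]
    apply IsCoprime.mul_dvd
    · exact ⟨1, -1, by ring⟩
    · exact dvd_sub ((dvd_pow_self _ (by simp)).trans h0) dvd_rfl
    · have := ((dvd_pow_self (Polynomial.X - 1 : Polynomial ℤ) (Nat.succ_ne_zero k)).trans h1)
      have h3 : P - Polynomial.X = -(1 - P) - (Polynomial.X - 1) := by ring
      rw [h3]
      exact dvd_sub (dvd_neg.mpr this) dvd_rfl
  have h3 : (Polynomial.X * Polynomial.X - Polynomial.X : Polynomial ℤ) ^ k ∣ P * P - P := by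
    have e : (Polynomial.X * Polynomial.X - Polynomial.X : Polynomial ℤ)
      = Polynomial.X * (Polynomial.X - 1) := by ring
    have e2 : P * P - P = -(P * (1 - P)) := by ring
    rw [e, e2, mul_pow, dvd_neg]
    exact mul_dvd_mul ((pow_dvd_pow _ k.le_succ).trans h0) ((pow_dvd_pow _ k.le_succ).trans h1)
  obtain ⟨c, hc⟩ := h2
  obtain ⟨d, hd⟩ := h3
  refine ⟨Polynomial.aeval b P, ?_, z * Polynomial.aeval b d, ?_⟩
  · have := congrArg (Polynomial.aeval b) hc
    rw [mul_comm] at this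
    simp only [map_sub, map_mul, Polynomial.aeval_X] at this
    rw [this]
    exact Ideal.mul_mem_left _ _ hb
  · have := congrArg (Polynomial.aeval b) hd
    simp only [map_sub, map_mul, Polynomial.aeval_X, map_pow] at this
    rw [this, hz, smul_mul_assoc]

/-- A ring in which idempotents mod `t` lift. -/
def LiftsMod {R : Type*} [CommRing R] (t : R) (A : Type*) [Ring A] [Algebra R A] : Prop :=
  ∀ a : A, (∃ z, a * a - a = t • z) → ∃ b : A, b * b = b ∧ ∃ z, b - a = t • z

theorem semiperfect_of_order {R : Type*} [CommRing R] [IsDomain R] [IsDiscreteValuationRing R]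
    (G : Type*) [Group G] [Finite G] (Γ : Type*) [Ring Γ] [Algebra R Γ]
    (ρ : MonoidAlgebra R G →ₐ[R] Γ) (hρ : Function.Injective ρ) (N : R) (hN0 : N ≠ 0)
    (hN : ∀ c : Γ, ∃ d, ρ d = N • c)
    (hl : ∀ t ∈ IsLocalRing.maximalIdeal R, LiftsMod t Γ) :
    IsSemiperfectRing (MonoidAlgebra R G) := by
  refine ⟨semisimple_quot G, fun x hx => ?_⟩
  obtain ⟨q, hq⟩ := IsDiscreteValuationRing.exists_irreducible R
  have hqm : q ∈ IsLocalRing.maximalIdeal R := by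
    rw [IsLocalRing.mem_maximalIdeal]
    exact hq.not_isUnit
  obtain ⟨b, rfl⟩ := RingCon.mk'_surjective _ x
  have hb : b * b - b ∈ Ring.jacobson (MonoidAlgebra R G) := by
    rw [← mk_eq_iff, map_mul]
    exact hx
  obtain ⟨a, ha, z, hz⟩ := refine_idem G (mul_ne_zero hq.ne_zero hN0) hb
  obtain ⟨e, he, w, hw⟩ := hl (q * N) (Ideal.mul_mem_right _ _ hqm) (ρ a) ⟨ρ z, by
    rw [← map_smul, ← hz, map_sub, map_mul]⟩
  obtain ⟨d, hd⟩ := hN w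
  have he' : e = ρ (a + q • d) := by
    rw [map_add, map_smul, hd, smul_smul, ← hw]; abel
  refine ⟨a + q • d, ?_, ?_⟩
  · apply hρ
    rw [map_mul, ← he', he]
  · rw [mk_eq_iff]
    have : a + q • d - b = (a - b) + q • d := by abel
    rw [this]
    exact add_mem ha (smul_mem_jac hqm d)

end PartA

section PartB

theorem idem_factor {S : Type*} [CommRing S] [IsLocalRing S] {n : ℕ}
    (E : Matrix (Fin n) (Fin n) S) (hE : E * E = E) :
    ∃ (r : ℕ) (P : Matrix (Fin n) (Fin r) S) (Q : Matrix (Fin r) (Fin n) S),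
      P * Q = E ∧ Q * P = 1 := by
  set f := Matrix.toLin' E with hf
  have hff : f ∘ₗ f = f := by rw [hf, ← Matrix.toLin'_mul, hE]
  have hfx : ∀ x, f (f x) = f x := fun x => LinearMap.congr_fun hff x
  have hsp : f.rangeRestrict ∘ₗ (LinearMap.range f).subtype = LinearMap.id := by
    ext ⟨_, y, rfl⟩ : 1
    apply Subtype.ext
    exact hfx y
  have : Module.Projective S (LinearMap.range f) := Module.Projective.of_split _ _ hsp
  have : Module.Free S (LinearMap.range f) := Module.free_of_flat_of_isLocalRing
  let b := Module.finBasis S (LinearMap.range f)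
  refine ⟨_, LinearMap.toMatrix' ((LinearMap.range f).subtype ∘ₗ b.equivFun.symm.toLinearMap),
    LinearMap.toMatrix' (b.equivFun.toLinearMap ∘ₗ f.rangeRestrict), ?_, ?_⟩
  · rw [← LinearMap.toMatrix'_comp]
    have : ((LinearMap.range f).subtype ∘ₗ b.equivFun.symm.toLinearMap) ∘ₗ
        (b.equivFun.toLinearMap ∘ₗ f.rangeRestrict) = f := by
      ext x : 2
      simp
    rw [this, hf, LinearMap.toMatrix'_toLin']
  · rw [← LinearMap.toMatrix'_comp]
    have : (b.equivFun.toLinearMap ∘ₗ f.rangeRestrict) ∘ₗ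
       ((LinearMap.range f).subtype ∘ₗ b.equivFun.symm.toLinearMap) = LinearMap.id := by
      rw [LinearMap.comp_assoc, ← LinearMap.comp_assoc _ _ f.rangeRestrict, hsp]
      ext x : 2
      simp
    rw [this, LinearMap.toMatrix'_id]

theorem liftsMod_matrix {R : Type*} [CommRing R] (t : R) {S : Type*} [CommRing S] [IsLocalRing S]
    [Algebra R S] (ht : algebraMap R S t ∈ IsLocalRing.maximalIdeal S) (n : ℕ) :
    LiftsMod t (Matrix (Fin n) (Fin n) S) := by
  intro a ⟨z, hz⟩
  set I : Ideal S := Ideal.span {algebraMap R S t} with hI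
  have hIm : I ≤ IsLocalRing.maximalIdeal S := by
    rw [hI, Ideal.span_singleton_le_iff_mem]; exact ht
  have : Nontrivial (S ⧸ I) := Ideal.Quotient.nontrivial_iff.mpr
    (ne_top_of_le_ne_top (IsLocalRing.maximalIdeal.isMaximal S).ne_top hIm)
  have : IsLocalRing (S ⧸ I) := IsLocalRing.of_surjective' (Ideal.Quotient.mk I)
    Ideal.Quotient.mk_surjective
  have key : ∀ (M : Matrix (Fin n) (Fin n) S), M.map (Ideal.Quotient.mk I) = 0 →
      ∃ w, M = t • w := by
    intro M hM
    have h : ∀ i j, ∃ r, M i j = algebraMap R S t * r := by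
      intro i j
      have := congrFun (congrFun hM i) j
      rw [Matrix.map_apply, Matrix.zero_apply, Ideal.Quotient.eq_zero_iff_mem,
        Ideal.mem_span_singleton] at this
      exact this
    choose w hw using h
    refine ⟨Matrix.of w, ?_⟩
    ext i j
    rw [hw, Matrix.smul_apply, Algebra.smul_def]; rfl
  have hmt : (t • z).map (Ideal.Quotient.mk I) = 0 := by
    ext i j
    rw [Matrix.map_apply, Matrix.zero_apply, Ideal.Quotient.eq_zero_iff_mem,
        Ideal.mem_span_singleton, Matrix.smul_apply, Algebra.smul_def]
    exact dvd_mul_right _ _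
  have hE : a.map (Ideal.Quotient.mk I) * a.map (Ideal.Quotient.mk I)
      = a.map (Ideal.Quotient.mk I) := by
    rw [← Matrix.map_mul, ← sub_eq_zero, ← Matrix.map_sub _ (map_sub _), hz, hmt]
  obtain ⟨r, P, Q, hPQ, hQP⟩ := idem_factor _ hE
  obtain ⟨P', hP'⟩ : ∃ P' : Matrix (Fin n) (Fin r) S, P'.map (Ideal.Quotient.mk I) = P := by
    choose s hs using Ideal.Quotient.mk_surjective (I := I)
    exact ⟨P.map s, by ext i j; simp [hs]⟩
  obtain ⟨Q', hQ'⟩ : ∃ Q' : Matrix (Fin r) (Fin n) S, Q'.map (Ideal.Quotient.mk I) = Q := by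
    choose s hs using Ideal.Quotient.mk_surjective (I := I)
    exact ⟨Q.map s, by ext i j; simp [hs]⟩
  set U := Q' * P' with hU
  have hUm : U.map (Ideal.Quotient.mk I) = 1 := by
    rw [hU, Matrix.map_mul, hP', hQ', hQP]
  have hdet : IsUnit U.det := by
    have h1 : Ideal.Quotient.mk I U.det = 1 := by
      rw [RingHom.map_det, RingHom.mapMatrix_apply, hUm, Matrix.det_one]
    by_contra hc
    have h2 : U.det ∈ IsLocalRing.maximalIdeal S := (IsLocalRing.mem_maximalIdeal _).mpr hc
    have h3 : U.det - 1 ∈ I := by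
      rw [← Ideal.Quotient.eq_zero_iff_mem, map_sub, h1, map_one, sub_self]
    have h4 := sub_mem h2 (hIm h3)
    rw [sub_sub_cancel] at h4
    exact (Ideal.ne_top_iff_one _).mp (IsLocalRing.maximalIdeal.isMaximal S).ne_top h4
  have hi1 : U⁻¹ * U = 1 := Matrix.nonsing_inv_mul _ hdet
  have hinv : (U⁻¹).map (Ideal.Quotient.mk I) = 1 := by
    have := congrArg (fun M => M.map (Ideal.Quotient.mk I)) hi1
    simp only [Matrix.map_mul, hUm, mul_one] at this
    rw [this]; simp
  refine ⟨P' * U⁻¹ * Q', ?_, key _ ?_⟩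
  · calc P' * U⁻¹ * Q' * (P' * U⁻¹ * Q') = P' * (U⁻¹ * (Q' * P')) * U⁻¹ * Q' := by
          simp only [Matrix.mul_assoc]
      _ = _ := by rw [← hU, hi1, Matrix.mul_one]
  · rw [Matrix.map_sub _ (map_sub _), Matrix.map_mul, Matrix.map_mul, hinv, hP', hQ',
      Matrix.mul_one, hPQ, sub_self]

theorem liftsMod_prod {R : Type*} [CommRing R] (t : R) {A B : Type*} [Ring A] [Ring B]
    [Algebra R A] [Algebra R B] (hA : LiftsMod t A) (hB : LiftsMod t B) : LiftsMod t (A × B) := by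
  rintro ⟨a, b⟩ ⟨⟨z, w⟩, h⟩
  obtain ⟨h1, h2⟩ := Prod.ext_iff.mp h
  obtain ⟨a', ha', x, hx⟩ := hA a ⟨z, h1⟩
  obtain ⟨b', hb', y, hy⟩ := hB b ⟨w, h2⟩
  exact ⟨(a', b'), Prod.ext ha' hb', (x, y), Prod.ext hx hy⟩

/-- an injective map between free modules of the same rank has cokernel killed by a nonzero `N` -/
theorem exists_smul_range {R : Type*} [CommRing R] [IsDomain R] {M M' : Type*} [AddCommGroup M]
    [AddCommGroup M'] [Module R M] [Module R M'] [Module.Free R M] [Module.Free R M']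
    [Module.Finite R M] [Module.Finite R M'] (h : Module.finrank R M = Module.finrank R M')
    (f : M →ₗ[R] M') (hf : Function.Injective f) :
    ∃ N : R, N ≠ 0 ∧ ∀ c, ∃ d, f d = N • c := by
  let b := Module.finBasis R M
  let b' := (Module.finBasis R M').reindex (finCongr h.symm)
  let A := LinearMap.toMatrix b b' f
  refine ⟨A.det, ?_, fun c => ?_⟩
  · intro h0
    obtain ⟨v, hv, hv0⟩ := Matrix.exists_mulVec_eq_zero_iff.mpr h0
    apply hv
    have : f (b.equivFun.symm v) = 0 := by
      apply b'.equivFun.injective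
      rw [map_zero, ← hv0]
      have := LinearMap.toMatrix_mulVec_repr b b' f (b.equivFun.symm v)
      simp only [Module.Basis.equivFun_apply]
      rw [← this]
      congr 1
      exact b.equivFun.apply_symm_apply v
    rw [← map_zero f] at this
    exact b.equivFun.symm.map_eq_zero_iff.mp (hf this)
  · refine ⟨b.equivFun.symm (A.adjugate.mulVec (b'.equivFun c)), ?_⟩
    apply b'.equivFun.injective
    have := LinearMap.toMatrix_mulVec_repr b b' f
      (b.equivFun.symm (A.adjugate.mulVec (b'.equivFun c)))
    simp only [Module.Basis.equivFun_apply] at this ⊢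
    rw [← this]
    have h2 : (b.repr (b.equivFun.symm (A.adjugate.mulVec (b'.repr c))) : _ → R)
        = A.adjugate.mulVec (b'.repr c) := b.equivFun.apply_symm_apply _
    rw [h2, Matrix.mulVec_mulVec, Matrix.mul_adjugate, map_smul, Matrix.smul_mulVec,
      Matrix.one_mulVec]
    rfl

end PartB

section PartC

instance zloc_dvr (p : ℕ) [hp : Fact p.Prime] : IsDiscreteValuationRing (ZLoc p) :=
  IsLocalization.AtPrime.isDiscreteValuationRing_of_dedekind_domain ℤ
    (P := Ideal.span {(p : ℤ)}) (by simp [hp.out.ne_zero]) _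

theorem mem_primeCompl_iff (p : ℕ) [hp : Fact p.Prime] (a : ℤ) :
    a ∈ (Ideal.span {(p : ℤ)}).primeCompl ↔ (a : ZMod p) ≠ 0 := by
  rw [Ideal.mem_primeCompl_iff, Ideal.mem_span_singleton, Ne, ZMod.intCast_zmod_eq_zero_iff_dvd]

/-- reduction mod `p` -/
noncomputable def redP (p : ℕ) [hp : Fact p.Prime] : ZLoc p →+* ZMod p :=
  IsLocalization.lift (M := (Ideal.span {(p : ℤ)}).primeCompl) (g := Int.castRingHom (ZMod p))
    (fun y => by
      have := (mem_primeCompl_iff p y.1).mp y.2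
      exact isUnit_iff_ne_zero.mpr this)

theorem isUnit_iff_redP (p : ℕ) [hp : Fact p.Prime] (x : ZLoc p) : IsUnit x ↔ redP p x ≠ 0 := by
  constructor
  · intro h; exact (h.map (redP p)).ne_zero
  · intro h
    obtain ⟨a, s, rfl⟩ := IsLocalization.exists_mk'_eq (Ideal.span {(p : ℤ)}).primeCompl x
    have h1 : (a : ZMod p) ≠ 0 := by
      intro h0
      apply h
      rw [redP, IsLocalization.lift_mk'_spec]
      simpa using h0
    rw [IsLocalization.AtPrime.isUnit_mk'_iff (ZLoc p) (Ideal.span {(p : ℤ)})]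
    exact (mem_primeCompl_iff p a).mpr h1

theorem mem_max_iff (p : ℕ) [hp : Fact p.Prime] (x : ZLoc p) :
    x ∈ IsLocalRing.maximalIdeal (ZLoc p) ↔ redP p x = 0 := by
  rw [IsLocalRing.mem_maximalIdeal, mem_nonunits_iff, isUnit_iff_redP, not_not]

theorem redP_surj (p : ℕ) [hp : Fact p.Prime] : Function.Surjective (redP p) := by
  intro x
  obtain ⟨a, rfl⟩ := ZMod.intCast_surjective x
  exact ⟨a, map_intCast _ _⟩

theorem nf5 : ∀ a b c d : ZMod 5, a * a + a * b - b * b = 0 → c * c + c * d - d * d = 0 →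
    (a + c) * (a + c) + (a + c) * (b + d) - (b + d) * (b + d) = 0 := by decide

theorem nf2 : ∀ a b c d : ZMod 2, a * a + a * b - b * b = 0 → c * c + c * d - d * d = 0 →
    (a + c) * (a + c) + (a + c) * (b + d) - (b + d) * (b + d) = 0 := by decide

theorem nsq2 : ¬ IsSquare ((2 : ℕ) : ZMod 5) := by decide

theorem nsq3 : ¬ IsSquare ((3 : ℕ) : ZMod 5) := by decide

/-- 5 is not a nonzero square mod `p` -/
theorem norm_form_add (p : ℕ) [hp : Fact p.Prime] (h : p = 5 ∨ p % 5 = 2 ∨ p % 5 = 3)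
    (a b c d : ZMod p) (h1 : a * a + a * b - b * b = 0) (h2 : c * c + c * d - d * d = 0) :
    (a + c) * (a + c) + (a + c) * (b + d) - (b + d) * (b + d) = 0 := by
  rcases h with rfl | h
  · exact nf5 a b c d h1 h2
  by_cases hp2 : p = 2
  · subst hp2
    exact nf2 a b c d h1 h2
  have key : ∀ a b : ZMod p, a * a + a * b - b * b = 0 → a = 0 ∧ b = 0 := by
    intro a b hab
    by_cases hb : b = 0
    · subst hb; simpa using hab
    exfalso
    have hsq : IsSquare ((5 : ℕ) : ZMod p) := by
      refine ⟨(2 * a + b) / b, ?_⟩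
      field_simp
      push_cast
      linear_combination (-4) * hab
    have := Fact.mk Nat.prime_five
    rw [ZMod.exists_sq_eq_prime_iff_of_mod_four_eq_one (p := 5) (q := p) (by norm_num) hp2 |>.symm]
      at hsq
    rw [← ZMod.natCast_mod] at hsq
    rcases h with h | h <;> rw [h] at hsq
    · exact nsq2 hsq
    · exact nsq3 hsq
  obtain ⟨rfl, rfl⟩ := key a b h1
  obtain ⟨rfl, rfl⟩ := key c d h2
  simp

theorem quad_unit_iff (p : ℕ) [hp : Fact p.Prime] (x : QuadraticAlgebra (ZLoc p) 1 1) :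
    x ∈ nonunits _ ↔ redP p x.re * redP p x.re + redP p x.re * redP p x.im
      - redP p x.im * redP p x.im = 0 := by
  rw [mem_nonunits_iff, QuadraticAlgebra.isUnit_iff_norm_isUnit, isUnit_iff_redP, not_not,
    QuadraticAlgebra.norm_def]
  simp

theorem quad_local (p : ℕ) [hp : Fact p.Prime] (h : p = 5 ∨ p % 5 = 2 ∨ p % 5 = 3) :
    IsLocalRing (QuadraticAlgebra (ZLoc p) 1 1) := by
  apply IsLocalRing.of_nonunits_add
  intro a b ha hb
  rw [quad_unit_iff] at *
  simp only [QuadraticAlgebra.re_add, QuadraticAlgebra.im_add, map_add]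
  exact norm_form_add p h _ _ _ _ ha hb

theorem quad_max (p : ℕ) [hp : Fact p.Prime] [IsLocalRing (QuadraticAlgebra (ZLoc p) 1 1)]
    (t : ZLoc p) (ht : t ∈ IsLocalRing.maximalIdeal (ZLoc p)) :
    algebraMap (ZLoc p) (QuadraticAlgebra (ZLoc p) 1 1) t ∈ IsLocalRing.maximalIdeal _ := by
  rw [IsLocalRing.mem_maximalIdeal, quad_unit_iff]
  rw [mem_max_iff] at ht
  simp [ht]

end PartC

section PartE1

/-- the alternating group of degree five -/
abbrev A5 : Type := alternatingGroup (Fin 5)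

def cA : A5 := ⟨⟨![1,2,3,4,0], ![4,0,1,2,3], by decide, by decide⟩,
  Equiv.Perm.mem_alternatingGroup.mpr (by decide +kernel)⟩
def dA : A5 := ⟨⟨![1,2,0,3,4], ![2,0,1,3,4], by decide, by decide⟩,
  Equiv.Perm.mem_alternatingGroup.mpr (by decide +kernel)⟩
def vA0 : A5 := ⟨⟨![3,2,1,0,4], ![3,2,1,0,4], by decide, by decide⟩,
  Equiv.Perm.mem_alternatingGroup.mpr (by decide +kernel)⟩
def vA1 : A5 := ⟨⟨![2,3,0,1,4], ![2,3,0,1,4], by decide, by decide⟩,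
  Equiv.Perm.mem_alternatingGroup.mpr (by decide +kernel)⟩
def vA2 : A5 := ⟨⟨![1,0,3,2,4], ![1,0,3,2,4], by decide, by decide⟩,
  Equiv.Perm.mem_alternatingGroup.mpr (by decide +kernel)⟩
def vA : Fin 4 → A5 := ![vA0, vA1, vA2, 1]

def elA (x : Fin 5 × Fin 4 × Fin 3) : A5 := cA ^ (x.1 : ℕ) * vA x.2.1 * dA ^ (x.2.2 : ℕ)

def tabA : Fin 5 → Fin 4 → Fin 5 × Fin 4 × Fin 3 :=
  ![![(0,1,1),(0,2,1),(0,0,1),(0,3,1)], ![(2,0,1),(2,3,1),(2,1,1),(2,2,1)],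
    ![(3,2,2),(3,0,2),(3,1,2),(3,3,2)], ![(1,2,0),(1,3,0),(1,0,0),(1,1,0)],
    ![(4,0,2),(4,2,2),(4,3,2),(4,1,2)]]

theorem elA_c : ∀ x, cA * elA x = elA (x.1 + 1, x.2) := by decide +kernel
theorem elA_d : ∀ x, dA * elA x = elA ((tabA x.1 x.2.1).1, (tabA x.1 x.2.1).2.1,
    (tabA x.1 x.2.1).2.2 + x.2.2) := by decide +kernel
theorem elA_one : elA (0, 3, 0) = 1 := by decide +kernel
theorem elA_inj : Function.Injective elA := by decide +kernel
theorem vA0_eq : vA 0 = dA * cA * dA * cA * dA * dA * cA := by decide +kernel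
theorem vA1_eq : vA 1 = cA * cA * dA * dA * cA := by decide +kernel
theorem vA2_eq : vA 2 = dA * cA * dA * cA * cA * cA * cA := by decide +kernel

theorem card_A5 : Fintype.card A5 = 60 := by
  have h2 := two_mul_card_alternatingGroup (α := Fin 5)
  simp only [Fintype.card_perm, Fintype.card_fin] at h2
  have : Nat.factorial 5 = 120 := by decide
  have h3 : 2 * Fintype.card A5 = 120 := by rw [← this]; exact h2
  omega

theorem elA_bij : Function.Bijective elA := by
  rw [Fintype.bijective_iff_injective_and_card]
  refine ⟨elA_inj, ?_⟩
  rw [card_A5]; decide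

noncomputable def elEquiv : (Fin 5 × Fin 4 × Fin 3) ≃ A5 := Equiv.ofBijective elA elA_bij

theorem exists_hom {M : Type*} [Monoid M] (C D : M) (V : Fin 4 → M) (hC : C ^ 5 = 1)
    (hD : D ^ 3 = 1) (hV : V 3 = 1)
    (hrel : ∀ (i : Fin 5) (j : Fin 4), D * (C ^ (i : ℕ) * V j) =
      C ^ ((tabA i j).1 : ℕ) * V (tabA i j).2.1 * D ^ ((tabA i j).2.2 : ℕ)) :
    ∃ φ : A5 →* M, ∀ x, φ (elA x) = C ^ (x.1 : ℕ) * V x.2.1 * D ^ (x.2.2 : ℕ) := by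
  let f0 : Fin 5 × Fin 4 × Fin 3 → M := fun x => C ^ (x.1 : ℕ) * V x.2.1 * D ^ (x.2.2 : ℕ)
  let f : A5 → M := fun g => f0 (elEquiv.symm g)
  have hf : ∀ x, f (elA x) = f0 x := fun x => by
    show f0 (elEquiv.symm (elEquiv x)) = f0 x
    rw [Equiv.symm_apply_apply]
  have pw : ∀ (X : M) (n : ℕ) [NeZero n] (h : X ^ n = 1) (a b : Fin n),
      X ^ ((a + b : Fin n) : ℕ) = X ^ (a : ℕ) * X ^ (b : ℕ) := by
    intro X n _ h a b
    rw [← pow_add, Fin.val_add]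
    conv_rhs => rw [← Nat.mod_add_div (a.1 + b.1) n, pow_add, pow_mul, h, one_pow, mul_one]
  have hcf : ∀ g, f (cA * g) = C * f g := by
    intro g
    obtain ⟨x, rfl⟩ := elA_bij.2 g
    rw [elA_c, hf, hf]
    simp only [f0]
    rw [pw C 5 hC, mul_assoc, mul_assoc, mul_assoc, ← mul_assoc (C ^ (x.1 : ℕ)),
      ← mul_assoc (C ^ (x.1 : ℕ)), ← mul_assoc C, ← mul_assoc]
    have : C ^ (x.1 : ℕ) * C ^ ((1 : Fin 5) : ℕ) = C * C ^ (x.1 : ℕ) := by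
      simp [← pow_succ, ← pow_succ']
    simp only [← mul_assoc]
    rw [this]
  have hdf : ∀ g, f (dA * g) = D * f g := by
    intro g
    obtain ⟨x, rfl⟩ := elA_bij.2 g
    rw [elA_d, hf, hf]
    simp only [f0]
    rw [pw D 3 hD, ← mul_assoc D, hrel]
    simp only [mul_assoc]
  let P : A5 → Prop := fun x => ∃ X, ∀ g, f (x * g) = X * f g
  have Pm : ∀ x y, P x → P y → P (x * y) := by
    rintro x y ⟨X, hX⟩ ⟨Y, hY⟩
    exact ⟨X * Y, fun g => by rw [mul_assoc, hX, hY, mul_assoc]⟩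
  have P1 : P 1 := ⟨1, fun g => by simp⟩
  have Pp : ∀ x (n : ℕ), P x → P (x ^ n) := by
    intro x n hx
    induction n with
    | zero => simpa using P1
    | succ n ih => rw [pow_succ]; exact Pm _ _ ih hx
  have Pc : P cA := ⟨C, hcf⟩
  have Pd : P dA := ⟨D, hdf⟩
  have Pv : ∀ j, P (vA j) := by
    intro j
    fin_cases j
    · show P (vA 0)
      rw [vA0_eq]
      exact Pm _ _ (Pm _ _ (Pm _ _ (Pm _ _ (Pm _ _ (Pm _ _ Pd Pc) Pd) Pc) Pd) Pd) Pc
    · show P (vA 1)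
      rw [vA1_eq]
      exact Pm _ _ (Pm _ _ (Pm _ _ (Pm _ _ Pc Pc) Pd) Pd) Pc
    · show P (vA 2)
      rw [vA2_eq]
      exact Pm _ _ (Pm _ _ (Pm _ _ (Pm _ _ (Pm _ _ (Pm _ _ Pd Pc) Pd) Pc) Pc) Pc) Pc
    · exact P1
  have Pall : ∀ g, P g := by
    intro g
    obtain ⟨x, rfl⟩ := elA_bij.2 g
    exact Pm _ _ (Pm _ _ (Pp _ _ Pc) (Pv _)) (Pp _ _ Pd)
  have f1 : f 1 = 1 := by
    rw [← elA_one, hf]; simp [f0, hV]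
  refine ⟨⟨⟨f, f1⟩, fun x y => ?_⟩, hf⟩
  obtain ⟨X, hX⟩ := Pall x
  have h1 := hX 1
  rw [mul_one, f1, mul_one] at h1
  show f (x * y) = f x * f y
  rw [hX, h1]

end PartE1

section PartE2

abbrev OZ := QuadraticAlgebra ℤ 1 1

def mC3 : Matrix (Fin 3) (Fin 3) OZ := !![⟨0,-1⟩,⟨-1,0⟩,⟨0,0⟩; ⟨1,0⟩,⟨0,0⟩,⟨0,0⟩; ⟨0,1⟩,⟨0,0⟩,⟨1,0⟩]
def mD3 : Matrix (Fin 3) (Fin 3) OZ :=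
  !![⟨1,0⟩,⟨0,0⟩,⟨0,1⟩; ⟨0,-1⟩,⟨0,0⟩,⟨0,-1⟩; ⟨0,-1⟩,⟨-1,0⟩,⟨-1,0⟩]
def mV3 : Fin 4 → Matrix (Fin 3) (Fin 3) OZ :=
  ![!![⟨0,-1⟩,⟨-1,0⟩,⟨0,0⟩; ⟨0,1⟩,⟨0,1⟩,⟨0,0⟩; ⟨1,0⟩,⟨0,1⟩,⟨-1,0⟩],
    !![⟨-1,0⟩,⟨1,0⟩,⟨0,-1⟩; ⟨0,0⟩,⟨0,-1⟩,⟨1,0⟩; ⟨0,0⟩,⟨0,-1⟩,⟨0,1⟩],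
    !![⟨0,1⟩,⟨0,0⟩,⟨0,1⟩; ⟨0,-1⟩,⟨-1,0⟩,⟨-1,0⟩; ⟨-1,0⟩,⟨0,0⟩,⟨0,-1⟩], 1]
def mC4 : Matrix (Fin 4) (Fin 4) ℤ := !![-1,-1,-1,-1; 1,0,0,0; 0,1,0,0; 0,0,1,0]
def mD4 : Matrix (Fin 4) (Fin 4) ℤ := !![0,0,1,0; 1,0,0,0; 0,1,0,0; 0,0,0,1]
def mV4 : Fin 4 → Matrix (Fin 4) (Fin 4) ℤ :=
  ![!![0,0,0,1;0,0,1,0;0,1,0,0;1,0,0,0], !![0,0,1,0;0,0,0,1;1,0,0,0;0,1,0,0],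
    !![0,1,0,0;1,0,0,0;0,0,0,1;0,0,1,0], 1]
def mC5 : Matrix (Fin 5) (Fin 5) ℤ :=
  !![1,0,0,0,0; -1,-1,-1,-1,-1; 0,0,0,0,1; 0,1,0,0,0; 0,0,0,1,0]
def mD5 : Matrix (Fin 5) (Fin 5) ℤ :=
  !![0,0,0,1,0; 0,0,0,0,1; 0,1,0,0,0; -1,-1,-1,-1,-1; 0,0,1,0,0]
def mV5 : Fin 4 → Matrix (Fin 5) (Fin 5) ℤ :=
  ![!![1,0,0,0,0;0,0,0,1,0;0,0,1,0,0;0,1,0,0,0;-1,-1,-1,-1,-1],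
    !![0,0,1,0,0;0,0,0,1,0;1,0,0,0,0;0,1,0,0,0;0,0,0,0,1],
    !![0,0,1,0,0;0,1,0,0,0;1,0,0,0,0;0,0,0,1,0;-1,-1,-1,-1,-1], 1]

theorem hom3 : ∃ φ : A5 →* Matrix (Fin 3) (Fin 3) OZ,
    ∀ x, φ (elA x) = mC3 ^ (x.1 : ℕ) * mV3 x.2.1 * mD3 ^ (x.2.2 : ℕ) :=
  exists_hom mC3 mD3 mV3 (by decide +kernel) (by decide +kernel) rfl (by decide +kernel)

theorem hom4 : ∃ φ : A5 →* Matrix (Fin 4) (Fin 4) ℤ,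
    ∀ x, φ (elA x) = mC4 ^ (x.1 : ℕ) * mV4 x.2.1 * mD4 ^ (x.2.2 : ℕ) :=
  exists_hom mC4 mD4 mV4 (by decide +kernel) (by decide +kernel) rfl (by decide +kernel)

theorem hom5 : ∃ φ : A5 →* Matrix (Fin 5) (Fin 5) ℤ,
    ∀ x, φ (elA x) = mC5 ^ (x.1 : ℕ) * mV5 x.2.1 * mD5 ^ (x.2.2 : ℕ) :=
  exists_hom mC5 mD5 mV5 (by decide +kernel) (by decide +kernel) rfl (by decide +kernel)

theorem char_sum : ∀ x : Fin 5 × Fin 4 × Fin 3,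
    1 + 4 * (mC4 ^ (x.1 : ℕ) * mV4 x.2.1 * mD4 ^ (x.2.2 : ℕ)).trace
      + 5 * (mC5 ^ (x.1 : ℕ) * mV5 x.2.1 * mD5 ^ (x.2.2 : ℕ)).trace
      + 3 * (2 * (mC3 ^ (x.1 : ℕ) * mV3 x.2.1 * mD3 ^ (x.2.2 : ℕ)).trace.re
        + (mC3 ^ (x.1 : ℕ) * mV3 x.2.1 * mD3 ^ (x.2.2 : ℕ)).trace.im)
      = if x = (0, 3, 0) then 60 else 0 := by decide +kernel

noncomputable def φ3 : A5 →* Matrix (Fin 3) (Fin 3) OZ := hom3.choose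
noncomputable def φ4 : A5 →* Matrix (Fin 4) (Fin 4) ℤ := hom4.choose
noncomputable def φ5 : A5 →* Matrix (Fin 5) (Fin 5) ℤ := hom5.choose

theorem char_sum' (g : A5) : 1 + 4 * (φ4 g).trace + 5 * (φ5 g).trace
    + 3 * (2 * (φ3 g).trace.re + (φ3 g).trace.im) = if g = 1 then 60 else 0 := by
  obtain ⟨x, rfl⟩ := elA_bij.2 g
  rw [φ3, φ4, φ5, hom3.choose_spec, hom4.choose_spec, hom5.choose_spec, char_sum]
  simp only [← elA_one, elA_inj.eq_iff]

end PartE2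

section PartE3

/-- the quadratic order base changed to `R` -/
abbrev OO (R : Type*) [CommRing R] := QuadraticAlgebra R 1 1

def qMap {R S : Type*} [CommRing R] [CommRing S] (f : R →+* S) : OO R →+* OO S where
  toFun z := ⟨f z.re, f z.im⟩
  map_one' := by ext <;> simp [QuadraticAlgebra.re_one, QuadraticAlgebra.im_one]
  map_zero' := by ext <;> simp
  map_add' x y := by ext <;> simp
  map_mul' x y := by ext <;> simp

/-- the maximal order -/
abbrev GG (R : Type*) [CommRing R] :=
  Matrix (Fin 1) (Fin 1) R × Matrix (Fin 4) (Fin 4) R × Matrix (Fin 5) (Fin 5) R ×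
    Matrix (Fin 3) (Fin 3) (OO R)

noncomputable def ΦG (R : Type*) [CommRing R] : A5 →* GG R :=
  MonoidHom.prod 1 (MonoidHom.prod
    ((RingHom.mapMatrix (Int.castRingHom R)).toMonoidHom.comp φ4) (MonoidHom.prod
    ((RingHom.mapMatrix (Int.castRingHom R)).toMonoidHom.comp φ5)
    ((RingHom.mapMatrix (qMap (Int.castRingHom R))).toMonoidHom.comp φ3)))

def τG (R : Type*) [CommRing R] : GG R →ₗ[R] R where
  toFun x := x.1.trace + 4 * x.2.1.trace + 5 * x.2.2.1.trace
    + 3 * (2 * x.2.2.2.trace.re + x.2.2.2.trace.im)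
  map_add' x y := by simp; ring
  map_smul' r x := by simp; ring

theorem trace_mapMatrix {R S : Type*} [CommRing R] [CommRing S] (f : R →+* S) {n : ℕ}
    (M : Matrix (Fin n) (Fin n) R) : (f.mapMatrix M).trace = f M.trace := by
  simp [Matrix.trace]

theorem τG_Φ (R : Type*) [CommRing R] (g : A5) : τG R (ΦG R g) = if g = 1 then 60 else 0 := by
  have h := congrArg (Int.castRingHom R) (char_sum' g)
  have e : τG R (ΦG R g) = (1 : Matrix (Fin 1) (Fin 1) R).trace
    + 4 * ((RingHom.mapMatrix (Int.castRingHom R)) (φ4 g)).trace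
    + 5 * ((RingHom.mapMatrix (Int.castRingHom R)) (φ5 g)).trace
    + 3 * (2 * ((RingHom.mapMatrix (qMap (Int.castRingHom R))) (φ3 g)).trace.re
      + ((RingHom.mapMatrix (qMap (Int.castRingHom R))) (φ3 g)).trace.im) := rfl
  rw [e, trace_mapMatrix, trace_mapMatrix, trace_mapMatrix]
  have e2 : ∀ z : OZ, (qMap (Int.castRingHom R) z).re = (z.re : R) := fun _ => rfl
  have e3 : ∀ z : OZ, (qMap (Int.castRingHom R) z).im = (z.im : R) := fun _ => rfl
  rw [e2, e3]
  split_ifs at h ⊢ <;> simpa using h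

noncomputable def ρG (R : Type*) [CommRing R] : MonoidAlgebra R A5 →ₐ[R] GG R :=
  MonoidAlgebra.lift R (GG R) A5 (ΦG R)

theorem ρG_single (R : Type*) [CommRing R] (g : A5) (r : R) :
    ρG R (MonoidAlgebra.single g r) = r • ΦG R g := by
  simp [ρG]

noncomputable def σG (R : Type*) [CommRing R] : GG R →ₗ[R] MonoidAlgebra R A5 :=
  ∑ g : A5, (MonoidAlgebra.lsingle g) ∘ₗ (τG R) ∘ₗ (LinearMap.mulRight R (ΦG R g⁻¹))

theorem σρ (R : Type*) [CommRing R] (a : MonoidAlgebra R A5) : σG R (ρG R a) = (60 : R) • a := by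
  have hτ := τG_Φ R
  generalize (60 : R) = n at hτ ⊢
  induction a using MonoidAlgebra.induction_linear with
  | zero => simp only [map_zero, smul_zero]
  | add f g hf hg => simp only [map_add, smul_add, hf, hg]
  | single h r =>
    simp only [LinearMap.comp_apply, ρG_single, σG, LinearMap.sum_apply,
      LinearMap.mulRight_apply, map_smul, ← map_mul, hτ, mul_inv_eq_one]
    rw [Finset.sum_eq_single h]
    · simp [mul_comm]
    · intro b _ hb
      simp [hb.symm]
    · simp

theorem ρG_inj (R : Type*) [CommRing R] [IsDomain R] [CharZero R] :
    Function.Injective (ρG R) := by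
  rw [injective_iff_map_eq_zero]
  intro a ha
  have h := σρ R a
  rw [ha, map_zero] at h
  have h60 : (60 : R) ≠ 0 := by norm_num
  exact (smul_eq_zero.mp h.symm).resolve_left h60

theorem finrank_GG (R : Type*) [CommRing R] [IsDomain R] :
    Module.finrank R (MonoidAlgebra R A5) = Module.finrank R (GG R) := by
  have h1 : Module.finrank R (MonoidAlgebra R A5) = 60 := by
    rw [← card_A5]
    exact Module.finrank_eq_card_basis (MonoidAlgebra.basis A5 R)
  have h2 : Module.finrank R (Matrix (Fin 3) (Fin 3) (OO R)) = 18 := by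
    rw [Module.finrank_matrix, QuadraticAlgebra.finrank_eq_two]; simp
  rw [h1, Module.finrank_prod, Module.finrank_prod, Module.finrank_prod, h2]
  simp [Module.finrank_matrix]

theorem exN (R : Type*) [CommRing R] [IsDomain R] [CharZero R] :
    ∃ N : R, N ≠ 0 ∧ ∀ c, ∃ d, ρG R d = N • c :=
  exists_smul_range (finrank_GG R) (ρG R).toLinearMap (ρG_inj R)

instance zloc_charZero (p : ℕ) [Fact p.Prime] : CharZero (ZLoc p) := 
  charZero_of_injective_algebraMap (R := ℤ)
    (IsLocalization.injective (ZLoc p)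
      (Ideal.primeCompl_le_nonZeroDivisors (Ideal.span {(p : ℤ)})))

theorem pos_dir (p : ℕ) [Fact p.Prime] (h : p = 5 ∨ p % 5 = 2 ∨ p % 5 = 3) :
    IsSemiperfectRing (MonoidAlgebra (ZLoc p) (alternatingGroup (Fin 5))) := by
  have := quad_local p h
  obtain ⟨N, hN0, hN⟩ := exN (ZLoc p)
  refine semiperfect_of_order A5 (GG (ZLoc p)) (ρG _) (ρG_inj _) N hN0 hN fun t ht => ?_
  have h1 : ∀ n, LiftsMod t (Matrix (Fin n) (Fin n) (ZLoc p)) := fun n =>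
    liftsMod_matrix t (by simpa using ht) n
  exact liftsMod_prod t (h1 1) (liftsMod_prod t (h1 4) (liftsMod_prod t (h1 5)
    (liftsMod_matrix t (quad_max p t ht) 3)))

theorem ρG_surj (R : Type*) [CommRing R] [IsDomain R] [CharZero R] (h60 : IsUnit (60 : R)) :
    Function.Surjective (ρG R) := by
  intro c
  obtain ⟨N, hN0, hN⟩ := exN R
  obtain ⟨u, hu⟩ := h60.exists_left_inv
  obtain ⟨d, hd⟩ := hN c
  refine ⟨u • σG R c, ?_⟩
  have h1 : N • ρG R (σG R c) = N • ((60 : R) • c) := by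
    rw [← map_smul, ← map_smul, ← hd, σρ, map_smul, hd, smul_comm]
  have h2 := smul_right_injective (GG R) hN0 h1
  rw [map_smul, h2, smul_smul, hu, one_smul]

end PartE3

section PartD

noncomputable def toRat (p : ℕ) [hp : Fact p.Prime] : ZLoc p →+* ℚ :=
  IsLocalization.lift (M := (Ideal.span {(p : ℤ)}).primeCompl) (g := Int.castRingHom ℚ)
    (fun y => by
      have h0 : (y.1 : ℤ) ≠ 0 := by
        intro h
        have := (mem_primeCompl_iff p y.1).mp y.2
        rw [h] at this
        simp at this
      exact isUnit_iff_ne_zero.mpr (by simpa using h0))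

theorem toRat_inj (p : ℕ) [hp : Fact p.Prime] : Function.Injective (toRat p) := by
  rw [injective_iff_map_eq_zero]
  intro x hx
  obtain ⟨a, s, rfl⟩ := IsLocalization.exists_mk'_eq (Ideal.span {(p : ℤ)}).primeCompl x
  rw [toRat, IsLocalization.lift_mk'_spec] at hx
  have ha : a = 0 := by simpa using hx
  rw [ha, IsLocalization.mk'_zero]

theorem not_sq5 : ¬ IsSquare (5 : ℚ) := by decide +kernel

instance fact_quad : Fact (∀ r : ℚ, r ^ 2 ≠ 1 + 1 * r) := ⟨by
  intro r h
  exact not_sq5 ⟨2 * r - 1, by linear_combination (-4) * h⟩⟩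

theorem trace_idem (p : ℕ) [hp : Fact p.Prime] {n : ℕ} (E : Matrix (Fin n) (Fin n) (OO (ZLoc p)))
    (hE : E * E = E) : ∃ m : ℕ, E.trace = m := by
  let F : OO (ZLoc p) →+* OO ℚ := qMap (toRat p)
  have hF : Function.Injective F := by
    intro x y hxy
    have h1 : toRat p x.re = toRat p y.re := congrArg QuadraticAlgebra.re hxy
    have h2 : toRat p x.im = toRat p y.im := congrArg QuadraticAlgebra.im hxy
    exact QuadraticAlgebra.ext (toRat_inj p h1) (toRat_inj p h2)
  have hE2 : F.mapMatrix E * F.mapMatrix E = F.mapMatrix E := by rw [← map_mul, hE]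
  obtain ⟨r, P, Q, h1, h2⟩ := idem_factor (F.mapMatrix E) hE2
  refine ⟨r, hF ?_⟩
  rw [← trace_mapMatrix, ← h1, Matrix.trace_mul_comm, h2, Matrix.trace_one, map_natCast]
  simp

noncomputable def rootHom (p : ℕ) [hp : Fact p.Prime] (r : ZMod p) (hr : r * r = r + 1) :
    OO (ZLoc p) →+* ZMod p where
  toFun z := redP p z.re + redP p z.im * r
  map_one' := by simp [QuadraticAlgebra.re_one, QuadraticAlgebra.im_one]
  map_zero' := by simp
  map_add' x y := by simp; ring
  map_mul' x y := by
    simp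
    linear_combination (-1) * redP p x.im * redP p y.im * hr

theorem jac_matrix_zero (p : ℕ) [hp : Fact p.Prime] :
    Ring.jacobson (Matrix (Fin 3) (Fin 3) (ZMod p)) = ⊥ := by
  exact IsSemisimpleModule.jacobson_eq_bot _ _

theorem isq1 : IsSquare ((1 : ℕ) : ZMod 5) := by decide

theorem isq4 : IsSquare ((4 : ℕ) : ZMod 5) := by decide

theorem neg_dir (p : ℕ) [hp : Fact p.Prime] (h60 : ¬ p ∣ 60) (h5 : p % 5 = 1 ∨ p % 5 = 4)
    (hsp : IsSemiperfectRing (MonoidAlgebra (ZLoc p) A5)) : False := by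
  have u60 : IsUnit (60 : ZLoc p) := by
    rw [isUnit_iff_redP]
    intro h
    apply h60
    rw [← ZMod.natCast_eq_zero_iff]
    have e : redP p ((60 : ℕ) : ZLoc p) = ((60 : ℕ) : ZMod p) := map_natCast _ _
    rw [← e]
    exact_mod_cast h
  have hρ := ρG_surj (ZLoc p) u60
  have hp2 : p ≠ 2 := by rintro rfl; omega
  have hp3 : ¬ p ∣ 3 := fun h => h60 (h.trans (by norm_num))
  have hp5 : ¬ p ∣ 5 := fun h => h60 (h.trans (by norm_num))
  have h2 : (2 : ZMod p) ≠ 0 := by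
    intro h
    apply h60
    have : p ∣ 2 := by rw [← ZMod.natCast_eq_zero_iff]; simpa using h
    exact this.trans (by norm_num)
  have h5z : (5 : ZMod p) ≠ 0 := by
    intro h
    apply hp5
    rw [← ZMod.natCast_eq_zero_iff]; simpa using h
  have hsq : IsSquare ((5 : ℕ) : ZMod p) := by
    have := Fact.mk Nat.prime_five
    rw [ZMod.exists_sq_eq_prime_iff_of_mod_four_eq_one (p := 5) (q := p) (by norm_num) hp2 |>.symm,
      ← ZMod.natCast_mod]
    rcases h5 with h | h <;> rw [h]
    · exact isq1
    · exact isq4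
  obtain ⟨s, hs⟩ := hsq
  push_cast at hs
  have hs0 : s ≠ 0 := by rintro rfl; apply h5z; rw [hs]; simp
  have hr1 : ((1 + s) / 2) * ((1 + s) / 2) = ((1 + s) / 2) + 1 := by
    field_simp
    linear_combination (-1) * hs
  have hr2 : ((1 - s) / 2) * ((1 - s) / 2) = ((1 - s) / 2) + 1 := by
    field_simp
    linear_combination (-1) * hs
  have hne : (1 + s) / 2 - (1 - s) / 2 = s := by field_simp; ring
  generalize (1 + s) / 2 = r1 at *
  generalize (1 - s) / 2 = r2 at *
  subst hne
  obtain ⟨a, ha⟩ := redP_surj p (- r2 / (r1 - r2))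
  obtain ⟨b, hb⟩ := redP_surj p (1 / (r1 - r2))
  let y : OO (ZLoc p) := ⟨a, b⟩
  let H1 := rootHom p r1 hr1
  let H2 := rootHom p r2 hr2
  have hy1 : H1 y = 1 := by
    show redP p a + redP p b * r1 = 1
    rw [ha, hb]; field_simp; ring
  have hy2 : H2 y = 0 := by
    show redP p a + redP p b * r2 = 0
    rw [ha, hb]; field_simp; ring
  obtain ⟨t, ht⟩ := IsDiscreteValuationRing.exists_irreducible (ZLoc p)
  have htm : t ∈ IsLocalRing.maximalIdeal (ZLoc p) := by
    rw [IsLocalRing.mem_maximalIdeal]; exact ht.not_isUnit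
  have hdiv : ∀ x : ZLoc p, redP p x = 0 → ∃ z, x = t * z := by
    intro x hx
    rw [← mem_max_iff, ht.maximalIdeal_eq, Ideal.mem_span_singleton] at hx
    exact hx
  obtain ⟨z, hz⟩ : ∃ z, y * y - y = t • z := by
    have e1 : H1 (y * y - y) = 0 := by rw [map_sub, map_mul, hy1]; ring
    have e2 : H2 (y * y - y) = 0 := by rw [map_sub, map_mul, hy2]; ring
    generalize y * y - y = w at *
    replace e1 : redP p w.re + redP p w.im * r1 = 0 := e1
    replace e2 : redP p w.re + redP p w.im * r2 = 0 := e2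
    have e3 : redP p w.im = 0 := by
      have : redP p w.im * (r1 - r2) = 0 := by linear_combination e1 - e2
      exact (mul_eq_zero.mp this).resolve_right hs0
    rw [e3, zero_mul, add_zero] at e1
    obtain ⟨c, hc⟩ := hdiv _ e1
    obtain ⟨d, hd⟩ := hdiv _ e3
    exact ⟨⟨c, d⟩, QuadraticAlgebra.ext hc hd⟩
  obtain ⟨A, hA⟩ := hρ (0, 0, 0, Matrix.scalar (Fin 3) y)
  obtain ⟨W, hW⟩ := hρ (0, 0, 0, Matrix.scalar (Fin 3) z)
  have hAA : A * A - A = t • W := by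
    apply ρG_inj
    rw [map_sub, map_mul, map_smul, hA, hW]
    have : Matrix.scalar (Fin 3) y * Matrix.scalar (Fin 3) y - Matrix.scalar (Fin 3) y
        = t • Matrix.scalar (Fin 3) z := by
      rw [← map_mul, ← map_sub, hz]
      rw [Matrix.scalar_apply, Matrix.scalar_apply, ← Matrix.diagonal_smul]
      rfl
    simp only [Prod.mk_mul_mk, Prod.mk_sub_mk, Prod.smul_mk, this]
    simp
  have hJ : A * A - A ∈ Ring.jacobson (MonoidAlgebra (ZLoc p) A5) := by
    rw [hAA]; exact smul_mem_jac htm W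
  obtain ⟨f, hf, hfA⟩ := hsp.2 ((ringJacobson _).ringCon.mk' A) (by
    show _ * _ = _
    rw [← map_mul, mk_eq_iff]; exact hJ)
  rw [mk_eq_iff] at hfA
  let π : MonoidAlgebra (ZLoc p) A5 →+* Matrix (Fin 3) (Fin 3) (OO (ZLoc p)) :=
    (RingHom.snd _ _).comp ((RingHom.snd _ _).comp ((RingHom.snd _ _).comp
      (ρG (ZLoc p)).toRingHom))
  have hπs : Function.Surjective π := by
    intro M
    obtain ⟨x, hx⟩ := hρ (0, 0, 0, M)
    exact ⟨x, by show (ρG (ZLoc p) x).2.2.2 = M; rw [hx]⟩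
  have hπA : π A = Matrix.scalar (Fin 3) y := by
    show (ρG (ZLoc p) A).2.2.2 = _
    rw [hA]
  obtain ⟨m, hm⟩ := trace_idem p (π f) (by rw [← map_mul, hf.eq])
  have main : ∀ H : OO (ZLoc p) →+* ZMod p, (m : ZMod p) = 3 * H y := by
    intro H
    have Hs : Function.Surjective H := by
      intro x
      obtain ⟨c, rfl⟩ := ZMod.intCast_surjective x
      exact ⟨c, map_intCast _ _⟩
    let θ := H.mapMatrix.comp π
    have hθ : Function.Surjective θ := by
      refine Function.Surjective.comp (g := H.mapMatrix) ?_ hπs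
      intro M
      choose g hg using Hs
      exact ⟨M.map g, by ext i j; simp [hg]⟩
    have : RingHomSurjective θ := ⟨hθ⟩
    have h0 : θ (f - A) = 0 := by
      have := Ring.le_comap_jacobson θ hfA
      rw [Ideal.mem_comap, jac_matrix_zero] at this
      exact this
    rw [map_sub, sub_eq_zero] at h0
    have h1 := congrArg Matrix.trace h0
    have e1 : (θ f).trace = H (π f).trace := trace_mapMatrix H (π f)
    have e2 : (θ A).trace = H (π A).trace := trace_mapMatrix H (π A)
    rw [e1, e2, hm, hπA, map_natCast] at h1
    rw [h1]
    rw [Matrix.scalar_apply, Matrix.trace_diagonal, map_sum]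
    simp
  have m1 := main H1
  have m2 := main H2
  rw [hy1] at m1
  rw [hy2, mul_zero] at m2
  rw [m2, mul_one] at m1
  apply hp3
  rw [← ZMod.natCast_eq_zero_iff]
  simpa using m1.symm

end PartD

/-- Let `A₅` be the alternating group on 5 letters and `p` a prime. Then `ℤ_(p)A₅` is
semiperfect if and only if `p ∈ {2, 3, 5}` or `p ≡ 2, 3 (mod 5)`; in particular, for
`p ∤ 60` it is semiperfect exactly when `p` is not a square modulo `5`. -/
theorem isSemiperfectRing_zloc_alternatingGroup_five_iff (p : ℕ) [Fact p.Prime] :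
    (IsSemiperfectRing (MonoidAlgebra (ZLoc p) (alternatingGroup (Fin 5))) ↔
      (p = 2 ∨ p = 3 ∨ p = 5 ∨ p % 5 = 2 ∨ p % 5 = 3)) ∧
    (¬ p ∣ 60 →
      (IsSemiperfectRing (MonoidAlgebra (ZLoc p) (alternatingGroup (Fin 5))) ↔
        ¬ IsSquare (p : ZMod 5))) := by
  have hp : p.Prime := Fact.out
  have h0 : p % 5 = 0 → p = 5 := fun h =>
    ((Nat.prime_dvd_prime_iff_eq Nat.prime_five hp).mp (Nat.dvd_of_mod_eq_zero h)).symm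
  have hdvd : p ∣ 60 → p = 2 ∨ p = 3 ∨ p = 5 := by
    intro h
    have h' : p ∣ 2 * 2 * 3 * 5 := h
    rw [hp.dvd_mul, hp.dvd_mul, hp.dvd_mul, Nat.prime_dvd_prime_iff_eq hp Nat.prime_two,
      Nat.prime_dvd_prime_iff_eq hp Nat.prime_three,
      Nat.prime_dvd_prime_iff_eq hp Nat.prime_five] at h'
    tauto
  have main : IsSemiperfectRing (MonoidAlgebra (ZLoc p) (alternatingGroup (Fin 5))) ↔
      (p = 2 ∨ p = 3 ∨ p = 5 ∨ p % 5 = 2 ∨ p % 5 = 3) := by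
    constructor
    · intro h
      by_contra hc
      refine neg_dir p (fun hd => hc ?_) ?_ h
      · rcases hdvd hd with h | h | h <;> simp [h]
      · have := Nat.mod_lt p (show 0 < 5 by norm_num)
        omega
    · intro h
      apply pos_dir
      omega
  refine ⟨main, fun h60 => main.trans ?_⟩
  have h2 : p ≠ 2 := by rintro rfl; exact h60 (by norm_num)
  have h3 : p ≠ 3 := by rintro rfl; exact h60 (by norm_num)
  have h5 : p ≠ 5 := by rintro rfl; exact h60 (by norm_num)
  rw [← ZMod.natCast_mod]
  have hlt := Nat.mod_lt p (show 0 < 5 by norm_num)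
  have cases5 : p % 5 = 1 ∨ p % 5 = 2 ∨ p % 5 = 3 ∨ p % 5 = 4 := by omega
  rcases cases5 with h | h | h | h <;> rw [h]
  · have := isq1
    simp [h2, h3, h5]
  · have := nsq2
    simp only [this]; simp
  · have := nsq3
    simp only [this]; simp
  · have := isq4
    simp only [this]; simp [h2, h3, h5]
end
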